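/- Let d₁, d₂ ≥ 1 be integers, s > 0 and V > 0. There exists a unique pair of radii (r₁, r₂) ∈ (0,∞)² with τ_{d₁} r₁^{d₁} · τ_{d₂} r₂^{d₂} = V such that: (i) for every pair of bounded nonempty open connected sets Ω₁ ⊆ ℝ^{d₁}, Ω₂ ⊆ ℝ^{d₂} with |Ω₁||Ω₂| = V, λ₁( B^{d₁}(0,r₁) × B^{d₂}(0,r₂) ) ≤ λ₁(Ω₁ × Ω₂); and (ii) for every other pair (ρ₁, ρ₂) ∈ (0,∞)² with τ_{d₁} ρ₁^{d₁} · τ_{d₂} ρ₂^{d₂} = V and (ρ₁, ρ₂) ≠ (r₁, r₂), one has λ₁( B^{d₁}(0,r₁) × B^{d₂}(0,r₂) ) < λ₁( B^{d₁}(0,ρ₁) × B^{d₂}(0,ρ₂) ). -/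

import Mathlib

open MeasureTheory Set Filter

/-- `τ_d = π^{d/2}/Γ(1+d/2)`, the volume of the unit ball in `ℝ^d`. -/
noncomputable def tau (d : ℕ) : ℝ := Real.pi ^ ((d : ℝ) / 2) / Real.Gamma (1 + (d : ℝ) / 2)

/-- First eigenvalue (Rayleigh quotient infimum) of the Grushin operator with Dirichlet
conditions on `Ω ⊆ ℝ^{d₁} × ℝ^{d₂}`. -/
noncomputable def grushinLambda1 (d₁ d₂ : ℕ) (s : ℝ)
    (Ω : Set (EuclideanSpace ℝ (Fin d₁) × EuclideanSpace ℝ (Fin d₂))) : ℝ :=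
  sInf { q : ℝ | ∃ u : EuclideanSpace ℝ (Fin d₁) × EuclideanSpace ℝ (Fin d₂) → ℝ,
    ContDiff ℝ (⊤ : ℕ∞) u ∧ HasCompactSupport u ∧ tsupport u ⊆ Ω ∧ u ≠ 0 ∧
    q = (∫ x in Ω, (‖gradient (fun y => u (y, x.2)) x.1‖ ^ 2
          + ‖x.1‖ ^ (2 * s) * ‖gradient (fun y => u (x.1, y)) x.2‖ ^ 2)) /
        (∫ x in Ω, (u x) ^ 2) }



namespace Gru
open scoped ENNReal Topology Pointwise

/-! ### Brunn–Minkowski in dimension one and Prékopa–Leindler -/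

theorem bm_compact (K L C : Set ℝ) (hK : IsCompact K) (hL : IsCompact L) (hKn : K.Nonempty)
    (hLn : L.Nonempty) (hC : ∀ x ∈ K, ∀ y ∈ L, x + y ∈ C) :
    volume K + volume L ≤ volume C := by
  obtain ⟨k, hk, hkm⟩ := hK.exists_isMaxOn hKn continuousOn_id
  obtain ⟨l, hl, hlm⟩ := hL.exists_isMinOn hLn continuousOn_id
  have h1 : volume ((fun x => x + l) '' K) = volume K := by
    simp
  have h2 : volume ((fun x => k + x) '' L) = volume L := by
    simp
  rw [← h1, ← h2]
  rw [← measure_union₀]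
  · apply measure_mono
    rintro z (⟨x, hx, rfl⟩ | ⟨x, hx, rfl⟩)
    · exact hC x hx l hl
    · exact hC k hk x hx
  · exact ((hL.image (by fun_prop)).measurableSet).nullMeasurableSet
  · have : ((fun x => x + l) '' K) ∩ ((fun x => k + x) '' L) ⊆ {k + l} := by
      rintro z ⟨⟨x, hx, rfl⟩, ⟨y, hy, hxy⟩⟩
      have a1 : x ≤ k := hkm hx
      have a2 : l ≤ y := hlm hy
      simp only at hxy ⊢
      rw [mem_singleton_iff]
      linarith
    exact measure_mono_null this (by simp)

theorem bm_one (A B C : Set ℝ) (hA : MeasurableSet A) (hB : MeasurableSet B)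
    (hAn : A.Nonempty) (hBn : B.Nonempty) (hC : ∀ x ∈ A, ∀ y ∈ B, x + y ∈ C) :
    volume A + volume B ≤ volume C := by
  obtain ⟨a, ha⟩ := hAn
  obtain ⟨b, hb⟩ := hBn
  have eA : volume A = ⨆ K, ⨆ (_ : K ⊆ A ∧ IsCompact K), volume K := by
    rw [hA.measure_eq_iSup_isCompact]; simp only [iSup_and]
  have eB : volume B = ⨆ K, ⨆ (_ : K ⊆ B ∧ IsCompact K), volume K := by
    rw [hB.measure_eq_iSup_isCompact]; simp only [iSup_and]
  rw [eA, eB]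
  have key : ∀ K ⊆ A, IsCompact K → ∀ L ⊆ B, IsCompact L → volume K + volume L ≤ volume C := by
    intro K hKA hK L hLB hL
    have := bm_compact (insert a K) (insert b L) C (hK.insert a) (hL.insert b)
      ⟨a, mem_insert _ _⟩ ⟨b, mem_insert _ _⟩ (by
        intro x hx y hy
        apply hC
        · rcases hx with rfl | hx
          · exact ha
          · exact hKA hx
        · rcases hy with rfl | hy
          · exact hb
          · exact hLB hy)
    refine le_trans (add_le_add (measure_mono (subset_insert _ _))
      (measure_mono (subset_insert _ _))) this
  exact ENNReal.biSup_add_biSup_le' (p := fun K => K ⊆ A ∧ IsCompact K)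
    (q := fun L => L ⊆ B ∧ IsCompact L) ⟨∅, empty_subset _, isCompact_empty⟩
    ⟨∅, empty_subset _, isCompact_empty⟩ (fun K hK L hL => key K hK.1 hK.2 L hL.1 hL.2)

theorem ennreal_amgm {a b : ℝ} (ha : 0 < a) (hb : 0 < b) (hab : a + b = 1) (x y : ℝ≥0∞) :
    x ^ a * y ^ b ≤ ENNReal.ofReal a * x + ENNReal.ofReal b * y := by
  have hpq : (a⁻¹).HolderConjugate (b⁻¹) := by
    rw [Real.holderConjugate_iff]
    refine ⟨?_, by simpa using hab⟩
    rw [one_lt_inv₀ ha]; linarith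
  have := ENNReal.young_inequality (x ^ a) (y ^ b) hpq
  rw [← ENNReal.rpow_mul, ← ENNReal.rpow_mul, mul_inv_cancel₀ ha.ne', mul_inv_cancel₀ hb.ne',
    ENNReal.rpow_one, ENNReal.rpow_one, ENNReal.ofReal_inv_of_pos ha, ENNReal.ofReal_inv_of_pos hb,
    ENNReal.div_eq_inv_mul, ENNReal.div_eq_inv_mul, inv_inv, inv_inv] at this
  exact this

theorem layer_one (f : ℝ → ℝ≥0∞) (hf : Measurable f) (h1 : ∀ x, f x ≤ 1) :
    ∫⁻ x, f x = ∫⁻ t in Ioo (0 : ℝ) 1, volume {x | ENNReal.ofReal t < f x} := by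
  have e1 : ∫⁻ x, f x = ∫⁻ x, ENNReal.ofReal (f x).toReal := by
    congr 1; ext x; rw [ENNReal.ofReal_toReal]
    exact ne_top_of_le_ne_top ENNReal.one_ne_top (h1 x)
  rw [e1, lintegral_eq_lintegral_meas_lt _ (ae_of_all _ fun x => ENNReal.toReal_nonneg)
    hf.ennreal_toReal.aemeasurable]
  have e2 : ∀ t ∈ Ioi (0:ℝ), volume {a | t < (f a).toReal} =
      (Iio (1:ℝ)).indicator (fun t => volume {x | ENNReal.ofReal t < f x}) t := by
    intro t ht
    by_cases h : t < 1
    · rw [indicator_of_mem (by exact h)]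
      congr 1; ext x
      simp only [mem_ofPred_eq]
      rw [ENNReal.ofReal_lt_iff_lt_toReal (le_of_lt ht)
        (ne_top_of_le_ne_top ENNReal.one_ne_top (h1 x))]
    · rw [indicator_of_notMem (by exact h)]
      convert measure_empty (μ := (volume : Measure ℝ))
      ext x
      simp only [mem_ofPred_eq, mem_empty_iff_false, iff_false, not_lt]
      have : (f x).toReal ≤ 1 := by
        simpa using ENNReal.toReal_mono ENNReal.one_ne_top (h1 x)
      linarith
  rw [setLIntegral_congr_fun measurableSet_Ioi e2, setLIntegral_indicator measurableSet_Iio]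
  congr 2
  ext t; simp [and_comm]

theorem pl_one_norm {a b : ℝ} (ha : 0 < a) (hb : 0 < b) (hab : a + b = 1)
    (f g h : ℝ → ℝ≥0∞) (hf : Measurable f) (hg : Measurable g) (hh : Measurable h)
    (f1 : ∀ x, f x ≤ 1) (g1 : ∀ x, g x ≤ 1)
    (fs : ∀ t < 1, ∃ x, t < f x) (gs : ∀ t < 1, ∃ x, t < g x)
    (H : ∀ x y, f x ^ a * g y ^ b ≤ h (a * x + b * y)) :
    (∫⁻ x, f x) ^ a * (∫⁻ x, g x) ^ b ≤ ∫⁻ x, h x := by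
  refine (ennreal_amgm ha hb hab _ _).trans ?_
  have hm : ∫⁻ x, min (h x) 1 ≤ ∫⁻ x, h x := lintegral_mono fun x => min_le_left _ _
  refine le_trans ?_ hm
  rw [layer_one f hf f1, layer_one g hg g1, layer_one _ (hh.min measurable_const)
    (fun x => min_le_right _ _)]
  have mf : Measurable (fun t : ℝ => volume {x | ENNReal.ofReal t < f x}) := by
    apply Antitone.measurable
    intro t t' htt
    apply measure_mono
    intro x hx
    exact lt_of_le_of_lt (ENNReal.ofReal_le_ofReal htt) hx
  rw [← lintegral_const_mul' _ _ ENNReal.ofReal_ne_top, ← lintegral_const_mul' _ _ ENNReal.ofReal_ne_top,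
    ← lintegral_add_left (by exact mf.const_mul _)]
  apply setLIntegral_mono' measurableSet_Ioo
  intro t ht
  have ht1 : ENNReal.ofReal t < 1 := by simpa using ht.2
  have s1 : ENNReal.ofReal a * volume {x | ENNReal.ofReal t < f x}
      = volume (a • {x | ENNReal.ofReal t < f x}) := by
    rw [Measure.addHaar_smul]; simp [abs_of_pos ha]
  have s2 : ENNReal.ofReal b * volume {x | ENNReal.ofReal t < g x}
      = volume (b • {x | ENNReal.ofReal t < g x}) := by
    rw [Measure.addHaar_smul]; simp [abs_of_pos hb]
  rw [s1, s2]
  apply bm_one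
  · exact (measurableSet_lt measurable_const hf).const_smul₀ a
  · exact (measurableSet_lt measurable_const hg).const_smul₀ b
  · obtain ⟨x, hx⟩ := fs _ ht1
    exact ⟨a • x, smul_mem_smul_set hx⟩
  · obtain ⟨x, hx⟩ := gs _ ht1
    exact ⟨b • x, smul_mem_smul_set hx⟩
  · rintro _ ⟨x, hx, rfl⟩ _ ⟨y, hy, rfl⟩
    simp only [mem_ofPred_eq, smul_eq_mul, lt_min_iff] at *
    refine ⟨lt_of_lt_of_le ?_ (H x y), ht1⟩
    calc ENNReal.ofReal t = ENNReal.ofReal t ^ a * ENNReal.ofReal t ^ b := by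
          rw [← ENNReal.rpow_add _ _ (by simpa using ht.1) ENNReal.ofReal_ne_top, hab,
            ENNReal.rpow_one]
      _ < f x ^ a * g y ^ b := by
          apply ENNReal.mul_lt_mul
          · exact ENNReal.rpow_lt_rpow hx ha
          · exact ENNReal.rpow_lt_rpow hy hb

theorem pl_one_bdd {a b : ℝ} (ha : 0 < a) (hb : 0 < b) (hab : a + b = 1)
    (f g h : ℝ → ℝ≥0∞) (hf : Measurable f) (hg : Measurable g) (hh : Measurable h)
    (f1 : (⨆ x, f x) ≠ ⊤) (g1 : (⨆ x, g x) ≠ ⊤)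
    (H : ∀ x y, f x ^ a * g y ^ b ≤ h (a * x + b * y)) :
    (∫⁻ x, f x) ^ a * (∫⁻ x, g x) ^ b ≤ ∫⁻ x, h x := by
  set F := ⨆ x, f x with hF
  set G := ⨆ x, g x with hG
  by_cases F0 : F = 0
  · have : ∀ x, f x = 0 := by
      intro x; exact le_antisymm (F0 ▸ le_iSup f x) zero_le
    simp [this, ha]
  by_cases G0 : G = 0
  · have : ∀ x, g x = 0 := by
      intro x; exact le_antisymm (G0 ▸ le_iSup g x) zero_le
    simp [this, hb]
  have key := pl_one_norm ha hb hab (fun x => F⁻¹ * f x) (fun x => G⁻¹ * g x)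
    (fun x => ((F⁻¹) ^ a * (G⁻¹) ^ b) * h x) (hf.const_mul _) (hg.const_mul _) (hh.const_mul _)
    (fun x => by
      rw [← ENNReal.inv_mul_cancel F0 f1]; gcongr; exact le_iSup f x)
    (fun x => by
      rw [← ENNReal.inv_mul_cancel G0 g1]; gcongr; exact le_iSup g x)
    (fun t ht => by
      have : t * F < F := by
        conv_rhs => rw [← one_mul F]
        exact ENNReal.mul_lt_mul_left F0 f1 ht
      obtain ⟨x, hx⟩ := lt_iSup_iff.1 this
      refine ⟨x, ?_⟩
      rw [mul_comm, ← div_eq_mul_inv]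
      exact (ENNReal.lt_div_iff_mul_lt (Or.inl F0) (Or.inl f1)).2 hx)
    (fun t ht => by
      have : t * G < G := by
        conv_rhs => rw [← one_mul G]
        exact ENNReal.mul_lt_mul_left G0 g1 ht
      obtain ⟨x, hx⟩ := lt_iSup_iff.1 this
      refine ⟨x, ?_⟩
      rw [mul_comm, ← div_eq_mul_inv]
      exact (ENNReal.lt_div_iff_mul_lt (Or.inl G0) (Or.inl g1)).2 hx)
    (fun x y => by
      rw [ENNReal.mul_rpow_of_nonneg _ _ ha.le, ENNReal.mul_rpow_of_nonneg _ _ hb.le]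
      calc _ = ((F⁻¹) ^ a * (G⁻¹) ^ b) * (f x ^ a * g y ^ b) := by ring
        _ ≤ _ := by gcongr; exact H x y)
  have hFi : F⁻¹ ≠ ⊤ := by simpa using F0
  have hGi : G⁻¹ ≠ ⊤ := by simpa using G0
  have c1 : ((F⁻¹) ^ a * (G⁻¹) ^ b) ≠ ⊤ := by
    apply ENNReal.mul_ne_top
    · exact ENNReal.rpow_ne_top_of_nonneg ha.le hFi
    · exact ENNReal.rpow_ne_top_of_nonneg hb.le hGi
  have c0 : ((F⁻¹) ^ a * (G⁻¹) ^ b) ≠ 0 := by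
    apply mul_ne_zero
    · exact (ENNReal.rpow_pos (by simpa using f1) hFi).ne'
    · exact (ENNReal.rpow_pos (by simpa using g1) hGi).ne'
  rw [lintegral_const_mul _ hf, lintegral_const_mul _ hg, lintegral_const_mul _ hh,
    ENNReal.mul_rpow_of_nonneg _ _ ha.le, ENNReal.mul_rpow_of_nonneg _ _ hb.le] at key
  have key2 : ((F⁻¹) ^ a * (G⁻¹) ^ b) * ((∫⁻ x, f x) ^ a * (∫⁻ x, g x) ^ b) ≤
    ((F⁻¹) ^ a * (G⁻¹) ^ b) * ∫⁻ x, h x := by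
    refine le_trans (le_of_eq ?_) key
    ring
  exact (ENNReal.mul_le_mul_iff_right c0 c1).1 key2

theorem pl_one {a b : ℝ} (ha : 0 < a) (hb : 0 < b) (hab : a + b = 1)
    (f g h : ℝ → ℝ≥0∞) (hf : Measurable f) (hg : Measurable g) (hh : Measurable h)
    (H : ∀ x y, f x ^ a * g y ^ b ≤ h (a * x + b * y)) :
    (∫⁻ x, f x) ^ a * (∫⁻ x, g x) ^ b ≤ ∫⁻ x, h x := by
  have step : ∀ n : ℕ, (∫⁻ x, min (f x) n) ^ a * (∫⁻ x, min (g x) n) ^ b ≤ ∫⁻ x, h x := by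
    intro n
    apply pl_one_bdd ha hb hab _ _ _ (hf.min measurable_const) (hg.min measurable_const) hh
    · exact ne_top_of_le_ne_top (ENNReal.natCast_ne_top n) (iSup_le fun x => min_le_right _ _)
    · exact ne_top_of_le_ne_top (ENNReal.natCast_ne_top n) (iSup_le fun x => min_le_right _ _)
    · intro x y
      refine le_trans ?_ (H x y)
      gcongr
      · exact min_le_left _ _
      · exact min_le_left _ _
  have lim : ∀ f : ℝ → ℝ≥0∞, Measurable f →
      Tendsto (fun n : ℕ => ∫⁻ x, min (f x) n) atTop (𝓝 (∫⁻ x, f x)) := by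
    intro f hf
    apply lintegral_tendsto_of_tendsto_of_monotone
    · intro n; exact (hf.min measurable_const).aemeasurable
    · exact ae_of_all _ fun x m n hmn => by
        dsimp; gcongr
    · refine ae_of_all _ fun x => ?_
      have : Tendsto (fun n : ℕ => min (f x) (n : ℝ≥0∞)) atTop (𝓝 (min (f x) ⊤)) :=
        tendsto_const_nhds.min ENNReal.tendsto_nat_nhds_top
      simpa using this
  by_cases F0 : ∫⁻ x, f x = 0
  · simp [F0, ha]
  by_cases G0 : ∫⁻ x, g x = 0
  · simp [G0, hb]
  have F0' : (∫⁻ x, f x) ^ a ≠ 0 := by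
    simp [ENNReal.rpow_eq_zero_iff, F0, ha, ha.not_gt]
  have G0' : (∫⁻ x, g x) ^ b ≠ 0 := by
    simp [ENNReal.rpow_eq_zero_iff, G0, hb, hb.not_gt]
  refine le_of_tendsto (ENNReal.Tendsto.mul ((lim f hf).ennrpow_const a) (Or.inl F0')
    ((lim g hg).ennrpow_const b) (Or.inl G0')) (Eventually.of_forall step)

theorem prekopa_leindler {a b : ℝ} (ha : 0 < a) (hb : 0 < b) (hab : a + b = 1) (n : ℕ)
    (f g h : (Fin n → ℝ) → ℝ≥0∞) (hf : Measurable f) (hg : Measurable g) (hh : Measurable h)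
    (H : ∀ x y, f x ^ a * g y ^ b ≤ h (a • x + b • y)) :
    (∫⁻ x, f x) ^ a * (∫⁻ x, g x) ^ b ≤ ∫⁻ x, h x := by
  induction n with
  | zero =>
    have e : ∀ f : (Fin 0 → ℝ) → ℝ≥0∞, ∫⁻ x, f x = f 0 := by
      intro f
      rw [lintegral_unique]
      simp [volume_pi]
      congr 1
    rw [e, e, e]
    convert H 0 0 using 2
  | succ n ih =>
    let φ := (MeasurableEquiv.piFinSuccAbove (fun _ : Fin (n+1) => ℝ) 0).symm
    have hφ : MeasurePreserving φ volume volume :=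
      (volume_preserving_piFinSuccAbove (fun _ : Fin (n+1) => ℝ) 0).symm
    have e : ∀ f : (Fin (n+1) → ℝ) → ℝ≥0∞, Measurable f →
        ∫⁻ x, f x = ∫⁻ t : ℝ, ∫⁻ y : Fin n → ℝ, f (φ (t, y)) := by
      intro f hf
      rw [← hφ.lintegral_comp hf]
      rw [Measure.volume_eq_prod, lintegral_prod _ (by fun_prop)]
    rw [e f hf, e g hg, e h hh]
    have m : ∀ f : (Fin (n+1) → ℝ) → ℝ≥0∞, Measurable f →
        Measurable (fun t : ℝ => ∫⁻ y : Fin n → ℝ, f (φ (t, y))) := by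
      intro f hf
      apply Measurable.lintegral_prod_right'  (f := fun p : ℝ × (Fin n → ℝ) => f (φ p))
      fun_prop
    apply pl_one ha hb hab _ _ _ (m f hf) (m g hg) (m h hh)
    intro s t
    apply ih
    · fun_prop
    · fun_prop
    · fun_prop
    · intro x y
      refine (H _ _).trans (le_of_eq ?_)
      congr 1
      ext i
      refine Fin.cases ?_ (fun j => ?_) i
      · simp [φ, MeasurableEquiv.piFinSuccAbove]
      · simp [φ, MeasurableEquiv.piFinSuccAbove]

end Gru


namespace Gru
open scoped ENNReal Topology Pointwise

abbrev EE (d : ℕ) := EuclideanSpace ℝ (Fin d)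

/-- volume of unit ball -/
noncomputable def cc (d : ℕ) : ℝ := (volume (Metric.ball (0 : EE d) 1)).toReal

theorem cc_pos (d : ℕ) : 0 < cc d :=
  ENNReal.toReal_pos (Metric.measure_ball_pos _ _ one_pos).ne' measure_ball_lt_top.ne

theorem vol_ball (d : ℕ) (x : EE d) {r : ℝ} (hr : 0 ≤ r) (hd : 1 ≤ d) :
    volume (Metric.ball x r) = ENNReal.ofReal (cc d * r ^ d) := by
  have : Nontrivial (EE d) := by
    have : Nonempty (Fin d) := ⟨⟨0, hd⟩⟩
    infer_instance
  rw [Measure.addHaar_ball _ _ hr, mul_comm (cc d), ENNReal.ofReal_mul (by positivity), cc,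
    ENNReal.ofReal_toReal measure_ball_lt_top.ne]
  simp

/-- radius of the ball with the volume of `A` -/
noncomputable def rad (d : ℕ) (A : Set (EE d)) : ℝ := ((volume A).toReal / cc d) ^ ((d : ℝ)⁻¹)

theorem rad_nonneg (d : ℕ) (A : Set (EE d)) : 0 ≤ rad d A := by
  have := cc_pos d
  unfold rad; positivity

theorem rad_pow {d : ℕ} (hd : 1 ≤ d) (A : Set (EE d)) : cc d * rad d A ^ d = (volume A).toReal := by
  have := cc_pos d
  rw [rad, Real.rpow_inv_natCast_pow (by positivity) (by omega)]
  field_simp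

theorem rad_mono {d : ℕ} {A B : Set (EE d)} (h : volume A ≤ volume B) (hB : volume B ≠ ⊤) :
    rad d A ≤ rad d B := by
  have := cc_pos d
  unfold rad
  gcongr

theorem le_rad_iff {d : ℕ} (hd : 1 ≤ d) {A : Set (EE d)} (hA : volume A ≠ ⊤) {r : ℝ} (hr : 0 ≤ r) :
    r ≤ rad d A ↔ ENNReal.ofReal (cc d * r ^ d) ≤ volume A := by
  have := cc_pos d
  rw [ENNReal.ofReal_le_iff_le_toReal hA, ← rad_pow hd A, mul_le_mul_iff_right₀ this,
    pow_le_pow_iff_left₀ hr (rad_nonneg _ _) (by omega)]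

theorem rad_le_iff {d : ℕ} (hd : 1 ≤ d) {A : Set (EE d)} (hA : volume A ≠ ⊤) {r : ℝ} (hr : 0 ≤ r) :
    rad d A ≤ r ↔ volume A ≤ ENNReal.ofReal (cc d * r ^ d) := by
  have := cc_pos d
  rw [ENNReal.le_ofReal_iff_toReal_le hA (by positivity), ← rad_pow hd A, mul_le_mul_iff_right₀ this,
    pow_le_pow_iff_left₀ (rad_nonneg _ _) hr (by omega)]

theorem vol_ball_rad {d : ℕ} (hd : 1 ≤ d) {A : Set (EE d)} (hA : volume A ≠ ⊤) :
    volume (Metric.ball (0 : EE d) (rad d A)) = volume A := by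
  rw [vol_ball d 0 (rad_nonneg _ _) hd, rad_pow hd, ENNReal.ofReal_toReal hA]

theorem bm_mult {a b : ℝ} (ha : 0 < a) (hb : 0 < b) (hab : a + b = 1) {d : ℕ}
    {A B C : Set (EE d)} (hA : MeasurableSet A) (hB : MeasurableSet B) (hC : MeasurableSet C)
    (H : ∀ x ∈ A, ∀ y ∈ B, a • x + b • y ∈ C) :
    volume A ^ a * volume B ^ b ≤ volume C := by
  classical
  have hp := PiLp.volume_preserving_toLp (Fin d)
  have e : ∀ A : Set (EE d), MeasurableSet A →
      volume A = ∫⁻ x : Fin d → ℝ, A.indicator (fun _ => (1 : ℝ≥0∞)) (WithLp.toLp 2 x) := by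
    intro A hA
    rw [hp.lintegral_comp (measurable_const.indicator hA)]
    simp [hA]
  rw [e A hA, e B hB, e C hC]
  have mt : Measurable (WithLp.toLp 2 : (Fin d → ℝ) → EE d) := hp.measurable
  apply prekopa_leindler ha hb hab
  · exact (measurable_const.indicator hA).comp mt
  · exact (measurable_const.indicator hB).comp mt
  · exact (measurable_const.indicator hC).comp mt
  · intro x y
    by_cases hx : WithLp.toLp 2 x ∈ A
    · by_cases hy : WithLp.toLp 2 y ∈ B
      · have := H _ hx _ hy
        rw [indicator_of_mem hx, indicator_of_mem hy, indicator_of_mem]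
        · simp
        · simpa using this
      · simp [indicator_of_notMem hy, hb]
    · simp [indicator_of_notMem hx, ha]

theorem bm_ball {d : ℕ} (hd : 1 ≤ d) {A C : Set (EE d)} (hA : MeasurableSet A)
    (hC : MeasurableSet C) (hA' : volume A ≠ ⊤) (hC' : volume C ≠ ⊤) (hne : A.Nonempty) {δ : ℝ}
    (hδ : 0 < δ)
    (H : ∀ x ∈ A, ∀ y, ‖y‖ < δ → x + y ∈ C) : rad d A + δ ≤ rad d C := by
  have hc := cc_pos d
  rcases (rad_nonneg d A).eq_or_lt with h0 | h0
  · obtain ⟨x, hx⟩ := hne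
    rw [← h0, zero_add, le_rad_iff hd hC' hδ.le, ← vol_ball d x hδ.le hd]
    apply measure_mono
    intro z hz
    have := H x hx (z - x) (by simpa [dist_eq_norm] using hz)
    simpa using this
  · set ρ := rad d A with hρ
    set S := ρ + δ with hS
    have hS0 : 0 < S := by positivity
    have ha : 0 < ρ / S := by positivity
    have hb : 0 < δ / S := by positivity
    have hab : ρ / S + δ / S = 1 := by rw [← add_div]; exact div_self hS0.ne'
    rw [le_rad_iff hd hC' hS0.le]
    have hfr : Module.finrank ℝ (EE d) = d := by simp
    have vA : volume ((ρ / S)⁻¹ • A) = ENNReal.ofReal (cc d * S ^ d) := by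
      rw [Measure.addHaar_smul, hfr, abs_of_pos (by positivity), ← ENNReal.ofReal_toReal hA',
        ← rad_pow hd A, ← hρ, ← ENNReal.ofReal_mul (by positivity)]
      congr 1
      rw [inv_div, div_pow]; field_simp
    have := bm_mult (A := (ρ / S)⁻¹ • A) (B := Metric.ball (0 : EE d) S) (C := C) ha hb hab
      (hA.const_smul₀ _) Metric.isOpen_ball.measurableSet hC (by
        rintro _ ⟨x, hx, rfl⟩ y hy
        simp only [smul_smul]
        rw [mul_inv_cancel₀ ha.ne', one_smul]
        apply H x hx
        rw [norm_smul, Real.norm_of_nonneg hb.le]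
        have : ‖y‖ < S := by simpa using hy
        calc δ / S * ‖y‖ < δ / S * S := by gcongr
          _ = δ := by field_simp)
    rw [vA, vol_ball d 0 hS0.le hd, ← ENNReal.rpow_add _ _ (by simp; positivity) ENNReal.ofReal_ne_top,
      hab, ENNReal.rpow_one] at this
    exact this

end Gru


namespace Gru
open scoped ENNReal Topology Pointwise

section Symm
variable {d : ℕ} (f : EE d → ℝ)

/-- decreasing rearrangement, as function of the radius -/
noncomputable def VV (r : ℝ) : ℝ := sSup {t : ℝ | 0 ≤ t ∧ (t = 0 ∨ |r| < rad d {x | t < f x})}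

variable {f}

theorem meas_superlevel (hf : Continuous f) (t : ℝ) : MeasurableSet {x | t < f x} :=
  (isOpen_lt continuous_const hf).measurableSet

theorem vol_superlevel (hc : HasCompactSupport f) {t : ℝ} (ht : 0 ≤ t) :
    volume {x | t < f x} ≠ ⊤ := by
  refine ne_top_of_le_ne_top hc.measure_lt_top.ne (measure_mono ?_)
  intro x hx
  apply subset_tsupport
  have : t < f x := hx
  rw [Function.mem_support]
  linarith

theorem rad_anti (hc : HasCompactSupport f) {t t' : ℝ} (ht : 0 ≤ t) (htt : t ≤ t') :
    rad d {x | t' < f x} ≤ rad d {x | t < f x} :=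
  rad_mono (measure_mono fun x (hx : t' < f x) => lt_of_le_of_lt htt hx) (vol_superlevel hc ht)

theorem nonempty_of_rad_pos (hd : 1 ≤ d) {A : Set (EE d)} (h : 0 < rad d A) : A.Nonempty := by
  by_contra hA
  rw [not_nonempty_iff_eq_empty] at hA
  subst hA
  have h0 : (0 : ℝ) < (d : ℝ)⁻¹ := by
    have : (0 : ℝ) < d := by exact_mod_cast hd
    positivity
  simp [rad, Real.zero_rpow h0.ne'] at h

theorem VV_bdd (hd : 1 ≤ d) (hf : Continuous f) (hc : HasCompactSupport f) (r : ℝ) :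
    BddAbove {t : ℝ | 0 ≤ t ∧ (t = 0 ∨ |r| < rad d {x | t < f x})} := by
  obtain ⟨M, hM⟩ := hf.bddAbove_range_of_hasCompactSupport hc
  refine ⟨max M 0, ?_⟩
  rintro t ⟨ht, h⟩
  rcases h with h | h
  · rw [h]; exact le_max_right _ _
  · obtain ⟨x, hx⟩ := nonempty_of_rad_pos hd (lt_of_le_of_lt (abs_nonneg r) h)
    have : f x ≤ M := hM (mem_range_self x)
    have hx' : t < f x := hx
    exact le_max_of_le_left (by linarith)

theorem VV_nonneg (hd : 1 ≤ d) (hf : Continuous f) (hc : HasCompactSupport f) (r : ℝ) :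
    0 ≤ VV f r :=
  le_csSup (VV_bdd hd hf hc r) ⟨le_rfl, Or.inl rfl⟩

theorem lt_VV_iff (hd : 1 ≤ d) (hf : Continuous f) (hc : HasCompactSupport f) {r t : ℝ}
    (ht : 0 ≤ t) : t < VV f r ↔ |r| < rad d {x | t < f x} := by
  constructor
  · intro h
    have hne : Set.Nonempty {t : ℝ | 0 ≤ t ∧ (t = 0 ∨ |r| < rad d {x | t < f x})} :=
      ⟨0, le_rfl, Or.inl rfl⟩
    obtain ⟨t', ⟨h0, h1⟩, h2⟩ := exists_lt_of_lt_csSup hne h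
    rcases h1 with h1 | h1
    · linarith
    · exact lt_of_lt_of_le h1 (rad_anti hc ht h2.le)
  · intro h
    have hu : {x | t < f x} = ⋃ n : ℕ, {x | t + 1 / ((n : ℝ) + 1) < f x} := by
      ext x
      simp only [mem_ofPred_eq, mem_iUnion]
      constructor
      · intro hx
        obtain ⟨n, hn⟩ := exists_nat_one_div_lt (sub_pos.2 hx)
        exact ⟨n, by linarith⟩
      · rintro ⟨n, hn⟩
        have : (0:ℝ) < 1 / ((n : ℝ) + 1) := by positivity
        linarith
    have hmono : Monotone fun n : ℕ => {x | t + 1 / ((n : ℝ) + 1) < f x} := by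
      intro m n hmn x hx
      simp only [mem_ofPred_eq] at *
      have : 1 / ((n : ℝ) + 1) ≤ 1 / ((m : ℝ) + 1) := by
        apply one_div_le_one_div_of_le (by positivity)
        have : (m : ℝ) ≤ n := by exact_mod_cast hmn
        linarith
      linarith
    have ht1 := tendsto_measure_iUnion_atTop (μ := volume) hmono
    rw [← hu] at ht1
    have h1 : ENNReal.ofReal (cc d * |r| ^ d) < volume {x | t < f x} := by
      by_contra hcon
      exact absurd ((rad_le_iff hd (vol_superlevel hc ht) (abs_nonneg r)).2 (not_lt.1 hcon))
        (not_le.2 h)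
    obtain ⟨n, hn⟩ := (ht1.eventually (lt_mem_nhds h1)).exists
    have hp : (0:ℝ) < 1 / ((n : ℝ) + 1) := by positivity
    have h2 : |r| < rad d {x | t + 1 / ((n : ℝ) + 1) < f x} := by
      by_contra hcon
      exact absurd ((rad_le_iff hd (vol_superlevel hc (by linarith)) (abs_nonneg r)).1 (not_lt.1 hcon))
        (not_le.2 hn)
    have : t + 1 / ((n : ℝ) + 1) ≤ VV f r := le_csSup (VV_bdd hd hf hc r)
      ⟨by linarith, Or.inr h2⟩
    linarith

theorem VV_abs (r : ℝ) : VV f |r| = VV f r := by simp [VV]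

theorem VV_lip_aux (hd : 1 ≤ d) (hf : Continuous f) (hc : HasCompactSupport f) {L : ℝ} (hL : 0 < L)
    (hlip : ∀ x y, f x ≤ f y + L * ‖x - y‖) {r r' : ℝ} :
    VV f r ≤ VV f r' + L * |r - r'| := by
  by_contra hcon
  push Not at hcon
  have hb := VV_nonneg hd hf hc r'
  obtain ⟨t, ht1, ht2⟩ := exists_between hcon
  set t' := VV f r' with ht'
  have habs : |(|r'| - |r|)| ≤ |r - r'| := by
    rw [abs_sub_comm r r']; exact abs_abs_sub_abs_le _ _
  have h1 : |r| < rad d {x | t < f x} := by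
    refine (lt_VV_iff hd hf hc ?_).1 ht2
    have := abs_nonneg (r - r')
    nlinarith
  have hδ : 0 < (t - t') / L := by
    have := abs_nonneg (r - r')
    apply div_pos _ hL
    nlinarith
  have ht0 : 0 ≤ t := by
    have := abs_nonneg (r - r')
    nlinarith
  have := bm_ball hd (A := {x | t < f x}) (C := {x | t' < f x}) (meas_superlevel hf _)
    (meas_superlevel hf _) (vol_superlevel hc ht0) (vol_superlevel hc hb)
    (nonempty_of_rad_pos hd (lt_of_le_of_lt (abs_nonneg r) h1)) hδ (by
      intro x hx y hy
      have hx' : t < f x := hx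
      have h3 := hlip x (x + y)
      have : ‖x - (x + y)‖ = ‖y‖ := by simp
      rw [this] at h3
      rw [lt_div_iff₀ hL] at hy
      show t' < f (x + y)
      linarith)
  have h4 : |r'| < rad d {x | t' < f x} := by
    refine lt_of_lt_of_le ?_ this
    have h5 : |r - r'| < (t - t') / L := by
      rw [lt_div_iff₀ hL]; linarith
    have := le_abs_self (|r'| - |r|)
    linarith
  exact lt_irrefl _ ((lt_VV_iff hd hf hc hb).2 h4)

theorem VV_superlevel (hd : 1 ≤ d) (hf : Continuous f) (hc : HasCompactSupport f) {t : ℝ}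
    (ht : 0 ≤ t) : {x : EE d | t < VV f ‖x‖} = Metric.ball 0 (rad d {x | t < f x}) := by
  ext x
  simp only [mem_ofPred_eq, lt_VV_iff hd hf hc ht, abs_norm, mem_ball_zero_iff]

theorem VV_zero (hd : 1 ≤ d) (hf : Continuous f) (hc : HasCompactSupport f) {R : ℝ} (hR : 0 ≤ R)
    (h : volume {x | 0 < f x} ≤ volume (Metric.ball (0 : EE d) R)) {r : ℝ} (hr : R ≤ r) :
    VV f r = 0 := by
  apply le_antisymm _ (VV_nonneg hd hf hc r)
  by_contra hcon
  push Not at hcon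
  rw [lt_VV_iff hd hf hc le_rfl, abs_of_nonneg (hR.trans hr)] at hcon
  rw [vol_ball d 0 hR hd, ← rad_le_iff hd (vol_superlevel hc le_rfl) hR] at h
  linarith

theorem VV_lintegral_rpow (hd : 1 ≤ d) (hf : Continuous f) (hf0 : ∀ x, 0 ≤ f x)
    (hc : HasCompactSupport f) (hV : Continuous (VV f)) {p : ℝ} (hp : 0 < p) :
    ∫⁻ x : EE d, ENNReal.ofReal (VV f ‖x‖ ^ p) = ∫⁻ x, ENNReal.ofReal (f x ^ p) := by
  rw [lintegral_rpow_eq_lintegral_meas_lt_mul _ (ae_of_all _ fun x => VV_nonneg hd hf hc _)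
    (by fun_prop) hp, lintegral_rpow_eq_lintegral_meas_lt_mul _ (ae_of_all _ hf0)
    (by fun_prop) hp]
  congr 1
  apply setLIntegral_congr_fun measurableSet_Ioi
  intro t ht
  have ht' : (0:ℝ) ≤ t := le_of_lt ht
  dsimp only
  rw [VV_superlevel hd hf hc ht', vol_ball_rad hd (vol_superlevel hc ht')]

theorem bathtub {g : ℝ → ℝ≥0∞} (hg : Monotone g)
    {A : Set (EE d)} (hA : MeasurableSet A)
    {ρ : ℝ} (hv : volume (Metric.ball (0 : EE d) ρ) = volume A) :
    (volume.withDensity fun x => g ‖x‖) (Metric.ball (0 : EE d) ρ) ≤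
      (volume.withDensity fun x => g ‖x‖) A := by
  set B := Metric.ball (0 : EE d) ρ
  have hB : MeasurableSet B := Metric.isOpen_ball.measurableSet
  set η := (volume : Measure (EE d)).withDensity fun x => g ‖x‖
  have e : volume (B \ A) = volume (A \ B) := by
    have h1 := measure_inter_add_sdiff (μ := (volume : Measure (EE d))) B hA
    have h2 := measure_inter_add_sdiff (μ := (volume : Measure (EE d))) A hB
    rw [inter_comm] at h2
    have h3 : volume (B ∩ A) ≠ ⊤ := ne_top_of_le_ne_top measure_ball_lt_top.ne
      (measure_mono inter_subset_left)
    rw [← hv, ← h1] at h2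
    exact ((ENNReal.add_right_inj h3).1 h2).symm
  have i1 : η (B \ A) ≤ η (A \ B) := by
    rw [withDensity_apply _ (hB.diff hA), withDensity_apply _ (hA.diff hB)]
    calc _ ≤ ∫⁻ x in B \ A, g ρ := by
          apply setLIntegral_mono' (hB.diff hA)
          intro x hx
          apply hg
          have : ‖x‖ < ρ := by simpa [B] using hx.1
          exact this.le
      _ = ∫⁻ x in A \ B, g ρ := by rw [setLIntegral_const, setLIntegral_const, e]
      _ ≤ _ := by
          apply setLIntegral_mono' (hA.diff hB)
          intro x hx
          apply hg
          have : ¬ ‖x‖ < ρ := by simpa [B] using hx.2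
          exact not_lt.1 this
  rw [← measure_inter_add_sdiff B hA, ← measure_inter_add_sdiff A hB, inter_comm A B]
  gcongr

theorem VV_hardy (hd : 1 ≤ d) (hf : Continuous f) (hf0 : ∀ x, 0 ≤ f x)
    (hc : HasCompactSupport f) (hV : Continuous (VV f)) {g : ℝ → ℝ≥0∞} (hg : Monotone g) :
    ∫⁻ x : EE d, g ‖x‖ * ENNReal.ofReal (VV f ‖x‖ ^ (2:ℝ)) ≤
      ∫⁻ x, g ‖x‖ * ENNReal.ofReal (f x ^ (2:ℝ)) := by
  have hgm : Measurable fun x : EE d => g ‖x‖ := hg.measurable.comp measurable_norm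
  have e := fun (h : EE d → ℝ≥0∞) (hh : Measurable h) =>
    (lintegral_withDensity_eq_lintegral_mul (volume : Measure (EE d)) hgm hh).symm
  simp only [Pi.mul_apply] at e
  have m1 : Measurable fun x : EE d => ENNReal.ofReal (VV f ‖x‖ ^ (2:ℝ)) :=
    ENNReal.measurable_ofReal.comp
      ((hV.comp continuous_norm).rpow_const (fun _ => Or.inr (by norm_num))).measurable
  have m2 : Measurable fun x : EE d => ENNReal.ofReal (f x ^ (2:ℝ)) :=
    ENNReal.measurable_ofReal.comp
      (hf.rpow_const (fun _ => Or.inr (by norm_num))).measurable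
  rw [e _ m1, e _ m2]
  rw [lintegral_rpow_eq_lintegral_meas_lt_mul _ (ae_of_all _ fun x => VV_nonneg hd hf hc _)
    (hV.comp continuous_norm).measurable.aemeasurable two_pos,
    lintegral_rpow_eq_lintegral_meas_lt_mul _ (ae_of_all _ hf0)
    hf.measurable.aemeasurable two_pos]
  refine mul_le_mul' le_rfl ?_
  apply setLIntegral_mono' measurableSet_Ioi
  intro t ht
  have ht' : (0:ℝ) ≤ t := le_of_lt ht
  refine mul_le_mul' ?_ le_rfl
  rw [VV_superlevel hd hf hc ht']
  exact bathtub hg (meas_superlevel hf _) (vol_ball_rad hd (vol_superlevel hc ht'))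

/-- key comparison -/
theorem VV_compare (hd : 1 ≤ d) (hf : Continuous f)
    (hc : HasCompactSupport f) {ε : ℝ} (hε : 0 < ε)
    {k K : EE d → ℝ} (hk : Measurable k) (hK : Continuous K) (hKc : HasCompactSupport K)
    (hk0 : ∀ x, 0 ≤ k x) (hK0 : ∀ x, 0 ≤ K x)
    (h1 : ∀ x, ∃ y, k x ≤ VV f ‖y‖ - ‖x - y‖ ^ 2 / (2 * ε))
    (h2 : ∀ x y, f y - ‖x - y‖ ^ 2 / (2 * ε) ≤ K x) :
    ∫⁻ x, ENNReal.ofReal (k x) ≤ ∫⁻ x, ENNReal.ofReal (K x) := by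
  rw [lintegral_eq_lintegral_meas_lt _ (ae_of_all _ hk0) hk.aemeasurable,
    lintegral_eq_lintegral_meas_lt _ (ae_of_all _ hK0) hK.measurable.aemeasurable]
  apply setLIntegral_mono' measurableSet_Ioi
  intro t ht
  have ht' : (0:ℝ) ≤ t := le_of_lt ht
  rw [← vol_ball_rad hd (vol_superlevel hKc ht')]
  apply measure_mono
  intro x hx
  have hx' : t < k x := hx
  obtain ⟨y, hy⟩ := h1 x
  have h3 : t + ‖x - y‖ ^ 2 / (2 * ε) < VV f ‖y‖ := by linarith
  obtain ⟨τ, hτ1, hτ2⟩ := exists_between h3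
  have hq : 0 ≤ ‖x - y‖ ^ 2 / (2 * ε) := by positivity
  have hτ0 : 0 ≤ τ := by linarith
  have hrad := (lt_VV_iff hd hf hc hτ0).1 hτ2
  rw [abs_norm] at hrad
  have hτt : 0 < 2 * ε * (τ - t) := by
    apply mul_pos (by positivity); linarith
  have := bm_ball hd (A := {x | τ < f x}) (C := {x | t < K x}) (meas_superlevel hf _)
    (meas_superlevel hK _) (vol_superlevel hc hτ0) (vol_superlevel hKc ht')
    (nonempty_of_rad_pos hd (lt_of_le_of_lt (norm_nonneg y) hrad)) (Real.sqrt_pos.2 hτt) (by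
      intro z hz w hw
      have hz' : τ < f z := hz
      have h4 := h2 (z + w) z
      rw [add_sub_cancel_left] at h4
      have h5 : ‖w‖ ^ 2 < 2 * ε * (τ - t) := (Real.lt_sqrt (norm_nonneg _)).1 hw
      have h6 : ‖w‖ ^ 2 / (2 * ε) < τ - t := by
        rw [div_lt_iff₀ (by positivity)]; linarith
      show t < K (z + w)
      linarith)
  rw [mem_ball_zero_iff]
  refine lt_of_lt_of_le ?_ this
  have h7 : ‖x - y‖ < Real.sqrt (2 * ε * (τ - t)) := by
    apply Real.lt_sqrt_of_sq_lt
    have : ‖x - y‖ ^ 2 / (2 * ε) < τ - t := by linarith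
    rw [div_lt_iff₀ (by positivity)] at this
    linarith
  calc ‖x‖ = ‖y + (x - y)‖ := by simp
    _ ≤ ‖y‖ + ‖x - y‖ := norm_add_le _ _
    _ < _ := by linarith

end Symm
end Gru


namespace Gru
open scoped ENNReal Topology Pointwise

section Energy
variable {d : ℕ}

theorem second_order {φ : EE d → ℝ} (h : ContDiff ℝ (⊤ : ℕ∞) φ) (hc : HasCompactSupport φ) :
    ∃ M : ℝ, 0 ≤ M ∧ ∀ x y, |φ y| ≤ |φ x| + ‖fderiv ℝ φ x‖ * ‖x - y‖ + M * ‖x - y‖ ^ 2 := by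
  have h1 : ContDiff ℝ 1 (fderiv ℝ φ) := h.fderiv_right (m := 1) (by norm_cast)
  obtain ⟨L, hL⟩ := h1.lipschitzWith_of_hasCompactSupport (hc.fderiv ℝ) (by norm_num)
  refine ⟨L, L.2, fun x y => ?_⟩
  have hd : Differentiable ℝ φ := h.differentiable (by simp)
  have := (convex_closedBall x ‖x - y‖).norm_image_sub_le_of_norm_fderiv_le' (f := φ)
    (φ := fderiv ℝ φ x) (C := L * ‖x - y‖) (x := x) (y := y) (fun z _ => hd z) (by
      intro z hz
      rw [← dist_eq_norm]
      refine (hL.dist_le_mul z x).trans ?_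
      gcongr
      exact hz) (by simp) (by simp [dist_eq_norm, norm_sub_rev])
  rw [norm_sub_rev y x] at this
  have h2 := (fderiv ℝ φ x).le_opNorm (y - x)
  rw [norm_sub_rev y x] at h2
  simp only [Real.norm_eq_abs] at this h2
  have h3 : φ y = (φ y - φ x - fderiv ℝ φ x (y - x)) + (φ x + fderiv ℝ φ x (y - x)) := by ring
  have h4 := abs_add_le (φ y - φ x - fderiv ℝ φ x (y - x)) (φ x + fderiv ℝ φ x (y - x))
  rw [← h3] at h4
  have h5 := abs_add_le (φ x) (fderiv ℝ φ x (y - x))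
  nlinarith

theorem exists_lip {φ : EE d → ℝ} (h : ContDiff ℝ (⊤ : ℕ∞) φ) (hc : HasCompactSupport φ) :
    ∃ L : ℝ, 0 < L ∧ ∀ x y, |φ x| ≤ |φ y| + L * ‖x - y‖ := by
  obtain ⟨L, hL⟩ := h.lipschitzWith_of_hasCompactSupport hc (by simp)
  refine ⟨L + 1, by positivity, fun x y => ?_⟩
  have h1 := hL.dist_le_mul x y
  rw [dist_eq_norm, dist_eq_norm, Real.norm_eq_abs] at h1
  have h2 := abs_sub_abs_le_abs_sub (φ x) (φ y)
  have := norm_nonneg (x - y)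
  nlinarith

theorem VV_lip {f : EE d → ℝ} (hd : 1 ≤ d) (hf : Continuous f) (hc : HasCompactSupport f) {L : ℝ}
    (hL : 0 < L) (hlip : ∀ x y, f x ≤ f y + L * ‖x - y‖) :
    LipschitzWith (Real.toNNReal L) (VV f) := by
  apply LipschitzWith.of_dist_le_mul
  intro r r'
  rw [Real.dist_eq, Real.dist_eq, Real.coe_toNNReal _ hL.le, abs_le]
  have h1 := VV_lip_aux hd hf hc hL hlip (r := r) (r' := r')
  have h2 := VV_lip_aux hd hf hc hL hlip (r := r') (r' := r)
  rw [abs_sub_comm] at h2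
  constructor <;> linarith

theorem VV_energy (hd : 1 ≤ d) {φ : EE d → ℝ} (h : ContDiff ℝ (⊤ : ℕ∞) φ)
    (hc : HasCompactSupport φ) :
    ∫⁻ x : EE d, ENNReal.ofReal ((deriv (VV fun x => |φ x|) ‖x‖) ^ 2) ≤
      ∫⁻ x, ENNReal.ofReal (‖fderiv ℝ φ x‖ ^ 2) := by
  have hnt : Nontrivial (EE d) := by
    have : Nonempty (Fin d) := ⟨⟨0, hd⟩⟩
    infer_instance
  set f : EE d → ℝ := fun x => |φ x| with hf
  have hfc : Continuous f := h.continuous.abs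
  have hfs : HasCompactSupport f := hc.comp_left (g := fun t => |t|) (by simp)
  obtain ⟨L, hL, hlip⟩ := exists_lip h hc
  have hVl : LipschitzWith (Real.toNNReal L) (VV f) := VV_lip hd hfc hfs hL hlip
  have hVc : Continuous (VV f) := hVl.continuous
  obtain ⟨M, hM, hso⟩ := second_order h hc
  set V := VV f with hV
  set c : ℝ → ℝ := fun r => - deriv V r with hcdef
  have hcm : Measurable c := (measurable_deriv V).neg
  have hGc : Continuous (fun x => ‖fderiv ℝ φ x‖) := (h.continuous_fderiv (by simp)).norm
  have hGs : HasCompactSupport (fun x => ‖fderiv ℝ φ x‖) := (hc.fderiv ℝ).norm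
  -- the perturbed functions
  set k : ℝ → EE d → ℝ := fun ε x =>
    max (V ‖x‖) (V (‖x‖ - ε * c ‖x‖) - ε * c ‖x‖ ^ 2 / 2) with hk
  set K : ℝ → EE d → ℝ := fun ε x => f x + ε / (2 * (1 - 2 * ε * M)) * ‖fderiv ℝ φ x‖ ^ 2 with hK
  have hkm : ∀ ε, Measurable (k ε) := by
    intro ε
    have hcn : Measurable fun x : EE d => c ‖x‖ := hcm.comp measurable_norm
    refine (hVc.measurable.comp measurable_norm).max ?_
    refine (hVc.measurable.comp (measurable_norm.sub (hcn.const_mul _))).sub ?_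
    exact ((hcn.pow_const 2).const_mul ε).div_const 2
  have key : ∀ ε, 0 < ε → 0 < 1 - 2 * ε * M →
      ∫⁻ x, ENNReal.ofReal ((k ε x - V ‖x‖) / ε) ≤
        ENNReal.ofReal (1 / (2 * (1 - 2 * ε * M))) * ∫⁻ x, ENNReal.ofReal (‖fderiv ℝ φ x‖ ^ 2) := by
    intro ε hε hεM
    have c1 := VV_compare hd hfc hfs hε (hkm ε) (K := K ε)
      (hfc.add (continuous_const.mul (hGc.pow 2)))
      (hfs.add ((hGs.comp_left (g := fun t => ε / (2 * (1 - 2 * ε * M)) * t ^ 2) (by simp))))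
      (fun x => le_max_of_le_left (VV_nonneg hd hfc hfs _))
      (fun x => by have := abs_nonneg (φ x); simp only [hK, hf]; positivity)
      (by
        intro x
        rcases max_cases (V ‖x‖) (V (‖x‖ - ε * c ‖x‖) - ε * c ‖x‖ ^ 2 / 2) with h1 | h1
        · refine ⟨x, ?_⟩
          simp only [hk, h1.1]
          simp [hV]
        · have : ∃ y : EE d, ‖y‖ = |‖x‖ - ε * c ‖x‖| ∧ ‖x - y‖ = ε * |c ‖x‖| := by
            by_cases hx : x = 0
            · subst hx
              obtain ⟨y, hy⟩ := exists_norm_eq (EE d) (c := ε * |c 0|) (by positivity)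
              refine ⟨y, ?_, ?_⟩
              · rw [hy, norm_zero, zero_sub, abs_neg (ε * c 0), abs_mul, abs_of_pos hε]
              · rw [zero_sub, norm_neg, hy, norm_zero]
            · have hx' : 0 < ‖x‖ := norm_pos_iff.2 hx
              refine ⟨(1 - ε * c ‖x‖ / ‖x‖) • x, ?_, ?_⟩
              · rw [norm_smul, Real.norm_eq_abs, ← abs_of_pos hx', ← abs_mul, abs_of_pos hx']
                congr 1
                field_simp
              · have : x - (1 - ε * c ‖x‖ / ‖x‖) • x = (ε * c ‖x‖ / ‖x‖) • x := by
                  rw [sub_smul, one_smul]; abel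
                rw [this, norm_smul, Real.norm_eq_abs, abs_div, abs_of_pos hx', abs_mul, abs_of_pos hε]
                field_simp
          obtain ⟨y, hy1, hy2⟩ := this
          refine ⟨y, ?_⟩
          simp only [hk, h1.1]
          rw [hy1, VV_abs, hy2, mul_pow, sq_abs]
          apply le_of_eq
          simp only [hV]
          field_simp)
      (by
        intro x y
        have h1 := hso x y
        simp only [hK, hf]
        set G := ‖fderiv ℝ φ x‖
        set t := ‖x - y‖
        have h2 : G * t + M * t ^ 2 - t ^ 2 / (2 * ε) ≤ ε / (2 * (1 - 2 * ε * M)) * G ^ 2 := by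
          have : ε / (2 * (1 - 2 * ε * M)) * G ^ 2 - (G * t + M * t ^ 2 - t ^ 2 / (2 * ε)) =
            (ε * G - (1 - 2 * ε * M) * t) ^ 2 / (2 * ε * (1 - 2 * ε * M)) := by
            obtain ⟨D, hD⟩ : ∃ D, D = 1 - 2 * ε * M := ⟨_, rfl⟩
            have hMD : M = (1 - D) / (2 * ε) := by rw [hD]; field_simp; ring
            rw [← hD] at hεM ⊢
            rw [hMD]
            field_simp
            ring
          have h3 : 0 ≤ (ε * G - (1 - 2 * ε * M) * t) ^ 2 / (2 * ε * (1 - 2 * ε * M)) := by positivity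
          linarith
        linarith)
    have e1 : ∫⁻ x, ENNReal.ofReal (k ε x) = (∫⁻ x : EE d, ENNReal.ofReal (V ‖x‖)) +
        ENNReal.ofReal ε * ∫⁻ x, ENNReal.ofReal ((k ε x - V ‖x‖) / ε) := by
      rw [← lintegral_const_mul _ (by fun_prop), ← lintegral_add_left (by fun_prop)]
      congr 1
      ext x
      have h0 : V ‖x‖ ≤ k ε x := le_max_left _ _
      have h00 : 0 ≤ V ‖x‖ := VV_nonneg hd hfc hfs _
      rw [← ENNReal.ofReal_mul hε.le, ← ENNReal.ofReal_add h00 (by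
        have : 0 ≤ k ε x - V ‖x‖ := by linarith
        positivity)]
      congr 1
      field_simp
      ring
    have e2 : ∫⁻ x, ENNReal.ofReal (K ε x) = (∫⁻ x : EE d, ENNReal.ofReal (f x)) +
        ENNReal.ofReal ε * (ENNReal.ofReal (1 / (2 * (1 - 2 * ε * M))) *
          ∫⁻ x, ENNReal.ofReal (‖fderiv ℝ φ x‖ ^ 2)) := by
      rw [← lintegral_const_mul _ (by fun_prop), ← lintegral_const_mul _ (by fun_prop),
        ← lintegral_add_left (by fun_prop)]
      congr 1
      ext x
      rw [← ENNReal.ofReal_mul (by positivity), ← ENNReal.ofReal_mul hε.le,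
        ← ENNReal.ofReal_add (abs_nonneg _) (by positivity)]
      congr 1
      simp only [hK]
      ring
    have e3 : ∫⁻ x : EE d, ENNReal.ofReal (V ‖x‖) = ∫⁻ x : EE d, ENNReal.ofReal (f x) := by
      have := VV_lintegral_rpow hd hfc (fun x => abs_nonneg _) hfs hVc (p := 1) one_pos
      simpa using this
    have e4 : ∫⁻ x : EE d, ENNReal.ofReal (f x) ≠ ⊤ := by
      have := (hfc.integrable_of_hasCompactSupport hfs (μ := volume)).lintegral_lt_top
      exact this.ne
    rw [e1, e2, e3, ENNReal.add_le_add_iff_left e4,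
      ENNReal.mul_le_mul_iff_right (by simpa using hε) ENNReal.ofReal_ne_top] at c1
    exact c1
  -- Fatou
  set E : ℕ → ℝ := fun n => 1 / ((n : ℝ) + 1) with hE
  have hE0 : Tendsto E atTop (𝓝 0) := tendsto_one_div_add_atTop_nhds_zero_nat
  have hEp : ∀ n, 0 < E n := fun n => by simp only [hE]; positivity
  have hE1 : Tendsto (fun n => 1 - 2 * E n * M) atTop (𝓝 1) := by
    have := ((hE0.const_mul 2).mul_const M).const_sub 1
    simpa using this
  have hE2 : Tendsto (fun n => ENNReal.ofReal (1 / (2 * (1 - 2 * E n * M))) *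
      ∫⁻ x, ENNReal.ofReal (‖fderiv ℝ φ x‖ ^ 2)) atTop
      (𝓝 (ENNReal.ofReal (1 / 2) * ∫⁻ x, ENNReal.ofReal (‖fderiv ℝ φ x‖ ^ 2))) := by
    refine ENNReal.Tendsto.mul_const ?_ (Or.inl (by simp))
    refine (ENNReal.continuous_ofReal.tendsto _).comp ?_
    have := (tendsto_const_nhds (x := (1:ℝ))).div (hE1.const_mul 2) (by norm_num)
    rw [mul_one] at this
    exact this
  have fat : ∫⁻ x : EE d, liminf (fun n => ENNReal.ofReal ((k (E n) x - V ‖x‖) / E n)) atTop ≤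
      ENNReal.ofReal (1 / 2) * ∫⁻ x, ENNReal.ofReal (‖fderiv ℝ φ x‖ ^ 2) := by
    refine (lintegral_liminf_le (fun n => by have := hkm (E n); fun_prop)).trans ?_
    refine le_trans (liminf_le_liminf ?_) hE2.liminf_eq.le
    filter_upwards [hE1.eventually (lt_mem_nhds zero_lt_one)] with n hn
    exact key _ (hEp n) hn
  have low : ∀ x : EE d, ENNReal.ofReal (1 / 2) * ENNReal.ofReal ((deriv V ‖x‖) ^ 2) ≤
      liminf (fun n => ENNReal.ofReal ((k (E n) x - V ‖x‖) / E n)) atTop := by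
    intro x
    by_cases hdx : DifferentiableAt ℝ V ‖x‖
    · rw [← ENNReal.ofReal_mul (by norm_num)]
      set r := ‖x‖
      have hd1 : HasDerivAt (fun ε : ℝ => V (r - ε * c r)) (deriv V r * (- c r)) 0 := by
        have h1 : HasDerivAt (fun ε : ℝ => r - ε * c r) (- c r) 0 := by
          have := ((hasDerivAt_id (0:ℝ)).mul_const (c r)).const_sub r
          simpa using this
        have h2 : HasDerivAt V (deriv V r) (r - 0 * c r) := by simpa using hdx.hasDerivAt
        exact h2.comp (0:ℝ) h1
      have hd2 := hd1.tendsto_slope_zero_right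
      have hE0' : Tendsto E atTop (𝓝[>] 0) :=
        tendsto_nhdsWithin_iff.2 ⟨hE0, Eventually.of_forall hEp⟩
      have hd3 := (hd2.comp hE0').sub_const (c r ^ 2 / 2)
      have hd4 := (ENNReal.continuous_ofReal.tendsto _).comp hd3
      have : deriv V r * -c r - c r ^ 2 / 2 = 1 / 2 * deriv V r ^ 2 := by
        simp only [hcdef]; ring
      rw [this] at hd4
      rw [← hd4.liminf_eq]
      refine liminf_le_liminf (Eventually.of_forall fun n => ?_)
      simp only [Function.comp]
      apply ENNReal.ofReal_le_ofReal
      have := hEp n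
      rw [le_div_iff₀ this]
      have h1 : V (r - E n * c r) - E n * c r ^ 2 / 2 ≤ k (E n) x := le_max_right _ _
      simp only [smul_eq_mul, zero_add, zero_mul, sub_zero]
      field_simp
      linarith
    · simp [deriv_zero_of_not_differentiableAt hdx]
  have fin := (lintegral_mono low).trans fat
  rw [lintegral_const_mul _ (by
    have := (measurable_deriv V).comp (measurable_norm (α := EE d))
    exact (this.pow_const 2).ennreal_ofReal),
    ENNReal.mul_le_mul_iff_right (by simp) ENNReal.ofReal_ne_top] at fin
  exact fin

end Energy
end Gru


namespace Gru
open scoped ENNReal Topology Pointwise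

section Field

theorem deriv_bdd {V : ℝ → ℝ} {L : NNReal} (hV : LipschitzWith L V) (r : ℝ) : |deriv V r| ≤ L := by
  have := norm_deriv_le_of_lipschitz hV (x₀ := r)
  simpa using this

theorem intInt_of_bdd {F : ℝ → ℝ} (hF : Measurable F) {a b C : ℝ} (h : ∀ r ∈ Ioc a b, |F r| ≤ C)
    (hab : a ≤ b) : IntervalIntegrable F volume a b := by
  rw [intervalIntegrable_iff_integrableOn_Ioc_of_le hab]
  refine Measure.integrableOn_of_bounded (M := C) (by simp) hF.aestronglyMeasurable ?_
  rw [ae_restrict_iff' measurableSet_Ioc]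
  exact ae_of_all _ h

theorem cont_intInt {F : ℝ → ℝ} (hF : Continuous F) {D : ℝ → ℝ} (hD : Measurable D) {C : ℝ}
    (hC : ∀ r, |D r| ≤ C) (a b : ℝ) : IntervalIntegrable (fun r => F r * D r) volume a b := by
  refine IntervalIntegrable.continuousOn_mul ?_ hF.continuousOn
  rcases le_total a b with h | h
  · exact intInt_of_bdd hD (fun r _ => hC r) h
  · exact (intInt_of_bdd hD (fun r _ => hC r) h).symm

/-- one dimensional lower bound from a field -/
theorem field_lb {n : ℕ} {s ν μ R C : ℝ} (hs : 0 < s) (hR : 0 < R) {Z q' : ℝ → ℝ}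
    (hZ : ContinuousOn Z (Icc 0 R)) (hZ0 : Z 0 = 0)
    (hq : ∀ r ∈ Ioo 0 R, HasDerivAt (fun r => r ^ n * Z r) (q' r) r)
    (hC : ∀ r ∈ Ioo 0 R, |q' r| ≤ C)
    (hle : ∀ r ∈ Ioo 0 R, r ^ n * (μ + Z r ^ 2 - ν * r ^ (2 * s)) ≤ q' r)
    {V : ℝ → ℝ} {L : NNReal} (hV : LipschitzWith L V) (hVR : V R = 0) :
    0 ≤ ∫ r in (0:ℝ)..R, r ^ n * (deriv V r ^ 2 + ν * r ^ (2 * s) * V r ^ 2 - μ * V r ^ 2) := by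
  set q : ℝ → ℝ := fun r => r ^ n * Z r with hqd
  have hC0 : 0 ≤ C := (abs_nonneg _).trans (hC (R / 2) ⟨by linarith, by linarith⟩)
  have hqc : ContinuousOn q (Icc 0 R) := (continuousOn_id.pow n).mul hZ
  have hql : LipschitzOnWith (Real.toNNReal C) q (Icc 0 R) := by
    rw [← closure_Ioo hR.ne]
    apply LipschitzOnWith.closure (by rw [closure_Ioo hR.ne]; exact hqc)
    refine (convex_Ioo 0 R).lipschitzOnWith_of_nnnorm_hasDerivWithin_le
      (fun x hx => (hq x hx).hasDerivWithinAt) (fun x hx => ?_)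
    rw [← NNReal.coe_le_coe, Real.coe_toNNReal _ hC0]
    exact hC x hx
  have hqa : AbsolutelyContinuousOnInterval q 0 R := by
    apply LipschitzOnWith.absolutelyContinuousOnInterval (K := Real.toNNReal C)
    rwa [uIcc_of_le hR.le]
  have hVa : AbsolutelyContinuousOnInterval V 0 R :=
    LipschitzOnWith.absolutelyContinuousOnInterval (K := L) hV.lipschitzOnWith
  have hV2 : AbsolutelyContinuousOnInterval (fun r => V r * V r) 0 R := hVa.fun_mul hVa
  have ftc := hqa.integral_deriv_mul_eq_sub hV2
  simp only [hVR] at ftc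
  have hq0 : q 0 = 0 := by simp [hqd, hZ0]
  rw [hq0] at ftc
  simp only [mul_zero, zero_mul, sub_zero] at ftc
  have hVd := hV.ae_differentiableAt_real
  have i0 : IntervalIntegrable (fun r => deriv q r * (V r * V r) + q r * deriv (fun r => V r * V r) r)
      volume 0 R := (hqa.intervalIntegrable_deriv.mul_continuousOn
        (hV.continuous.mul hV.continuous).continuousOn).add
        (hV2.intervalIntegrable_deriv.continuousOn_mul (by rwa [uIcc_of_le hR.le]))
  have hcr : Continuous fun r : ℝ => r ^ (2 * s) :=
    Real.continuous_rpow_const (by positivity)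
  have i1 : IntervalIntegrable (fun r =>
      r ^ n * (deriv V r ^ 2 + ν * r ^ (2 * s) * V r ^ 2 - μ * V r ^ 2)) volume 0 R := by
    have c := hV.continuous
    have h1 := cont_intInt (F := fun r => r ^ n) (by fun_prop) ((measurable_deriv V).pow_const 2)
      (C := L ^ 2) (fun r => by
        rw [abs_pow]
        exact pow_le_pow_left₀ (abs_nonneg _) (deriv_bdd hV r) 2) 0 R
    have h2 : IntervalIntegrable (fun r : ℝ => r ^ n * (ν * r ^ (2 * s) * V r ^ 2 - μ * V r ^ 2))
      volume 0 R := Continuous.intervalIntegrable (by fun_prop) _ _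
    refine (h1.add h2).congr ?_
    intro r _
    simp only
    ring
  have goal2 : ∫ (x : ℝ) in (0:ℝ)..R, -(deriv q x * (V x * V x) + q x * deriv (fun r => V r * V r) x) = 0 := by
    rw [intervalIntegral.integral_neg, ftc, neg_zero]
  refine goal2.symm.le.trans ?_
  apply intervalIntegral.integral_mono_ae_restrict hR.le i0.neg i1
  rw [EventuallyLE, ae_restrict_iff' measurableSet_Icc]
  have hne : ∀ᵐ r : ℝ, r ≠ 0 ∧ r ≠ R := by
    have h1 : ∀ a : ℝ, ∀ᵐ r : ℝ, r ≠ a := fun a => by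
      rw [ae_iff]; simp
    filter_upwards [h1 0, h1 R] with r h1 h2 using ⟨h1, h2⟩
  filter_upwards [hVd, hne] with r hr hne hmem
  have hm : r ∈ Ioo 0 R := ⟨lt_of_le_of_ne hmem.1 hne.1.symm, lt_of_le_of_ne hmem.2 hne.2⟩
  have e1 : deriv q r = q' r := (hq r hm).deriv
  have e2 : deriv (fun r => V r * V r) r = deriv V r * V r + V r * deriv V r :=
    (hr.hasDerivAt.mul hr.hasDerivAt).deriv
  simp only [Pi.neg_apply]
  rw [e1, e2]
  have h3 := hle r hm
  have h4 : 0 ≤ r ^ n := pow_nonneg hm.1.le n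
  have h5 : 0 ≤ r ^ n * (deriv V r + Z r * V r) ^ 2 := by positivity
  have h6 : 0 ≤ V r ^ 2 := sq_nonneg _
  have h7 := mul_le_mul_of_nonneg_right h3 h6
  simp only [hqd]
  nlinarith

theorem finrank_EE (d : ℕ) : Module.finrank ℝ (EE d) = d := by simp

theorem polar {d : ℕ} (hd : 1 ≤ d) (F : ℝ → ℝ) :
    ∫ x : EE d, F ‖x‖ = d * cc d * ∫ r in Ioi (0:ℝ), r ^ (d - 1) * F r := by
  have : Nontrivial (EE d) := by
    have : Nonempty (Fin d) := ⟨⟨0, hd⟩⟩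
    infer_instance
  rw [integral_fun_norm_addHaar, finrank_EE]
  simp only [nsmul_eq_mul, smul_eq_mul, cc, Measure.real]
  ring

theorem polar_ball {d : ℕ} (hd : 1 ≤ d) (F : ℝ → ℝ) {R : ℝ} (hR : 0 ≤ R)
    (hF : ∀ r, R < r → F r = 0) :
    ∫ x : EE d, F ‖x‖ = d * cc d * ∫ r in (0:ℝ)..R, r ^ (d - 1) * F r := by
  rw [polar hd, intervalIntegral.integral_of_le hR]
  congr 1
  apply setIntegral_eq_of_subset_of_forall_sdiff_eq_zero measurableSet_Ioi
  · intro r hr; exact hr.1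
  · intro r hr
    have : R < r := by
      by_contra h
      exact hr.2 ⟨hr.1, not_lt.1 h⟩
    rw [hF r this, mul_zero]

theorem radial_integrable {d : ℕ} {R : ℝ} (F : ℝ → ℝ) (hF : Measurable F) (hF0 : ∀ r, R < r → F r = 0)
    (hC : ∃ C, ∀ r, 0 ≤ r → r ≤ R → |F r| ≤ C) : Integrable (fun x : EE d => F ‖x‖) := by
  obtain ⟨C, hC⟩ := hC
  rw [← integrableOn_iff_integrable_of_support_subset (s := Metric.closedBall (0 : EE d) R)]
  · refine Measure.integrableOn_of_bounded (M := C)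
      (isCompact_closedBall 0 R).measure_lt_top.ne
      (hF.comp measurable_norm).aestronglyMeasurable ?_
    rw [ae_restrict_iff' Metric.isClosed_closedBall.measurableSet]
    refine ae_of_all _ fun x hx => hC _ (norm_nonneg _) (by simpa using hx)
  · intro x hx
    by_contra h
    have : R < ‖x‖ := by simpa using h
    exact hx (hF0 _ this)

theorem bdd_Icc {R : ℝ} (F : ℝ → ℝ) (hF : Continuous F) : ∃ C, ∀ r, 0 ≤ r → r ≤ R → |F r| ≤ C := by
  obtain ⟨C, hC⟩ := isCompact_Icc.exists_bound_of_continuousOn (s := Icc 0 R) hF.continuousOn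
  exact ⟨C, fun r h1 h2 => hC r ⟨h1, h2⟩⟩

theorem cont_rpow {s : ℝ} (hs : 0 < s) : Continuous fun r : ℝ => r ^ (2 * s) :=
    Real.continuous_rpow_const (by positivity)

theorem cs_sq {d : ℕ} {f : EE d → ℝ} (hc : HasCompactSupport f) :
    HasCompactSupport (fun x => f x ^ 2) := by
  refine hc.mono fun x hx => ?_
  rw [Function.mem_support] at hx ⊢
  intro h
  apply hx
  rw [h]; norm_num

theorem int_sq {d : ℕ} {φ : EE d → ℝ} (hφ : ContDiff ℝ (⊤ : ℕ∞) φ) (hc : HasCompactSupport φ) :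
    Integrable (fun x : EE d => φ x ^ 2) :=
  Continuous.integrable_of_hasCompactSupport (hφ.continuous.pow 2) (cs_sq hc)

theorem int_pot {d : ℕ} {s : ℝ} (hs : 0 < s) {φ : EE d → ℝ} (hφ : ContDiff ℝ (⊤ : ℕ∞) φ)
    (hc : HasCompactSupport φ) : Integrable (fun x : EE d => ‖x‖ ^ (2 * s) * φ x ^ 2) := by
  have h1 : Continuous (fun x : EE d => ‖x‖ ^ (2 * s) * φ x ^ 2) :=
    ((cont_rpow hs).comp continuous_norm).mul (hφ.continuous.pow 2)
  exact h1.integrable_of_hasCompactSupport (HasCompactSupport.mul_left (cs_sq hc))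

theorem int_grad {d : ℕ} {φ : EE d → ℝ} (hφ : ContDiff ℝ (⊤ : ℕ∞) φ) (hc : HasCompactSupport φ) :
    Integrable (fun x : EE d => ‖fderiv ℝ φ x‖ ^ 2) := by
  have h1 : Continuous (fun x : EE d => ‖fderiv ℝ φ x‖ ^ 2) :=
    (hφ.continuous_fderiv (by simp)).norm.pow 2
  exact h1.integrable_of_hasCompactSupport (cs_sq (hc.fderiv ℝ).norm)

theorem toReal_le {α : Type*} [MeasurableSpace α] {m : Measure α} {F G : α → ℝ} (hF : Integrable F m)
    (hG : Integrable G m) (hF0 : ∀ x, 0 ≤ F x) (hG0 : ∀ x, 0 ≤ G x)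
    (h : ∫⁻ x, ENNReal.ofReal (F x) ∂m ≤ ∫⁻ x, ENNReal.ofReal (G x) ∂m) :
    ∫ x, F x ∂m ≤ ∫ x, G x ∂m := by
  rw [integral_eq_lintegral_of_nonneg_ae (ae_of_all _ hF0) hF.aestronglyMeasurable,
    integral_eq_lintegral_of_nonneg_ae (ae_of_all _ hG0) hG.aestronglyMeasurable]
  exact ENNReal.toReal_mono hG.lintegral_lt_top.ne h

theorem symm_facts {d : ℕ} (hd : 1 ≤ d) {s R : ℝ} (hs : 0 < s) (hR : 0 < R)
    {φ : EE d → ℝ} (hφ : ContDiff ℝ (⊤ : ℕ∞) φ) (hc : HasCompactSupport φ)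
    (hvol : volume (Function.support φ) ≤ volume (Metric.ball (0 : EE d) R)) :
    ∃ (V : ℝ → ℝ) (L : NNReal), LipschitzWith L V ∧ (∀ r, R ≤ r → V r = 0) ∧
      (∀ r, R < r → deriv V r = 0) ∧
      Integrable (fun x : EE d => V ‖x‖ ^ 2) ∧
      Integrable (fun x : EE d => ‖x‖ ^ (2 * s) * V ‖x‖ ^ 2) ∧
      Integrable (fun x : EE d => deriv V ‖x‖ ^ 2) ∧
      ∫ x : EE d, V ‖x‖ ^ 2 = ∫ x, φ x ^ 2 ∧
      ∫ x : EE d, ‖x‖ ^ (2 * s) * V ‖x‖ ^ 2 ≤ ∫ x, ‖x‖ ^ (2 * s) * φ x ^ 2 ∧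
      ∫ x : EE d, deriv V ‖x‖ ^ 2 ≤ ∫ x, ‖fderiv ℝ φ x‖ ^ 2 := by
  have hfc : Continuous fun x => |φ x| := hφ.continuous.abs
  have hfs : HasCompactSupport fun x => |φ x| := hc.comp_left (g := fun t => |t|) (by simp)
  have hf0 : ∀ x, 0 ≤ |φ x| := fun x => abs_nonneg _
  obtain ⟨L, hL, hlip⟩ := exists_lip hφ hc
  have hVl : LipschitzWith (Real.toNNReal L) (VV fun x => |φ x|) := VV_lip hd hfc hfs hL hlip
  have hVc := hVl.continuous
  have hsupp : volume {x | 0 < |φ x|} ≤ volume (Metric.ball (0 : EE d) R) := by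
    refine le_trans (measure_mono ?_) hvol
    intro x hx
    have hx' : 0 < |φ x| := hx
    exact abs_pos.1 hx'
  have hV0 : ∀ r, R ≤ r → (VV fun x => |φ x|) r = 0 := fun r hr => VV_zero hd hfc hfs hR.le hsupp hr
  have E1 := VV_lintegral_rpow hd hfc hf0 hfs hVc (p := 2) two_pos
  have E2 := VV_hardy hd hfc hf0 hfs hVc (g := fun r => ENNReal.ofReal ((max r 0) ^ (2 * s))) (by
        intro a b hab
        apply ENNReal.ofReal_le_ofReal
        apply Real.rpow_le_rpow (le_max_right _ _) (max_le_max hab le_rfl) (by positivity))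
  have E3 := VV_energy hd hφ hc
  generalize (VV fun x => |φ x|) = V at *
  have hVd0 : ∀ r, R < r → deriv V r = 0 := by
    intro r hr
    have : V =ᶠ[𝓝 r] fun _ => 0 := by
      filter_upwards [lt_mem_nhds hr] with r' hr' using hV0 r' hr'.le
    rw [this.deriv_eq]; simp
  have hcr := cont_rpow hs
  have I1 : Integrable (fun x : EE d => V ‖x‖ ^ 2) :=
    radial_integrable (R := R) (fun r => V r ^ 2) (hVc.pow 2).measurable
      (fun r hr => by simp [hV0 r hr.le]) (bdd_Icc _ (hVc.pow 2))
  have I2 : Integrable (fun x : EE d => ‖x‖ ^ (2 * s) * V ‖x‖ ^ 2) :=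
    radial_integrable (R := R) (fun r => r ^ (2 * s) * V r ^ 2) (hcr.mul (hVc.pow 2)).measurable
      (fun r hr => by simp [hV0 r hr.le]) (bdd_Icc _ (hcr.mul (hVc.pow 2)))
  have I3 : Integrable (fun x : EE d => deriv V ‖x‖ ^ 2) :=
    radial_integrable (R := R) (fun r => deriv V r ^ 2) ((measurable_deriv V).pow_const 2)
      (fun r hr => by simp [hVd0 r hr]) ⟨(Real.toNNReal L : ℝ) ^ 2, fun r _ _ => by
        rw [abs_pow]
        exact pow_le_pow_left₀ (abs_nonneg _) (deriv_bdd hVl r) 2⟩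
  simp only [Real.rpow_two, sq_abs] at E1
  simp only [Real.rpow_two, sq_abs, max_eq_left (norm_nonneg _),
    ← ENNReal.ofReal_mul (Real.rpow_nonneg (norm_nonneg _) (2 * s))] at E2
  refine ⟨V, _, hVl, hV0, hVd0, I1, I2, I3, le_antisymm ?_ ?_, ?_, ?_⟩
  · exact toReal_le I1 (int_sq hφ hc) (fun x => sq_nonneg _) (fun x => sq_nonneg _) E1.le
  · exact toReal_le (int_sq hφ hc) I1 (fun x => sq_nonneg _) (fun x => sq_nonneg _) E1.ge
  · exact toReal_le I2 (int_pot hs hφ hc)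
      (fun x => mul_nonneg (Real.rpow_nonneg (norm_nonneg _) _) (sq_nonneg _))
      (fun x => mul_nonneg (Real.rpow_nonneg (norm_nonneg _) _) (sq_nonneg _)) E2
  · exact toReal_le I3 (int_grad hφ hc) (fun x => sq_nonneg _) (fun x => sq_nonneg _) E3

theorem FK {d : ℕ} (hd : 1 ≤ d) {s ν μ R C : ℝ} (hs : 0 < s) (hν : 0 ≤ ν) (hR : 0 < R)
    {Z q' : ℝ → ℝ}
    (hZ : ContinuousOn Z (Icc 0 R)) (hZ0 : Z 0 = 0)
    (hq : ∀ r ∈ Ioo 0 R, HasDerivAt (fun r => r ^ (d - 1) * Z r) (q' r) r)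
    (hC : ∀ r ∈ Ioo 0 R, |q' r| ≤ C)
    (hle : ∀ r ∈ Ioo 0 R, r ^ (d - 1) * (μ + Z r ^ 2 - ν * r ^ (2 * s)) ≤ q' r)
    {φ : EE d → ℝ} (hφ : ContDiff ℝ (⊤ : ℕ∞) φ) (hc : HasCompactSupport φ)
    (hvol : volume (Function.support φ) ≤ volume (Metric.ball (0 : EE d) R)) :
    μ * ∫ x, φ x ^ 2 ≤ (∫ x, ‖fderiv ℝ φ x‖ ^ 2) + ν * ∫ x, ‖x‖ ^ (2 * s) * φ x ^ 2 := by
  obtain ⟨V, L, hVl, hV0, hVd0, I1, I2, I3, E1, E2, E3⟩ := symm_facts hd hs hR hφ hc hvol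
  have lb := field_lb hs hR hZ hZ0 hq hC hle hVl (hV0 R le_rfl)
  have P := polar_ball hd (fun r => deriv V r ^ 2 + ν * r ^ (2 * s) * V r ^ 2 - μ * V r ^ 2) hR.le
    (fun r hr => by simp [hV0 r hr.le, hVd0 r hr])
  have hcc := cc_pos d
  have P0 : 0 ≤ ∫ x : EE d, (deriv V ‖x‖ ^ 2 + ν * ‖x‖ ^ (2 * s) * V ‖x‖ ^ 2 - μ * V ‖x‖ ^ 2) := by
    rw [P]; exact mul_nonneg (by positivity) lb
  have P1 : ∫ x : EE d, (deriv V ‖x‖ ^ 2 + ν * ‖x‖ ^ (2 * s) * V ‖x‖ ^ 2 - μ * V ‖x‖ ^ 2) =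
      (∫ x : EE d, deriv V ‖x‖ ^ 2) + ν * (∫ x : EE d, ‖x‖ ^ (2 * s) * V ‖x‖ ^ 2)
        - μ * ∫ x : EE d, V ‖x‖ ^ 2 := by
    simp only [mul_assoc]
    have e1 := integral_sub (I3.add (I2.const_mul ν)) (I1.const_mul μ)
    have e2 := integral_add I3 (I2.const_mul ν)
    simp only [Pi.add_apply] at e1
    rw [e1, e2, integral_const_mul, integral_const_mul]
  rw [P1, E1] at P0
  have := mul_le_mul_of_nonneg_left E2 hν
  linarith

end Field
end Gru


namespace Gru
open scoped ENNReal Topology Pointwise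

section ODE

/-- Picard iterates -/
noncomputable def ser (n : ℕ) (s ν : ℝ) : ℕ → ℝ → ℝ → ℝ
  | 0 => fun _ _ => 1
  | k + 1 => fun μ r => ∫ t in (0:ℝ)..r, t * ∫ θ in (0:ℝ)..1,
      θ ^ n * (ν * (t * θ) ^ (2 * s) - μ) * ser n s ν k μ (t * θ)

theorem par_cont {F : ℝ → ℝ → ℝ} (hF : Continuous fun p : ℝ × ℝ => F p.1 p.2) (n : ℕ) {s : ℝ} (hs : 0 < s)
    (ν : ℝ) : Continuous fun p : ℝ × ℝ => ∫ θ in (0:ℝ)..1,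
      θ ^ n * (ν * (p.2 * θ) ^ (2 * s) - p.1) * F p.1 (p.2 * θ) := by
  have hcr := cont_rpow hs
  refine intervalIntegral.continuous_parametric_intervalIntegral_of_continuous'
    (f := fun (p : ℝ × ℝ) θ => θ ^ n * (ν * (p.2 * θ) ^ (2 * s) - p.1) * F p.1 (p.2 * θ)) ?_ 0 1
  have h1 : Continuous fun q : (ℝ × ℝ) × ℝ => (q.1.2 * q.2) ^ (2 * s) :=
    hcr.comp (by fun_prop)
  have h2 : Continuous fun q : (ℝ × ℝ) × ℝ => F q.1.1 (q.1.2 * q.2) :=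
    hF.comp (by fun_prop : Continuous fun q : (ℝ × ℝ) × ℝ => (q.1.1, q.1.2 * q.2))
  simp only [Function.uncurry_def]
  fun_prop

theorem out_cont {G : ℝ → ℝ → ℝ} (hG : Continuous fun p : ℝ × ℝ => G p.1 p.2) :
    Continuous fun p : ℝ × ℝ => ∫ t in (0:ℝ)..p.2, t * G p.1 t := by
  refine intervalIntegral.continuous_parametric_intervalIntegral_of_continuous
    (f := fun (p : ℝ × ℝ) t => t * G p.1 t) ?_ continuous_snd
  have h2 : Continuous fun q : (ℝ × ℝ) × ℝ => G q.1.1 q.2 :=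
    hG.comp (by fun_prop : Continuous fun q : (ℝ × ℝ) × ℝ => (q.1.1, q.2))
  simp only [Function.uncurry_def]
  fun_prop

theorem ser_cont (n : ℕ) {s : ℝ} (hs : 0 < s) (ν : ℝ) (k : ℕ) :
    Continuous fun p : ℝ × ℝ => ser n s ν k p.1 p.2 := by
  induction k with
  | zero => exact continuous_const
  | succ k ih => exact out_cont (G := fun μ r => ∫ θ in (0:ℝ)..1,
      θ ^ n * (ν * (r * θ) ^ (2 * s) - μ) * ser n s ν k μ (r * θ)) (par_cont ih n hs ν)

theorem pot_bd {n : ℕ} {s : ℝ} (hs : 0 < s) {ν A B μ t θ : ℝ} (hμ : |μ| ≤ A) (ht : 0 ≤ t) (hB : t ≤ B)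
    (hθ : θ ∈ Ioc (0:ℝ) 1) : |θ ^ n * (ν * (t * θ) ^ (2 * s) - μ)| ≤ |ν| * B ^ (2 * s) + A := by
  have h1 : |θ ^ n| ≤ 1 := by
    rw [abs_of_nonneg (pow_nonneg hθ.1.le n)]
    exact pow_le_one₀ hθ.1.le hθ.2
  have h2 : t * θ ≤ B := by nlinarith [hθ.1, hθ.2]
  have h3 : (t * θ) ^ (2 * s) ≤ B ^ (2 * s) :=
    Real.rpow_le_rpow (mul_nonneg ht hθ.1.le) h2 (by positivity)
  have h4 : 0 ≤ (t * θ) ^ (2 * s) := Real.rpow_nonneg (mul_nonneg ht hθ.1.le) _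
  have h5 : |ν * (t * θ) ^ (2 * s) - μ| ≤ |ν| * B ^ (2 * s) + A := by
    refine (abs_sub _ _).trans ?_
    rw [abs_mul, abs_of_nonneg h4]
    gcongr
  rw [abs_mul]
  calc _ ≤ 1 * (|ν| * B ^ (2 * s) + A) := by gcongr
    _ = _ := one_mul _

theorem ser_bd (n : ℕ) {s : ℝ} (hs : 0 < s) (ν : ℝ) {A B : ℝ} (hA : 0 ≤ A) (hB : 0 ≤ B) (k : ℕ) :
    ∀ μ r, |μ| ≤ A → 0 ≤ r → r ≤ B →
      |ser n s ν k μ r| ≤ ((|ν| * B ^ (2 * s) + A) * r ^ 2) ^ k / k.factorial := by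
  set P := |ν| * B ^ (2 * s) + A with hP
  have hP0 : 0 ≤ P := by positivity
  induction k with
  | zero => intro μ r _ _ _; simp [ser]
  | succ k ih =>
    intro μ r hμ hr hrB
    have inner : ∀ t, 0 ≤ t → t ≤ B → |∫ θ in (0:ℝ)..1,
      θ ^ n * (ν * (t * θ) ^ (2 * s) - μ) * ser n s ν k μ (t * θ)| ≤ P * ((P * t ^ 2) ^ k / k.factorial) := by
      intro t ht htB
      have := intervalIntegral.norm_integral_le_of_norm_le_const (a := 0) (b := 1)
        (C := P * ((P * t ^ 2) ^ k / k.factorial)) (f := fun θ =>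
          θ ^ n * (ν * (t * θ) ^ (2 * s) - μ) * ser n s ν k μ (t * θ)) (by
          intro θ hθ
          rw [uIoc_of_le zero_le_one] at hθ
          rw [norm_mul, Real.norm_eq_abs, Real.norm_eq_abs]
          refine mul_le_mul (pot_bd hs hμ ht htB hθ) ?_ (abs_nonneg _) hP0
          have h2 : t * θ ≤ t := by nlinarith [hθ.1, hθ.2]
          refine (ih μ (t * θ) hμ (mul_nonneg ht hθ.1.le) (h2.trans htB)).trans ?_
          have := mul_nonneg ht hθ.1.le
          gcongr)
      simpa using this
    have := intervalIntegral.norm_integral_le_of_norm_le (a := 0) (b := r) (μ := volume) (f := fun t =>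
        t * ∫ θ in (0:ℝ)..1, θ ^ n * (ν * (t * θ) ^ (2 * s) - μ) * ser n s ν k μ (t * θ))
        (g := fun t => P ^ (k + 1) / k.factorial * t ^ (2 * k + 1)) hr
        (ae_of_all _ fun t ht => by
          rw [norm_mul, Real.norm_eq_abs, Real.norm_eq_abs, abs_of_pos ht.1]
          calc _ ≤ t * (P * ((P * t ^ 2) ^ k / k.factorial)) :=
                mul_le_mul_of_nonneg_left (inner t ht.1.le (ht.2.trans hrB)) ht.1.le
            _ = _ := by rw [mul_pow]; ring)
        (Continuous.intervalIntegrable (by fun_prop) _ _)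
    rw [intervalIntegral.integral_const_mul, integral_pow] at this
    rw [Real.norm_eq_abs] at this
    refine le_trans this ?_
    have hf : (0:ℝ) < k.factorial := by positivity
    rw [Nat.factorial_succ, mul_pow, ← pow_mul]
    push_cast
    have e : (2 * (k + 1)) = 2 * k + 1 + 1 := by ring
    rw [e, zero_pow (by omega), sub_zero, div_mul_div_comm]
    have hk : (0:ℝ) ≤ (k:ℝ) := by positivity
    have hk2 : ((k:ℝ) + 1) * k.factorial ≤ k.factorial * (2 * k + 1 + 1) := by
      nlinarith [mul_nonneg hk hf.le]
    have hn : 0 ≤ P ^ (k + 1) * r ^ (2 * k + 1 + 1) := by positivity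
    exact div_le_div_of_nonneg_left hn (by positivity) hk2

theorem sum_exp (x : ℝ) : Summable fun k : ℕ => x ^ k / (k.factorial : ℝ) := Real.summable_pow_div_factorial x

theorem ser_bd' (n : ℕ) {s : ℝ} (hs : 0 < s) (ν : ℝ) {A B : ℝ} (hA : 0 ≤ A) (hB : 0 ≤ B) (k : ℕ)
    (μ r : ℝ) (hμ : |μ| ≤ A) (hr : 0 ≤ r) (hrB : r ≤ B) :
      |ser n s ν k μ r| ≤ ((|ν| * B ^ (2 * s) + A) * B ^ 2) ^ k / k.factorial := by
  refine (ser_bd n hs ν hA hB k μ r hμ hr hrB).trans ?_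
  gcongr

/-- sum of the Picard series -/
noncomputable def WW (n : ℕ) (s ν μ r : ℝ) : ℝ := ∑' k, ser n s ν k μ |r|

noncomputable def GG (n : ℕ) (s ν μ r : ℝ) : ℝ :=
  ∫ θ in (0:ℝ)..1, θ ^ n * (ν * (r * θ) ^ (2 * s) - μ) * WW n s ν μ (r * θ)

noncomputable def wsol (n : ℕ) (s ν μ r : ℝ) : ℝ := 1 + ∫ t in (0:ℝ)..r, t * GG n s ν μ t

theorem WW_cont (n : ℕ) {s : ℝ} (hs : 0 < s) (ν : ℝ) :
    Continuous fun p : ℝ × ℝ => WW n s ν p.1 p.2 := by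
  rw [continuous_iff_continuousAt]
  rintro ⟨μ, r⟩
  set S : Set (ℝ × ℝ) := {p | |p.1| < |μ| + 1 ∧ |p.2| < |r| + 1}
  have hS : IsOpen S := by
    have h1 : IsOpen {p : ℝ × ℝ | |p.1| < |μ| + 1} := isOpen_lt (by fun_prop) (by fun_prop)
    have h2 : IsOpen {p : ℝ × ℝ | |p.2| < |r| + 1} := isOpen_lt (by fun_prop) (by fun_prop)
    exact h1.inter h2
  have hm : (μ, r) ∈ S := ⟨lt_add_one _, lt_add_one _⟩
  refine ContinuousOn.continuousAt ?_ (hS.mem_nhds hm)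
  refine continuousOn_tsum (u := fun k : ℕ =>
    ((|ν| * (|r| + 1) ^ (2 * s) + (|μ| + 1)) * (|r| + 1) ^ 2) ^ k / k.factorial) ?_ (sum_exp _) ?_
  · intro k
    exact ((ser_cont n hs ν k).comp (by fun_prop : Continuous fun p : ℝ × ℝ => (p.1, |p.2|))).continuousOn
  · intro k p hp
    exact ser_bd' n hs ν (by positivity) (by positivity) k _ _ hp.1.le (abs_nonneg _) hp.2.le

theorem WW_hasSum (n : ℕ) {s : ℝ} (hs : 0 < s) (ν μ : ℝ) {r : ℝ} (hr : 0 ≤ r) :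
    HasSum (fun k => ser n s ν k μ r) (WW n s ν μ r) := by
  rw [WW, abs_of_nonneg hr]
  apply Summable.hasSum
  refine Summable.of_norm_bounded (sum_exp ((|ν| * r ^ (2 * s) + |μ|) * r ^ 2)) fun k => ?_
  exact ser_bd' n hs ν (abs_nonneg _) hr k _ _ le_rfl hr le_rfl

theorem GG_cont (n : ℕ) {s : ℝ} (hs : 0 < s) (ν : ℝ) :
    Continuous fun p : ℝ × ℝ => GG n s ν p.1 p.2 :=
  par_cont (F := WW n s ν) (WW_cont n hs ν) n hs ν

theorem wsol_cont (n : ℕ) {s : ℝ} (hs : 0 < s) (ν : ℝ) :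
    Continuous fun p : ℝ × ℝ => wsol n s ν p.1 p.2 :=
  continuous_const.add (out_cont (G := GG n s ν) (GG_cont n hs ν))

theorem GG_hasSum (n : ℕ) {s : ℝ} (hs : 0 < s) (ν μ : ℝ) {r : ℝ} (hr : 0 ≤ r) :
    HasSum (fun k => ∫ θ in (0:ℝ)..1,
      θ ^ n * (ν * (r * θ) ^ (2 * s) - μ) * ser n s ν k μ (r * θ)) (GG n s ν μ r) := by
  have hcr := cont_rpow hs
  set P := |ν| * r ^ (2 * s) + |μ|
  have hP0 : 0 ≤ P := by positivity
  refine intervalIntegral.hasSum_integral_of_dominated_convergence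
    (fun k _ => P * ((P * r ^ 2) ^ k / k.factorial)) ?_ ?_ ?_ ?_ ?_
  · intro k
    have h2 : Continuous fun θ : ℝ => ser n s ν k μ (r * θ) :=
      (ser_cont n hs ν k).comp (by fun_prop : Continuous fun θ : ℝ => (μ, r * θ))
    have h3 : Continuous fun θ : ℝ => (r * θ) ^ (2 * s) := hcr.comp (by fun_prop)
    exact Continuous.aestronglyMeasurable (by fun_prop)
  · intro k
    refine ae_of_all _ fun θ hθ => ?_
    rw [uIoc_of_le zero_le_one] at hθ
    rw [norm_mul, Real.norm_eq_abs, Real.norm_eq_abs]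
    have h2 : r * θ ≤ r := by nlinarith [hθ.1, hθ.2]
    exact mul_le_mul (pot_bd hs le_rfl hr le_rfl hθ)
      (ser_bd' n hs ν (abs_nonneg _) hr k _ _ le_rfl (mul_nonneg hr hθ.1.le) h2) (abs_nonneg _) hP0
  · exact ae_of_all _ fun θ _ => (sum_exp _).mul_left _
  · exact intervalIntegrable_const
  · refine ae_of_all _ fun θ hθ => ?_
    rw [uIoc_of_le zero_le_one] at hθ
    exact (WW_hasSum n hs ν μ (mul_nonneg hr hθ.1.le)).mul_left _

theorem wsol_eq (n : ℕ) {s : ℝ} (hs : 0 < s) (ν μ : ℝ) {r : ℝ} (hr : 0 ≤ r) :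
    wsol n s ν μ r = WW n s ν μ r := by
  set P := |ν| * r ^ (2 * s) + |μ|
  have hP0 : 0 ≤ P := by positivity
  have h1 : HasSum (fun k => ser n s ν (k + 1) μ r) (∫ t in (0:ℝ)..r, t * GG n s ν μ t) := by
    refine intervalIntegral.hasSum_integral_of_dominated_convergence
      (fun k _ => r * (P * ((P * r ^ 2) ^ k / k.factorial))) ?_ ?_ ?_ ?_ ?_
    · intro k
      have h3 := (par_cont (ser_cont n hs ν k) n hs ν).comp
        (by fun_prop : Continuous fun t : ℝ => (μ, t))
      exact (continuous_id.mul h3).aestronglyMeasurable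
    · intro k
      refine ae_of_all _ fun t ht => ?_
      rw [uIoc_of_le hr] at ht
      rw [norm_mul, Real.norm_eq_abs, abs_of_pos ht.1]
      refine mul_le_mul ht.2 ?_ (norm_nonneg _) hr
      have := intervalIntegral.norm_integral_le_of_norm_le_const (a := 0) (b := 1)
        (C := P * ((P * r ^ 2) ^ k / k.factorial)) (f := fun θ =>
          θ ^ n * (ν * (t * θ) ^ (2 * s) - μ) * ser n s ν k μ (t * θ)) (by
          intro θ hθ
          rw [uIoc_of_le zero_le_one] at hθ
          rw [norm_mul, Real.norm_eq_abs, Real.norm_eq_abs]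
          refine mul_le_mul (pot_bd hs le_rfl ht.1.le ht.2 hθ) ?_ (abs_nonneg _) hP0
          have h2 : t * θ ≤ r := by nlinarith [hθ.1, hθ.2, ht.1, ht.2]
          exact ser_bd' n hs ν (abs_nonneg _) hr k _ _ le_rfl (mul_nonneg ht.1.le hθ.1.le) h2)
      simpa using this
    · exact ae_of_all _ fun θ _ => ((sum_exp _).mul_left _).mul_left _
    · exact intervalIntegrable_const
    · refine ae_of_all _ fun t ht => ?_
      rw [uIoc_of_le hr] at ht
      exact (GG_hasSum n hs ν μ ht.1.le).mul_left _
  have h2 := (hasSum_nat_add_iff' 1).2 (WW_hasSum n hs ν μ hr)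
  have h3 := h1.unique h2
  simp only [Finset.range_one, Finset.sum_singleton, ser] at h3
  rw [wsol, h3]; ring

/-- Radial solutions of `-Δ w + ν |r|^(2 * s) w = μ w`. -/
structure IsSol (d : ℕ) (s ν μ : ℝ) (w g : ℝ → ℝ) : Prop where
  w0 : w 0 = 1
  gc : Continuous g
  hw : ∀ r, HasDerivAt w (r * g r) r
  hg : ∀ r, 0 < r → HasDerivAt (fun r => r ^ d * g r) (r ^ (d - 1) * (ν * r ^ (2 * s) - μ) * w r) r

theorem isSol_wsol {d : ℕ} (hd : 1 ≤ d) {s : ℝ} (hs : 0 < s) (ν μ : ℝ) :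
    IsSol d s ν μ (wsol (d - 1) s ν μ) (GG (d - 1) s ν μ) where
  w0 := by simp [wsol]
  gc := (GG_cont _ hs ν).comp (by fun_prop : Continuous fun t : ℝ => (μ, t))
  hw := by
    intro r
    have gc : Continuous (GG (d - 1) s ν μ) :=
      (GG_cont _ hs ν).comp (by fun_prop : Continuous fun t : ℝ => (μ, t))
    have : Continuous fun t => t * GG (d - 1) s ν μ t := continuous_id.mul gc
    exact (this.integral_hasStrictDerivAt 0 r).hasDerivAt.const_add 1
  hg := by
    intro r hr
    have hcr := cont_rpow hs
    have Wc : Continuous (WW (d - 1) s ν μ) :=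
      (WW_cont _ hs ν).comp (by fun_prop : Continuous fun t : ℝ => (μ, t))
    have e : (fun r => r ^ d * GG (d - 1) s ν μ r) = fun r => ∫ t in (0:ℝ)..r,
        t ^ (d - 1) * (ν * t ^ (2 * s) - μ) * WW (d - 1) s ν μ t := by
      ext r
      have h1 := intervalIntegral.smul_integral_comp_mul_left (a := 0) (b := 1)
        (f := fun t => t ^ (d - 1) * (ν * t ^ (2 * s) - μ) * WW (d - 1) s ν μ t) r
      rw [mul_zero, mul_one] at h1
      rw [← h1, smul_eq_mul, GG]
      have h2 : r ^ d = r * r ^ (d - 1) := by rw [← pow_succ']; congr 1; omega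
      rw [h2, mul_assoc, ← intervalIntegral.integral_const_mul]
      congr 1
      apply intervalIntegral.integral_congr
      intro θ _
      simp only
      rw [mul_pow]; ring
    rw [e, wsol_eq _ hs ν μ hr.le]
    have : Continuous fun t => t ^ (d - 1) * (ν * t ^ (2 * s) - μ) * WW (d - 1) s ν μ t := by fun_prop
    exact (this.integral_hasStrictDerivAt 0 r).hasDerivAt

end ODE
end Gru


namespace Gru
open scoped ENNReal Topology Pointwise

section Sol
variable {d : ℕ} {s : ℝ}

theorem IsSol.wc {ν μ : ℝ} {w g : ℝ → ℝ} (h : IsSol d s ν μ w g) : Continuous w :=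
  continuous_iff_continuousAt.2 fun r => (h.hw r).continuousAt

theorem IsSol.scale {ν μ : ℝ} {w g : ℝ → ℝ} (h : IsSol d s ν μ w g) (hd : 1 ≤ d) {c : ℝ} (hc : 0 < c) :
    IsSol d s (ν * c ^ (2 + 2 * s)) (μ * c ^ 2) (fun r => w (c * r)) (fun r => c ^ 2 * g (c * r)) where
  w0 := by simp [h.w0]
  gc := by have := h.gc; fun_prop
  hw := by
    intro r
    have h1 : HasDerivAt (fun r => c * r) c r := by simpa using (hasDerivAt_id r).const_mul c
    have := (h.hw (c * r)).comp r h1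
    refine this.congr_deriv ?_
    ring
  hg := by
    intro r hr
    have h1 : HasDerivAt (fun r => c * r) c r := by simpa using (hasDerivAt_id r).const_mul c
    have := ((h.hg (c * r) (by positivity)).comp r h1).const_mul (c ^ 2 * (c ^ d)⁻¹)
    have e : (fun r => r ^ d * (c ^ 2 * g (c * r))) = fun r => c ^ 2 * (c ^ d)⁻¹ *
        ((fun r => r ^ d * g r) ∘ fun r => c * r) r := by
      ext r
      simp only [Function.comp]
      rw [mul_pow]
      field_simp
    rw [e]
    refine this.congr_deriv ?_
    have h2 : c ^ d = c * c ^ (d - 1) := by rw [← pow_succ']; congr 1; omega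
    have h3 : c ^ (2 + 2 * s) = c ^ 2 * c ^ (2 * s) := by
      rw [Real.rpow_add hc]; norm_num
    rw [h2, h3, mul_pow, Real.mul_rpow hc.le hr.le]
    field_simp

theorem sol_LB0 (hd : 1 ≤ d) (hs : 0 < s) {ν μ R : ℝ} (hν : 0 ≤ ν) (hR : 0 < R) {w g : ℝ → ℝ}
    (h : IsSol d s ν μ w g) (hw : ∀ r ∈ Icc 0 R, 0 < w r) {φ : EE d → ℝ}
    (hφ : ContDiff ℝ (⊤ : ℕ∞) φ) (hc : HasCompactSupport φ)
    (hvol : volume (Function.support φ) ≤ volume (Metric.ball (0 : EE d) R)) :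
    μ * ∫ x, φ x ^ 2 ≤ (∫ x, ‖fderiv ℝ φ x‖ ^ 2) + ν * ∫ x, ‖x‖ ^ (2 * s) * φ x ^ 2 := by
  have hcr := cont_rpow hs
  have wc := h.wc
  have gc := h.gc
  have hd1 : ∀ r : ℝ, r ^ d = r ^ (d - 1) * r := by
    intro r; rw [← pow_succ]; congr 1; omega
  have Zc : ContinuousOn (fun r => -(r * g r) / w r) (Icc 0 R) :=
    ContinuousOn.div (by fun_prop) wc.continuousOn fun r hr => (hw r hr).ne'
  set q' : ℝ → ℝ := fun r => r ^ (d - 1) * (μ + (-(r * g r) / w r) ^ 2 - ν * r ^ (2 * s)) with hq'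
  have q'c : ContinuousOn q' (Icc 0 R) := by
    refine ContinuousOn.mul (by fun_prop) (ContinuousOn.sub ?_ (by fun_prop))
    exact continuousOn_const.add (Zc.pow 2)
  obtain ⟨C, hC⟩ := isCompact_Icc.exists_bound_of_continuousOn q'c
  refine FK hd hs hν hR (Z := fun r => -(r * g r) / w r) (q' := q') (C := C) Zc (by simp) ?_ ?_ ?_ hφ hc hvol
  · intro r hr
    have hw0 := (hw r ⟨hr.1.le, hr.2.le⟩)
    have e : (fun r => r ^ (d - 1) * (-(r * g r) / w r)) = fun r => -((fun r => r ^ d * g r) r / w r) := by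
      ext r; simp only [hd1 r]; ring
    rw [e]
    refine ((h.hg r hr.1).div (h.hw r) hw0.ne').neg.congr_deriv ?_
    simp only [hq', hd1 r]
    field_simp
    ring
  · intro r hr
    exact hC r ⟨hr.1.le, hr.2.le⟩
  · intro r hr
    exact le_rfl

theorem sol_LB (hd : 1 ≤ d) (hs : 0 < s) {ν μ R : ℝ} (hν : 0 ≤ ν) (hR : 0 < R) {w g : ℝ → ℝ}
    (h : IsSol d s ν μ w g) (hw : ∀ r, 0 ≤ r → r < R → 0 < w r) {φ : EE d → ℝ}
    (hφ : ContDiff ℝ (⊤ : ℕ∞) φ) (hc : HasCompactSupport φ)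
    (hvol : volume (Function.support φ) ≤ volume (Metric.ball (0 : EE d) R)) :
    μ * ∫ x, φ x ^ 2 ≤ (∫ x, ‖fderiv ℝ φ x‖ ^ 2) + ν * ∫ x, ‖x‖ ^ (2 * s) * φ x ^ 2 := by
  have key : ∀ c ∈ Ioo (0:ℝ) 1, (μ * c ^ 2) * ∫ x, φ x ^ 2 ≤ (∫ x, ‖fderiv ℝ φ x‖ ^ 2) +
      (ν * c ^ (2 + 2 * s)) * ∫ x, ‖x‖ ^ (2 * s) * φ x ^ 2 := by
    intro c hc1
    have := Real.rpow_nonneg hc1.1.le (2 + 2 * s)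
    refine sol_LB0 hd hs (by positivity) hR (h.scale hd hc1.1) ?_ hφ hc hvol
    intro r hr
    apply hw
    · exact mul_nonneg hc1.1.le hr.1
    · nlinarith [hc1.1, hc1.2, hr.1, hr.2]
  have hev : ∀ᶠ c in 𝓝[<] (1:ℝ), (μ * c ^ 2) * ∫ x, φ x ^ 2 ≤ (∫ x, ‖fderiv ℝ φ x‖ ^ 2) +
      (ν * c ^ (2 + 2 * s)) * ∫ x, ‖x‖ ^ (2 * s) * φ x ^ 2 := by
    filter_upwards [Ioo_mem_nhdsLT (zero_lt_one (α := ℝ))] with c hc1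
    exact key c hc1
  have cr : Continuous fun c : ℝ => c ^ (2 + 2 * s) := Real.continuous_rpow_const (by positivity)
  have t1 : Tendsto (fun c : ℝ => (μ * c ^ 2) * ∫ x, φ x ^ 2) (𝓝[<] 1) (𝓝 (μ * ∫ x, φ x ^ 2)) := by
    have : Continuous fun c : ℝ => (μ * c ^ 2) * ∫ x, φ x ^ 2 := by fun_prop
    have := (this.tendsto 1).mono_left (nhdsWithin_le_nhds (s := Iio 1))
    simpa using this
  have t2 : Tendsto (fun c : ℝ => (∫ x, ‖fderiv ℝ φ x‖ ^ 2) +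
      (ν * c ^ (2 + 2 * s)) * ∫ x, ‖x‖ ^ (2 * s) * φ x ^ 2) (𝓝[<] 1)
      (𝓝 ((∫ x, ‖fderiv ℝ φ x‖ ^ 2) + ν * ∫ x, ‖x‖ ^ (2 * s) * φ x ^ 2)) := by
    have : Continuous fun c : ℝ => (∫ x, ‖fderiv ℝ φ x‖ ^ 2) +
      (ν * c ^ (2 + 2 * s)) * ∫ x, ‖x‖ ^ (2 * s) * φ x ^ 2 := by fun_prop
    have := (this.tendsto 1).mono_left (nhdsWithin_le_nhds (s := Iio 1))
    simpa using this
  exact le_of_tendsto_of_tendsto t1 t2 hev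

theorem wronskian (hd : 1 ≤ d) (hs : 0 < s) {ν μ ν' μ' : ℝ} {w g u h : ℝ → ℝ}
    (hw : IsSol d s ν μ w g) (hu : IsSol d s ν' μ' u h) {r : ℝ} (hr : 0 ≤ r) :
    r ^ d * (h r * w r - u r * g r) =
      ∫ t in (0:ℝ)..r, t ^ (d - 1) * ((ν' - ν) * t ^ (2 * s) - (μ' - μ)) * (u t * w t) := by
  have hcr := cont_rpow hs
  have wc := hw.wc
  have gc := hw.gc
  have uc := hu.wc
  have hc := hu.gc
  have := intervalIntegral.integral_eq_sub_of_hasDerivAt_of_le (a := 0) (b := r) hr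
    (f := fun r => r ^ d * (h r * w r - u r * g r))
    (f' := fun t => t ^ (d - 1) * ((ν' - ν) * t ^ (2 * s) - (μ' - μ)) * (u t * w t))
    (by fun_prop) (by
      intro t ht
      have e : (fun r => r ^ d * (h r * w r - u r * g r)) = fun r =>
        ((fun r => r ^ d * h r) r * w r - u r * (fun r => r ^ d * g r) r) := by
        ext r; simp only; ring
      rw [e]
      refine (((hu.hg t ht.1).mul (hw.hw t)).sub ((hu.hw t).mul (hw.hg t ht.1))).congr_deriv ?_
      ring)
    (Continuous.intervalIntegrable (by fun_prop) _ _)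
  rw [this, zero_pow (by omega)]
  ring

theorem ser_nonneg (n : ℕ) {ν μ : ℝ} (hν : 0 ≤ ν) (hμ : μ ≤ 0) (k : ℕ) :
    ∀ r, 0 ≤ r → 0 ≤ ser n s ν k μ r := by
  induction k with
  | zero => intro r _; simp [ser]
  | succ k ih =>
    intro r hr
    refine intervalIntegral.integral_nonneg hr fun t ht => mul_nonneg ht.1 ?_
    refine intervalIntegral.integral_nonneg zero_le_one fun θ hθ => ?_
    have h1 : 0 ≤ t * θ := mul_nonneg ht.1 hθ.1
    have h2 := Real.rpow_nonneg h1 (2 * s)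
    have h3 := ih _ h1
    have h4 : 0 ≤ ν * (t * θ) ^ (2 * s) - μ := by nlinarith [mul_nonneg hν h2]
    have := pow_nonneg hθ.1 n
    positivity

theorem wsol_ge_one (n : ℕ) (hs : 0 < s) {ν μ : ℝ} (hν : 0 ≤ ν) (hμ : μ ≤ 0) {r : ℝ} (hr : 0 ≤ r) :
    1 ≤ wsol n s ν μ r := by
  rw [wsol_eq n hs ν μ hr]
  have h := WW_hasSum n hs ν μ hr
  have := le_hasSum h 0 fun k _ => ser_nonneg n hν hμ k r hr
  simpa [ser] using this

/-- at a first zero the derivative is negative -/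
theorem g_neg (hd : 1 ≤ d) (hs : 0 < s) {ν μ R : ℝ} (hν : 0 ≤ ν) (hR : 0 < R) {w g : ℝ → ℝ}
    (h : IsSol d s ν μ w g) (hw : ∀ r, 0 ≤ r → r < R → 0 < w r) (hwR : w R = 0) : g R < 0 := by
  set μ' := min 0 (μ - 1)
  have hμ' : μ' ≤ 0 := min_le_left _ _
  have hμ2 : μ' ≤ μ - 1 := min_le_right _ _
  have hu := isSol_wsol hd hs ν μ'
  have W := wronskian hd hs h hu hR.le
  have wc := h.wc
  have uc := hu.wc
  have hcr := cont_rpow hs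
  have pos : 0 < ∫ t in (0:ℝ)..R, t ^ (d - 1) * ((ν - ν) * t ^ (2 * s) - (μ' - μ)) *
      (wsol (d - 1) s ν μ' t * w t) := by
    refine intervalIntegral.intervalIntegral_pos_of_pos_on
      (Continuous.intervalIntegrable (by fun_prop) _ _) ?_ hR
    intro t ht
    have h1 := hw t ht.1.le ht.2
    have h2 := wsol_ge_one (d - 1) hs hν hμ' ht.1.le
    have h3 : 0 < t ^ (d - 1) := pow_pos ht.1 _
    have h4 : 0 < (ν - ν) * t ^ (2 * s) - (μ' - μ) := by
      rw [sub_self, zero_mul]; linarith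
    have : 0 < wsol (d - 1) s ν μ' t := by linarith
    positivity
  rw [← W, hwR] at pos
  have h2 := wsol_ge_one (d - 1) hs hν hμ' hR.le
  have h3 : 0 < R ^ d := pow_pos hR _
  by_contra hcon
  push Not at hcon
  have : 0 ≤ R ^ d * (wsol (d - 1) s ν μ' R * g R) := by positivity
  nlinarith

end Sol
end Gru


namespace Gru
open scoped ENNReal Topology Pointwise

section Test
variable {d : ℕ} {s : ℝ}

/-- `μ` is a lower bound of the Rayleigh quotients on `Ω`. -/
def LB (d : ℕ) (s ν : ℝ) (Ω : Set (EE d)) (μ : ℝ) : Prop :=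
  ∀ φ : EE d → ℝ, ContDiff ℝ (⊤ : ℕ∞) φ → HasCompactSupport φ → tsupport φ ⊆ Ω →
    μ * ∫ x, φ x ^ 2 ≤ (∫ x, ‖fderiv ℝ φ x‖ ^ 2) + ν * ∫ x, ‖x‖ ^ (2 * s) * φ x ^ 2

theorem LB.mono {ν μ : ℝ} {Ω Ω' : Set (EE d)} (h : LB d s ν Ω μ) (hΩ : Ω' ⊆ Ω) : LB d s ν Ω' μ :=
  fun φ h1 h2 h3 => h φ h1 h2 (h3.trans hΩ)

theorem prim_smooth {p : ℝ → ℝ} (hp : ContDiff ℝ (⊤ : ℕ∞) p) (b : ℝ) :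
    ContDiff ℝ (⊤ : ℕ∞) (fun t => ∫ τ in b..t, p τ) ∧ ∀ t, HasDerivAt (fun t => ∫ τ in b..t, p τ) (p t) t := by
  have h1 : ∀ t, HasDerivAt (fun t => ∫ τ in b..t, p τ) (p t) t := fun t =>
    (hp.continuous.integral_hasStrictDerivAt b t).hasDerivAt
  refine ⟨?_, h1⟩
  refine contDiff_infty_iff_deriv.2 ⟨fun t => (h1 t).differentiableAt, ?_⟩
  have : deriv (fun t => ∫ τ in b..t, p τ) = p := by ext t; exact (h1 t).deriv
  rw [this]; exact hp

theorem rad_test (hd : 1 ≤ d) {ν' μ' R a : ℝ} (hR : 0 < R) (ha : 0 ≤ a) (haR : a < R ^ 2)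
    (h : LB d s ν' (Metric.ball 0 R) μ') {p : ℝ → ℝ} (hp : ContDiff ℝ (⊤ : ℕ∞) p)
    (hp0 : ∀ t, a ≤ t → p t = 0) :
    μ' * ∫ r in (0:ℝ)..R, r ^ (d - 1) * (∫ τ in (R ^ 2)..(r ^ 2), p τ) ^ 2 ≤
      (∫ r in (0:ℝ)..R, r ^ (d - 1) * (2 * r * p (r ^ 2)) ^ 2) +
      ν' * ∫ r in (0:ℝ)..R, r ^ (d - 1) * (r ^ (2 * s) * (∫ τ in (R ^ 2)..(r ^ 2), p τ) ^ 2) := by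
  obtain ⟨hs1, hder⟩ := prim_smooth hp (R ^ 2)
  set H : ℝ → ℝ := fun t => ∫ τ in (R ^ 2)..t, p τ with hH
  have hH0 : ∀ t, a ≤ t → H t = 0 := by
    intro t ht
    simp only [hH]
    rw [intervalIntegral.integral_congr (g := fun _ => 0)]
    · simp
    · intro τ hτ
      apply hp0
      rw [uIcc, mem_Icc] at hτ
      exact (le_min haR.le ht).trans hτ.1
  set φ : EE d → ℝ := fun x => H (‖x‖ ^ 2) with hφ
  have φs : ContDiff ℝ (⊤ : ℕ∞) φ := hs1.comp (contDiff_norm_sq ℝ)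
  have supp : tsupport φ ⊆ Metric.closedBall 0 (√a) := by
    refine closure_minimal ?_ Metric.isClosed_closedBall
    intro x hx
    rw [mem_closedBall_zero_iff]
    by_contra hcon
    push Not at hcon
    apply hx
    apply hH0
    exact ((Real.sqrt_lt' ((Real.sqrt_nonneg a).trans_lt hcon)).1 hcon).le
  have sR : √a < R := (Real.sqrt_lt' hR).2 haR
  have φc : HasCompactSupport φ :=
    (isCompact_closedBall (0 : EE d) (√a)).of_isClosed_subset (isClosed_tsupport _) supp
  have main := h φ φs φc (supp.trans (Metric.closedBall_subset_ball sR))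
  have hbig : ∀ r, R < r → a ≤ r ^ 2 := fun r hr => by nlinarith
  have e1 : ∫ x, φ x ^ 2 = d * cc d * ∫ r in (0:ℝ)..R, r ^ (d - 1) * H (r ^ 2) ^ 2 :=
    polar_ball hd (fun r => H (r ^ 2) ^ 2) hR.le (fun r hr => by
      simp [hH0 _ (hbig r hr)])
  have e3 : ∫ x : EE d, ‖x‖ ^ (2 * s) * φ x ^ 2 =
      d * cc d * ∫ r in (0:ℝ)..R, r ^ (d - 1) * (r ^ (2 * s) * H (r ^ 2) ^ 2) :=
    polar_ball hd (fun r => r ^ (2 * s) * H (r ^ 2) ^ 2) hR.le (fun r hr => by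
      simp [hH0 _ (hbig r hr)])
  have e2 : ∫ x, ‖fderiv ℝ φ x‖ ^ 2 = d * cc d * ∫ r in (0:ℝ)..R, r ^ (d - 1) * (2 * r * p (r ^ 2)) ^ 2 := by
    rw [← polar_ball hd (fun r => (2 * r * p (r ^ 2)) ^ 2) hR.le (fun r hr => by
      simp [hp0 _ (hbig r hr)])]
    congr 1
    ext x
    have : HasFDerivAt φ (p (‖x‖ ^ 2) • (2 • innerSL ℝ x)) x :=
      HasDerivAt.comp_hasFDerivAt (f := fun y : EE d => ‖y‖ ^ 2) x (hder (‖x‖ ^ 2)) (hasStrictFDerivAt_norm_sq x).hasFDerivAt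
    rw [this.fderiv, norm_smul, ← Nat.cast_smul_eq_nsmul ℝ, norm_smul, innerSL_apply_norm]
    simp only [Real.norm_eq_abs, mul_pow, sq_abs]
    norm_num
    ring
  rw [e1, e2, e3] at main
  have hpos : 0 < d * cc d := mul_pos (by exact_mod_cast hd) (cc_pos d)
  have : d * cc d * (μ' * ∫ r in (0:ℝ)..R, r ^ (d - 1) * H (r ^ 2) ^ 2) ≤ d * cc d * (
      (∫ r in (0:ℝ)..R, r ^ (d - 1) * (2 * r * p (r ^ 2)) ^ 2) +
      ν' * ∫ r in (0:ℝ)..R, r ^ (d - 1) * (r ^ (2 * s) * H (r ^ 2) ^ 2)) := by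
    linarith
  exact le_of_mul_le_mul_left this hpos

theorem exists_approx {G : ℝ → ℝ} {b : ℝ} (hb : 0 < b) (hG : ContinuousOn G (Icc 0 b)) :
    ∃ (p : ℕ → ℝ → ℝ) (K : ℝ), (∀ n, ContDiff ℝ (⊤ : ℕ∞) (p n)) ∧
      (∀ (n : ℕ) (t : ℝ), b - b / ((n:ℝ) + 2) ≤ t → p n t = 0) ∧ (∀ n, ∀ t ∈ Icc 0 b, |p n t| ≤ K) ∧
      (∀ t ∈ Ico 0 b, Tendsto (fun n => p n t) atTop (𝓝 (G t))) := by
  have h1 : ∀ n : ℕ, ∃ P : Polynomial ℝ, ∀ x ∈ Icc 0 b, |P.eval x - G x| < 1 / ((n:ℝ) + 1) := fun n =>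
    exists_polynomial_near_of_continuousOn 0 b G hG _ (by positivity)
  choose P hP using h1
  obtain ⟨K, hK⟩ := isCompact_Icc.exists_bound_of_continuousOn hG
  refine ⟨fun n t => Real.smoothTransition (((n:ℝ) + 2) * (b - t) / b - 1) * (P n).eval t, K + 1, ?_, ?_, ?_, ?_⟩
  · intro n
    refine ContDiff.mul ?_ (by simpa [Polynomial.coe_aeval_eq_eval] using (P n).contDiff_aeval (𝕜 := ℝ) (⊤ : ℕ∞))
    exact Real.smoothTransition.contDiff.comp (by fun_prop)
  · intro n t ht
    have : ((n:ℝ) + 2) * (b - t) / b - 1 ≤ 0 := by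
      rw [sub_nonpos, div_le_one hb]
      have : b - t ≤ b / (n + 2) := by linarith
      calc ((n:ℝ) + 2) * (b - t) ≤ ((n:ℝ) + 2) * (b / (n + 2)) := by gcongr
        _ = b := by field_simp
    simp only [Real.smoothTransition.zero_of_nonpos this, zero_mul]
  · intro n t ht
    rw [abs_mul, abs_of_nonneg (Real.smoothTransition.nonneg _)]
    have h2 : |(P n).eval t| ≤ K + 1 := by
      have := hP n t ht
      have h3 := hK t ht
      rw [Real.norm_eq_abs] at h3
      have h4 : 1 / ((n:ℝ) + 1) ≤ 1 := by
        rw [div_le_one (by positivity)]; linarith [Nat.cast_nonneg (α := ℝ) n]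
      rw [abs_lt] at this
      rw [abs_le] at *
      constructor <;> linarith
    calc _ ≤ 1 * (K + 1) := mul_le_mul (Real.smoothTransition.le_one _) h2 (abs_nonneg _) zero_le_one
      _ = _ := one_mul _
  · intro t ht
    have hev : ∀ᶠ n : ℕ in atTop, Real.smoothTransition (((n:ℝ) + 2) * (b - t) / b - 1) = 1 := by
      have hbt : 0 < b - t := by linarith [ht.2]
      filter_upwards [tendsto_natCast_atTop_atTop.eventually_ge_atTop (2 * b / (b - t))] with n hn
      apply Real.smoothTransition.one_of_one_le
      rw [div_le_iff₀ hbt] at hn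
      rw [le_sub_iff_add_le, le_div_iff₀ hb]
      nlinarith
    have t2 : Tendsto (fun n => (P n).eval t) atTop (𝓝 (G t)) := by
      rw [tendsto_iff_norm_sub_tendsto_zero]
      refine squeeze_zero (fun _ => norm_nonneg _) (fun n => (hP n t ⟨ht.1, ht.2.le⟩).le) ?_
      exact tendsto_one_div_add_atTop_nhds_zero_nat
    refine t2.congr' ?_
    filter_upwards [hev] with n hn
    rw [hn, one_mul]

theorem sol_prim {ν μ R : ℝ} {w g : ℝ → ℝ} (h : IsSol d s ν μ w g) (hwR : w R = 0) {r : ℝ} (hr : 0 ≤ r) (hrR : r ≤ R) :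
    ∫ τ in (R ^ 2)..(r ^ 2), g (√τ) / 2 = w r := by
  have wc := h.wc
  have gc := h.gc
  have := intervalIntegral.integral_eq_sub_of_hasDerivAt_of_le (a := r ^ 2) (b := R ^ 2) (by gcongr)
    (f := fun t => w (√t)) (f' := fun τ => g (√τ) / 2) (by fun_prop) (by
      intro t ht
      have ht0 : 0 < t := (sq_nonneg r).trans_lt ht.1
      have h2 := (Real.hasDerivAt_sqrt ht0.ne')
      refine ((h.hw (√t)).comp t h2).congr_deriv ?_
      have := Real.sqrt_pos.2 ht0
      field_simp)
    (Continuous.intervalIntegrable (by fun_prop) _ _)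
  rw [intervalIntegral.integral_symm, this, Real.sqrt_sq hr, Real.sqrt_sq (hr.trans hrR), hwR]
  ring

theorem testU0 (hd : 1 ≤ d) (hs : 0 < s) {ν μ ν' μ' R : ℝ} (hR : 0 < R) {w g : ℝ → ℝ}
    (h : IsSol d s ν μ w g) (hwR : w R = 0) (hL : LB d s ν' (Metric.ball 0 R) μ') :
    μ' * ∫ r in (0:ℝ)..R, r ^ (d - 1) * w r ^ 2 ≤
      (∫ r in (0:ℝ)..R, r ^ (d - 1) * (r * g r) ^ 2) +
      ν' * ∫ r in (0:ℝ)..R, r ^ (d - 1) * (r ^ (2 * s) * w r ^ 2) := by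
  have hcr := cont_rpow hs
  have wc := h.wc
  have gc := h.gc
  have hR2 : 0 < R ^ 2 := by positivity
  obtain ⟨p, K, ps, p0, pK, pt⟩ := exists_approx (G := fun t => g (√t) / 2) hR2
    (by fun_prop)
  have pc : ∀ n, Continuous (p n) := fun n => (ps n).continuous
  set H : ℕ → ℝ → ℝ := fun n r => ∫ τ in (R ^ 2)..(r ^ 2), p n τ with hH
  have Hc : ∀ n, Continuous (H n) := fun n =>
    ((prim_smooth (ps n) (R ^ 2)).1.continuous).comp (by fun_prop : Continuous fun r : ℝ => r ^ 2)
  have sub : ∀ r ∈ Ioc 0 R, r ^ 2 ≤ R ^ 2 := by intro r hr; nlinarith [hr.1, hr.2]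
  have HK : ∀ n, ∀ r ∈ Ioc 0 R, |H n r| ≤ K * R ^ 2 := by
    intro n r hr
    have := intervalIntegral.norm_integral_le_of_norm_le_const (a := R ^ 2) (b := r ^ 2) (C := K)
      (f := p n) (by
        intro τ hτ
        rw [uIoc_of_ge (sub r hr)] at hτ
        exact pK n τ ⟨(sq_nonneg r).trans hτ.1.le, hτ.2⟩)
    refine this.trans ?_
    have hK : 0 ≤ K := (abs_nonneg _).trans (pK 0 0 ⟨le_rfl, hR2.le⟩)
    gcongr
    rw [abs_sub_comm, abs_of_nonneg (by linarith [sub r hr])]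
    linarith [sq_nonneg r]
  have Ht : ∀ r ∈ Ioc 0 R, Tendsto (fun n => H n r) atTop (𝓝 (w r)) := by
    intro r hr
    rw [← sol_prim h hwR hr.1.le hr.2]
    refine intervalIntegral.tendsto_integral_filter_of_dominated_convergence (fun _ => K) ?_ ?_
      intervalIntegrable_const ?_
    · exact Eventually.of_forall fun n => (pc n).aestronglyMeasurable
    · refine Eventually.of_forall fun n => ae_of_all _ fun τ hτ => ?_
      rw [uIoc_of_ge (sub r hr)] at hτ
      exact pK n τ ⟨(sq_nonneg r).trans hτ.1.le, hτ.2⟩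
    · have : ∀ᵐ τ : ℝ, τ ≠ R ^ 2 := by
        simp [ae_iff]
      filter_upwards [this] with τ hne hτ
      rw [uIoc_of_ge (sub r hr)] at hτ
      exact pt τ ⟨(sq_nonneg r).trans hτ.1.le, lt_of_le_of_ne hτ.2 hne⟩
  have hmain : ∀ n, _ := fun n : ℕ => rad_test hd (a := R ^ 2 - R ^ 2 / ((n:ℝ) + 2)) hR (by
      rw [sub_nonneg, div_le_iff₀ (by positivity)]
      nlinarith [Nat.cast_nonneg (α := ℝ) n]) (by
      rw [sub_lt_self_iff]; positivity) hL (ps n) (p0 n)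
  have hpw : ∀ r ∈ Ioc 0 R, r ^ (d - 1) ≤ R ^ (d - 1) := fun r hr => pow_le_pow_left₀ hr.1.le hr.2 _
  have hrp : ∀ r ∈ Ioc 0 R, r ^ (2 * s) ≤ R ^ (2 * s) := fun r hr =>
    Real.rpow_le_rpow hr.1.le hr.2 (by positivity)
  have T1 : Tendsto (fun n => ∫ r in (0:ℝ)..R, r ^ (d - 1) * H n r ^ 2) atTop
      (𝓝 (∫ r in (0:ℝ)..R, r ^ (d - 1) * w r ^ 2)) := by
    refine intervalIntegral.tendsto_integral_filter_of_dominated_convergence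
      (fun _ => R ^ (d - 1) * (K * R ^ 2) ^ 2) ?_ ?_ intervalIntegrable_const ?_
    · exact Eventually.of_forall fun n => Continuous.aestronglyMeasurable (by have := Hc n; fun_prop)
    · refine Eventually.of_forall fun n => ae_of_all _ fun r hr => ?_
      rw [uIoc_of_le hR.le] at hr
      have h2 := HK n r hr
      have h3 := pow_nonneg hr.1.le (d - 1)
      rw [Real.norm_eq_abs, abs_mul, abs_of_nonneg h3, abs_pow]
      exact mul_le_mul (hpw r hr) (pow_le_pow_left₀ (abs_nonneg _) h2 2) (by positivity) (by positivity)
    · refine ae_of_all _ fun r hr => ?_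
      rw [uIoc_of_le hR.le] at hr
      exact ((Ht r hr).pow 2).const_mul _
  have T3 : Tendsto (fun n => ∫ r in (0:ℝ)..R, r ^ (d - 1) * (r ^ (2 * s) * H n r ^ 2)) atTop
      (𝓝 (∫ r in (0:ℝ)..R, r ^ (d - 1) * (r ^ (2 * s) * w r ^ 2))) := by
    refine intervalIntegral.tendsto_integral_filter_of_dominated_convergence
      (fun _ => R ^ (d - 1) * (R ^ (2 * s) * (K * R ^ 2) ^ 2)) ?_ ?_ intervalIntegrable_const ?_
    · exact Eventually.of_forall fun n => Continuous.aestronglyMeasurable (by have := Hc n; fun_prop)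
    · refine Eventually.of_forall fun n => ae_of_all _ fun r hr => ?_
      rw [uIoc_of_le hR.le] at hr
      have h2 := HK n r hr
      have h3 := pow_nonneg hr.1.le (d - 1)
      have h4 := Real.rpow_nonneg hr.1.le (2 * s)
      rw [Real.norm_eq_abs, abs_mul, abs_mul, abs_of_nonneg h3, abs_of_nonneg h4, abs_pow]
      exact mul_le_mul (hpw r hr) (mul_le_mul (hrp r hr) (pow_le_pow_left₀ (abs_nonneg _) h2 2)
        (by positivity) (by positivity)) (by positivity) (by positivity)
    · refine ae_of_all _ fun r hr => ?_
      rw [uIoc_of_le hR.le] at hr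
      exact (((Ht r hr).pow 2).const_mul _).const_mul _
  have T2 : Tendsto (fun n => ∫ r in (0:ℝ)..R, r ^ (d - 1) * (2 * r * p n (r ^ 2)) ^ 2) atTop
      (𝓝 (∫ r in (0:ℝ)..R, r ^ (d - 1) * (r * g r) ^ 2)) := by
    refine intervalIntegral.tendsto_integral_filter_of_dominated_convergence
      (fun _ => R ^ (d - 1) * (2 * R * K) ^ 2) ?_ ?_ intervalIntegrable_const ?_
    · exact Eventually.of_forall fun n => Continuous.aestronglyMeasurable (by have := pc n; fun_prop)
    · refine Eventually.of_forall fun n => ae_of_all _ fun r hr => ?_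
      rw [uIoc_of_le hR.le] at hr
      have h2 := pK n (r ^ 2) ⟨sq_nonneg r, sub r hr⟩
      have h3 := pow_nonneg hr.1.le (d - 1)
      rw [Real.norm_eq_abs, abs_mul, abs_of_nonneg h3, abs_pow]
      refine mul_le_mul (hpw r hr) (pow_le_pow_left₀ (abs_nonneg _) ?_ 2) (by positivity) (by positivity)
      rw [abs_mul, abs_of_nonneg (by linarith [hr.1])]
      exact mul_le_mul (by linarith [hr.2]) h2 (abs_nonneg _) (by positivity)
    · have : ∀ᵐ τ : ℝ, τ ≠ R := by
        simp [ae_iff]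
      filter_upwards [this] with r hne hr
      rw [uIoc_of_le hR.le] at hr
      have hlt : r < R := lt_of_le_of_ne hr.2 hne
      have := (((pt (r ^ 2) ⟨sq_nonneg r, by nlinarith [hr.1]⟩).const_mul (2 * r)).pow 2).const_mul (r ^ (d - 1))
      simp only [Real.sqrt_sq hr.1.le] at this
      have e : 2 * r * (g r / 2) = r * g r := by ring
      rwa [e] at this
  exact le_of_tendsto_of_tendsto' (T1.const_mul μ') (T2.add (T3.const_mul ν')) hmain

theorem energy_id (hd : 1 ≤ d) (hs : 0 < s) {ν μ R : ℝ} (hR : 0 < R) {w g : ℝ → ℝ}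
    (h : IsSol d s ν μ w g) (hwR : w R = 0) :
    (∫ r in (0:ℝ)..R, r ^ (d - 1) * (r * g r) ^ 2) + ν * (∫ r in (0:ℝ)..R, r ^ (d - 1) * (r ^ (2 * s) * w r ^ 2))
      = μ * ∫ r in (0:ℝ)..R, r ^ (d - 1) * w r ^ 2 := by
  have hcr := cont_rpow hs
  have wc := h.wc
  have gc := h.gc
  have hd1 : ∀ r : ℝ, r ^ d = r ^ (d - 1) * r := by
    intro r; rw [← pow_succ]; congr 1; omega
  have := intervalIntegral.integral_eq_sub_of_hasDerivAt_of_le (a := 0) (b := R) hR.le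
    (f := fun r => (r ^ d * g r) * w r)
    (f' := fun r => r ^ (d - 1) * (r * g r) ^ 2 + ν * (r ^ (d - 1) * (r ^ (2 * s) * w r ^ 2))
      - μ * (r ^ (d - 1) * w r ^ 2)) (by fun_prop) (by
      intro t ht
      refine ((h.hg t ht.1).mul (h.hw t)).congr_deriv ?_
      simp only [hd1 t]
      ring)
    (Continuous.intervalIntegrable (by fun_prop) _ _)
  have i1 : IntervalIntegrable (fun r => r ^ (d - 1) * (r * g r) ^ 2) volume 0 R :=
    Continuous.intervalIntegrable (by fun_prop) _ _
  have i2 : IntervalIntegrable (fun r => ν * (r ^ (d - 1) * (r ^ (2 * s) * w r ^ 2))) volume 0 R :=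
    Continuous.intervalIntegrable (by fun_prop) _ _
  have i3 : IntervalIntegrable (fun r => μ * (r ^ (d - 1) * w r ^ 2)) volume 0 R :=
    Continuous.intervalIntegrable (by fun_prop) _ _
  rw [intervalIntegral.integral_sub (i1.add i2) i3, intervalIntegral.integral_add i1 i2,
    intervalIntegral.integral_const_mul, intervalIntegral.integral_const_mul, hwR,
    zero_pow (by omega)] at this
  linarith

theorem testU (hd : 1 ≤ d) (hs : 0 < s) {ν μ ν' μ' R : ℝ} (hR : 0 < R) {w g : ℝ → ℝ}
    (h : IsSol d s ν μ w g) (hwR : w R = 0) (hL : LB d s ν' (Metric.ball 0 R) μ') :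
    (μ' - μ) * (∫ r in (0:ℝ)..R, r ^ (d - 1) * w r ^ 2) ≤
      (ν' - ν) * ∫ r in (0:ℝ)..R, r ^ (d - 1) * (r ^ (2 * s) * w r ^ 2) := by
  have h1 := testU0 hd hs hR h hwR hL
  have h2 := energy_id hd hs hR h hwR
  linarith

end Test
end Gru


namespace Gru
open scoped ENNReal Topology Pointwise

section Eig
variable {d : ℕ} {s : ℝ}

theorem norm_pos_int (hd : 1 ≤ d) {w : ℝ → ℝ} (wc : Continuous w) (w0 : w 0 = 1) {R : ℝ} (hR : 0 < R) :
    0 < ∫ r in (0:ℝ)..R, r ^ (d - 1) * w r ^ 2 := by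
  have ev : ∀ᶠ r in 𝓝[>] (0:ℝ), 0 < w r := by
    have : ∀ᶠ r in 𝓝 (0:ℝ), 0 < w r := wc.continuousAt.eventually_const_lt (by rw [w0]; norm_num)
    exact this.filter_mono nhdsWithin_le_nhds
  obtain ⟨c, hc1, hc2⟩ := (ev.and (Ioo_mem_nhdsGT hR)).exists
  refine intervalIntegral.integral_pos hR (by fun_prop) ?_ ⟨c, ⟨hc2.1.le, hc2.2.le⟩, ?_⟩
  · intro x hx
    exact mul_nonneg (pow_nonneg hx.1.le _) (sq_nonneg _)
  · have := pow_pos hc2.1 (d - 1)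
    positivity

noncomputable def mm (d : ℕ) (s R ν : ℝ) : ℝ := sSup {μ | LB d s ν (Metric.ball (0 : EE d) R) μ}

theorem exists_test (d : ℕ) {R : ℝ} (hR : 0 < R) : ∃ φ : EE d → ℝ, ContDiff ℝ (⊤ : ℕ∞) φ ∧ HasCompactSupport φ ∧
    tsupport φ ⊆ Metric.ball 0 R ∧ 0 < ∫ x, φ x ^ 2 := by
  let b : ContDiffBump (0 : EE d) := ⟨R / 4, R / 2, by positivity, by linarith⟩
  refine ⟨b, b.contDiff, b.hasCompactSupport, ?_, ?_⟩
  · rw [b.tsupport_eq]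
    exact Metric.closedBall_subset_ball (by simp [b]; linarith)
  · have := int_sq (b.contDiff (n := (⊤ : ℕ∞))) b.hasCompactSupport
    rw [integral_pos_iff_support_of_nonneg (fun x => sq_nonneg _) this]
    have e : Function.support (fun x => (b x) ^ 2) = Metric.ball (0 : EE d) b.rOut := by
      rw [← b.support_eq]; ext x; simp
    rw [e]
    exact Metric.measure_ball_pos _ _ b.rOut_pos

theorem LB_zero (d : ℕ) {s ν : ℝ} (hν : 0 ≤ ν) (Ω : Set (EE d)) : LB d s ν Ω 0 := by
  intro φ _ _ _
  rw [zero_mul]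
  have h1 : 0 ≤ ∫ x, ‖fderiv ℝ φ x‖ ^ 2 := integral_nonneg fun x => sq_nonneg _
  have h2 : 0 ≤ ∫ x : EE d, ‖x‖ ^ (2 * s) * φ x ^ 2 := integral_nonneg fun x => by positivity
  positivity

theorem mm_bdd (d : ℕ) (s : ℝ) {R : ℝ} (ν : ℝ) (hR : 0 < R) :
    BddAbove {μ | LB d s ν (Metric.ball (0 : EE d) R) μ} := by
  obtain ⟨φ, h1, h2, h3, h4⟩ := exists_test d hR
  refine ⟨((∫ x, ‖fderiv ℝ φ x‖ ^ 2) + ν * ∫ x, ‖x‖ ^ (2 * s) * φ x ^ 2) / ∫ x, φ x ^ 2, ?_⟩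
  intro μ hμ
  rw [le_div_iff₀ h4]
  exact hμ φ h1 h2 h3

theorem le_mm {R ν μ : ℝ} (hR : 0 < R) (h : LB d s ν (Metric.ball (0 : EE d) R) μ) : μ ≤ mm d s R ν :=
  le_csSup (mm_bdd d s ν hR) h

theorem LB_mm {R ν : ℝ} (hR : 0 < R) (hν : 0 ≤ ν) : LB d s ν (Metric.ball (0 : EE d) R) (mm d s R ν) := by
  intro φ h1 h2 h3
  have hN : 0 ≤ ∫ x, φ x ^ 2 := integral_nonneg fun x => sq_nonneg _
  rcases hN.eq_or_lt with h0 | hpos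
  · rw [← h0, mul_zero]
    have := LB_zero d (s := s) hν (Metric.ball (0 : EE d) R) φ h1 h2 h3
    linarith
  · rw [← le_div_iff₀ hpos]
    refine csSup_le ⟨0, LB_zero d hν _⟩ fun μ hμ => ?_
    rw [le_div_iff₀ hpos]
    exact hμ φ h1 h2 h3

theorem wsol_zero (n : ℕ) (s ν μ : ℝ) : wsol n s ν μ 0 = 1 := by simp [wsol]

theorem eig (hd : 1 ≤ d) (hs : 0 < s) {R ν : ℝ} (hR : 0 < R) (hν : 0 ≤ ν) :
    (∀ r, 0 ≤ r → r < R → 0 < wsol (d - 1) s ν (mm d s R ν) r) ∧ wsol (d - 1) s ν (mm d s R ν) R = 0 := by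
  set μ := mm d s R ν with hμ
  have hsol := isSol_wsol hd hs ν μ
  have C2 := wsol_cont (d - 1) hs ν
  have wc : Continuous (wsol (d - 1) s ν μ) := hsol.wc
  by_cases hA : ∀ r ∈ Icc 0 R, 0 < wsol (d - 1) s ν μ r
  · exfalso
    have hopen : IsOpen {p : ℝ × ℝ | 0 < wsol (d - 1) s ν p.1 p.2} := isOpen_lt continuous_const C2
    obtain ⟨u, v, hu, hv, hsu, hsv, huv⟩ := generalized_tube_lemma (s := {μ}) isCompact_singleton
      (t := Icc (0:ℝ) R) isCompact_Icc hopen (by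
        rintro ⟨a, b⟩ ⟨ha, hb⟩
        simp only [mem_singleton_iff] at ha
        simp only at hb
        subst ha
        exact hA b hb)
    have hev : ∀ᶠ a in 𝓝[>] μ, a ∈ u :=
      Filter.Eventually.filter_mono nhdsWithin_le_nhds (hu.mem_nhds (hsu rfl))
    obtain ⟨a, ha, hau⟩ := (hev.and self_mem_nhdsWithin).exists
    have : LB d s ν (Metric.ball (0 : EE d) R) a := by
      intro φ h1 h2 h3
      refine sol_LB0 hd hs hν hR (isSol_wsol hd hs ν a) ?_ h1 h2
        (measure_mono ((subset_tsupport φ).trans h3))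
      intro r hr
      exact huv (mk_mem_prod ha (hsv hr))
    have := le_mm hR this
    exact absurd hau (not_lt.2 this)
  · push Not at hA
    obtain ⟨r₀, hr₀, hr₀'⟩ := hA
    have hcpt : IsCompact (Icc 0 R ∩ {r | wsol (d - 1) s ν μ r ≤ 0}) :=
      isCompact_Icc.inter_right (isClosed_le wc continuous_const)
    obtain ⟨R', hR', hleast⟩ := hcpt.exists_isLeast ⟨r₀, hr₀, hr₀'⟩
    have hR'0 : 0 < R' := by
      refine lt_of_le_of_ne hR'.1.1 fun h0 => ?_
      have := hR'.2
      rw [mem_ofPred_eq, ← h0, wsol_zero] at this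
      linarith
    have hpos : ∀ r, 0 ≤ r → r < R' → 0 < wsol (d - 1) s ν μ r := by
      intro r h0 h1
      by_contra hcon
      push Not at hcon
      have := hleast ⟨⟨h0, h1.le.trans hR'.1.2⟩, hcon⟩
      linarith
    have hz : wsol (d - 1) s ν μ R' = 0 := by
      refine le_antisymm hR'.2 ?_
      have ht : Tendsto (wsol (d - 1) s ν μ) (𝓝[<] R') (𝓝 (wsol (d - 1) s ν μ R')) :=
        (wc.tendsto R').mono_left nhdsWithin_le_nhds
      refine ge_of_tendsto ht ?_
      filter_upwards [Ioo_mem_nhdsLT hR'0] with r hr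
      exact (hpos r hr.1.le hr.2).le
    rcases hR'.1.2.eq_or_lt with heq | hlt
    · rw [← heq]; exact ⟨hpos, hz⟩
    · exfalso
      have hg := g_neg hd hs hν hR'0 hsol hpos hz
      have hder := hsol.hw R'
      have hneg : R' * GG (d - 1) s ν μ R' < 0 := mul_neg_of_pos_of_neg hR'0 hg
      have hev : ∀ᶠ r in 𝓝[>] R', wsol (d - 1) s ν μ r < 0 := by
        have h1 := (hasDerivAt_iff_tendsto_slope.1 hder).mono_left
          (nhdsWithin_mono R' (fun x hx => ne_of_gt hx : Ioi R' ⊆ {R'}ᶜ))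
        filter_upwards [h1.eventually_lt_const hneg, self_mem_nhdsWithin] with r h2 h3
        rw [slope_def_field, hz, sub_zero] at h2
        have h4 : 0 < r - R' := sub_pos.2 h3
        rw [div_lt_iff₀ h4] at h2
        linarith
      obtain ⟨r₁, hr1, hr2⟩ := (hev.and (Ioo_mem_nhdsGT hlt)).exists
      have c1 : Continuous fun a => wsol (d - 1) s ν a r₁ :=
        C2.comp (by fun_prop : Continuous fun a : ℝ => (a, r₁))
      have hev2 : ∀ᶠ a in 𝓝[<] μ, wsol (d - 1) s ν a r₁ < 0 :=
        (c1.continuousAt.eventually_lt_const hr1).filter_mono nhdsWithin_le_nhds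
      obtain ⟨a, ha, haμ⟩ := (hev2.and self_mem_nhdsWithin).exists
      have hsa := isSol_wsol hd hs ν a
      have hr10 : 0 < r₁ := hR'0.trans hr2.1
      obtain ⟨R₂, hR₂, hR₂z⟩ := intermediate_value_Icc' hr10.le hsa.wc.continuousOn
        (show (0:ℝ) ∈ Icc _ _ from ⟨ha.le, by rw [wsol_zero]; norm_num⟩)
      have hR₂0 : 0 < R₂ := by
        refine lt_of_le_of_ne hR₂.1 fun h0 => ?_
        rw [← h0, wsol_zero] at hR₂z
        norm_num at hR₂z
      have hL : LB d s ν (Metric.ball (0 : EE d) R₂) μ :=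
        (LB_mm hR hν).mono (Metric.ball_subset_ball (hR₂.2.trans hr2.2.le))
      have h1 := testU hd hs hR₂0 hsa hR₂z hL
      have h2 := norm_pos_int hd hsa.wc (wsol_zero _ _ _ _) hR₂0
      rw [sub_self, zero_mul] at h1
      have h3 : 0 < μ - a := sub_pos.2 haμ
      have := mul_pos h3 h2
      linarith

theorem mm_pos (hd : 1 ≤ d) (hs : 0 < s) {R ν : ℝ} (hR : 0 < R) (hν : 0 ≤ ν) : 0 < mm d s R ν := by
  by_contra hcon
  push Not at hcon
  have := wsol_ge_one (d - 1) hs hν hcon hR.le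
  rw [(eig hd hs hR hν).2] at this
  norm_num at this

/-- Faber--Krahn -/
theorem mm_FK (hd : 1 ≤ d) (hs : 0 < s) {R ν : ℝ} (hR : 0 < R) (hν : 0 ≤ ν) {φ : EE d → ℝ}
    (hφ : ContDiff ℝ (⊤ : ℕ∞) φ) (hc : HasCompactSupport φ)
    (hvol : volume (Function.support φ) ≤ volume (Metric.ball (0 : EE d) R)) :
    mm d s R ν * ∫ x, φ x ^ 2 ≤ (∫ x, ‖fderiv ℝ φ x‖ ^ 2) + ν * ∫ x, ‖x‖ ^ (2 * s) * φ x ^ 2 :=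
  sol_LB hd hs hν hR (isSol_wsol hd hs ν _) (eig hd hs hR hν).1 hφ hc hvol

/-- characterization of the eigenvalue by its positive solution -/
theorem mm_eq (hd : 1 ≤ d) (hs : 0 < s) {R ν μ : ℝ} (hR : 0 < R) (hν : 0 ≤ ν) {w g : ℝ → ℝ}
    (h : IsSol d s ν μ w g) (hw : ∀ r, 0 ≤ r → r < R → 0 < w r) (hwR : w R = 0) : mm d s R ν = μ := by
  apply le_antisymm
  · have h1 := testU hd hs hR h hwR (LB_mm hR hν)
    have h2 := norm_pos_int hd h.wc h.w0 hR
    rw [sub_self, zero_mul] at h1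
    by_contra hcon
    push Not at hcon
    have := mul_pos (sub_pos.2 hcon) h2
    linarith
  · apply le_mm hR
    intro φ h1 h2 h3
    exact sol_LB hd hs hν hR h hw h1 h2 (measure_mono ((subset_tsupport φ).trans h3))

theorem mm_scale (hd : 1 ≤ d) (hs : 0 < s) {R ν : ℝ} (hR : 0 < R) (hν : 0 ≤ ν) :
    mm d s R ν = mm d s 1 (ν * R ^ (2 + 2 * s)) / R ^ 2 := by
  have h1 : 0 ≤ ν * R ^ (2 + 2 * s) := mul_nonneg hν (Real.rpow_nonneg hR.le _)
  have e := mm_eq hd hs one_pos h1 ((isSol_wsol hd hs ν (mm d s R ν)).scale hd hR) (by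
    intro r h0 h2
    exact (eig hd hs hR hν).1 _ (by positivity) (by nlinarith)) (by
    simp only [mul_one]; exact (eig hd hs hR hν).2)
  rw [e]
  field_simp

end Eig
end Gru


namespace Gru
open scoped ENNReal Topology Pointwise

section Compare
variable {d : ℕ} {s : ℝ}

theorem ratio_mono (hd : 1 ≤ d) (hs : 0 < s) {κ₀ κ₁ μ R : ℝ} (hκ : κ₀ ≤ κ₁) {u₀ g₀ u₁ g₁ : ℝ → ℝ}
    (h₀ : IsSol d s κ₀ μ u₀ g₀) (h₁ : IsSol d s κ₁ μ u₁ g₁)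
    (p₀ : ∀ r, 0 ≤ r → r < R → 0 < u₀ r) (p₁ : ∀ r, 0 ≤ r → r < R → 0 < u₁ r) :
    ∀ x y, 0 ≤ x → x ≤ y → y < R → u₁ x * u₀ y ≤ u₁ y * u₀ x := by
  have c₀ := h₀.wc
  have c₁ := h₁.wc
  have hmono : MonotoneOn (fun r => u₁ r / u₀ r) (Ico 0 R) := by
    refine monotoneOn_of_deriv_nonneg (convex_Ico 0 R) ?_ ?_ ?_
    · exact c₁.continuousOn.div c₀.continuousOn fun r hr => (p₀ r hr.1 hr.2).ne'
    · intro r hr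
      rw [interior_Ico] at hr
      exact ((h₁.hw r).div (h₀.hw r) (p₀ r hr.1.le hr.2).ne').differentiableAt.differentiableWithinAt
    · intro r hr
      rw [interior_Ico] at hr
      have hp := p₀ r hr.1.le hr.2
      have hD := ((h₁.hw r).div (h₀.hw r) hp.ne').deriv
      rw [show (fun r => u₁ r / u₀ r) = u₁ / u₀ from rfl, hD]
      have W := wronskian hd hs h₀ h₁ hr.1.le
      have hn : 0 ≤ ∫ t in (0:ℝ)..r, t ^ (d - 1) * ((κ₁ - κ₀) * t ^ (2 * s) - (μ - μ)) * (u₁ t * u₀ t) := by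
        refine intervalIntegral.integral_nonneg hr.1.le fun t ht => ?_
        have ht2 : t < R := ht.2.trans_lt hr.2
        have q0 := p₀ t ht.1 ht2
        have q1 := p₁ t ht.1 ht2
        have q2 := Real.rpow_nonneg ht.1 (2 * s)
        have q3 := pow_nonneg ht.1 (d - 1)
        have q4 : 0 ≤ κ₁ - κ₀ := by linarith
        rw [sub_self, sub_zero]
        positivity
      rw [← W] at hn
      have hrd := pow_pos hr.1 d
      have h2 : 0 ≤ g₁ r * u₀ r - u₁ r * g₀ r := by
        by_contra hcon
        push Not at hcon
        have := mul_neg_of_pos_of_neg hrd hcon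
        linarith
      apply div_nonneg _ (sq_nonneg _)
      nlinarith [mul_nonneg hr.1.le h2]
  intro x y hx hxy hy
  have := hmono ⟨hx, hxy.trans_lt hy⟩ ⟨hx.trans hxy, hy⟩ hxy
  simp only at this
  rwa [div_le_div_iff₀ (p₀ x hx (hxy.trans_lt hy)) (p₀ y (hx.trans hxy) hy)] at this

noncomputable def NN (d : ℕ) (R : ℝ) (u : ℝ → ℝ) : ℝ := ∫ r in (0:ℝ)..R, r ^ (d - 1) * u r ^ 2
noncomputable def QQ (d : ℕ) (s R : ℝ) (u : ℝ → ℝ) : ℝ := ∫ r in (0:ℝ)..R, r ^ (d - 1) * (r ^ (2 * s) * u r ^ 2)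

theorem QQ_nonneg {R : ℝ} (hR : 0 < R) (u : ℝ → ℝ) : 0 ≤ QQ d s R u :=
  intervalIntegral.integral_nonneg hR.le fun t ht => by
    have q2 := Real.rpow_nonneg ht.1 (2 * s)
    have q3 := pow_nonneg ht.1 (d - 1)
    positivity

theorem QQ_lt (hs : 0 < s) {R : ℝ} (hR : 0 < R) {u : ℝ → ℝ} (uc : Continuous u)
    (p : ∀ r, 0 ≤ r → r < R → 0 < u r) : QQ d s R u < R ^ (2 * s) * NN d R u := by
  have hcr := cont_rpow hs
  have h : 0 < ∫ r in (0:ℝ)..R, (R ^ (2 * s) * (r ^ (d - 1) * u r ^ 2) - r ^ (d - 1) * (r ^ (2 * s) * u r ^ 2)) := by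
    refine intervalIntegral.intervalIntegral_pos_of_pos_on (Continuous.intervalIntegrable (by fun_prop) _ _) ?_ hR
    intro r hr
    have q1 := p r hr.1.le hr.2
    have q2 := pow_pos hr.1 (d - 1)
    have q3 : 0 < R ^ (2 * s) - r ^ (2 * s) := sub_pos.2 (Real.rpow_lt_rpow hr.1.le hr.2 (by positivity))
    have : 0 < (r ^ (d - 1) * u r ^ 2) * (R ^ (2 * s) - r ^ (2 * s)) := by positivity
    linarith
  rw [intervalIntegral.integral_sub (Continuous.intervalIntegrable (by fun_prop) _ _)
    (Continuous.intervalIntegrable (by fun_prop) _ _), intervalIntegral.integral_const_mul] at h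
  unfold QQ NN
  linarith

theorem moment_mono (hd : 1 ≤ d) (hs : 0 < s) {κ₀ κ₁ μ R₀ R₁ : ℝ} (hκ : κ₀ ≤ κ₁) {u₀ g₀ u₁ g₁ : ℝ → ℝ}
    (h₀ : IsSol d s κ₀ μ u₀ g₀) (h₁ : IsSol d s κ₁ μ u₁ g₁) (hR₀ : 0 < R₀) (hR : R₀ ≤ R₁)
    (p₀ : ∀ r, 0 ≤ r → r < R₀ → 0 < u₀ r) (p₁ : ∀ r, 0 ≤ r → r < R₁ → 0 < u₁ r)
    (z₀ : u₀ R₀ = 0) (hQ : 0 < QQ d s R₀ u₀) {A : ℝ} (hA : QQ d s R₀ u₀ = A * NN d R₀ u₀) :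
    A * NN d R₁ u₁ ≤ QQ d s R₁ u₁ := by
  have hcr := cont_rpow hs
  have c₀ := h₀.wc
  have c₁ := h₁.wc
  have hN : 0 < NN d R₀ u₀ := norm_pos_int hd c₀ h₀.w0 hR₀
  have hA0 : 0 < A := by
    rw [hA] at hQ
    exact pos_of_mul_pos_left hQ hN.le
  have hA1 : A < R₀ ^ (2 * s) := by
    have := QQ_lt (d := d) hs hR₀ c₀ p₀
    rw [hA] at this
    exact lt_of_mul_lt_mul_right this hN.le
  have h2s : 0 < 2 * s := by positivity
  set y := A ^ (2 * s)⁻¹ with hy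
  have yA : y ^ (2 * s) = A := Real.rpow_inv_rpow hA0.le h2s.ne'
  have hy0 : 0 < y := Real.rpow_pos_of_pos hA0 _
  have hyR : y < R₀ := by
    rw [← yA] at hA1
    exact (Real.rpow_lt_rpow_iff hy0.le hR₀.le h2s).1 hA1
  have rm := ratio_mono hd hs hκ h₀ h₁ p₀ (fun r h1 h2 => p₁ r h1 (h2.trans_le hR))
  have u0y := p₀ y hy0.le hyR
  have u1y := p₁ y hy0.le (hyR.trans_le hR)
  set l := u₁ y ^ 2 / u₀ y ^ 2 with hl
  have pt : ∀ t ∈ Icc 0 R₀, 0 ≤ t ^ (d - 1) * ((t ^ (2 * s) - A) * (u₁ t ^ 2 - l * u₀ t ^ 2)) := by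
    intro t ht
    refine mul_nonneg (pow_nonneg ht.1 _) ?_
    have e : u₁ t ^ 2 - l * u₀ t ^ 2 = ((u₁ t * u₀ y) ^ 2 - (u₁ y * u₀ t) ^ 2) / u₀ y ^ 2 := by
      rw [hl]; field_simp
    have n1 : 0 ≤ u₁ t := by
      have : ContinuousOn u₁ (Icc 0 R₀) := c₁.continuousOn
      have hcl : closure (Ico 0 R₀) = Icc 0 R₀ := closure_Ico hR₀.ne
      have : t ∈ closure (Ico 0 R₀) := hcl ▸ ht
      have hsub : closure (Ico 0 R₀) ⊆ {t | 0 ≤ u₁ t} :=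
        closure_minimal (fun x hx => (p₁ x hx.1 (hx.2.trans_le hR)).le) (isClosed_le continuous_const c₁)
      exact hsub this
    have n0 : 0 ≤ u₀ t := by
      rcases ht.2.eq_or_lt with h | h
      · rw [h, z₀]
      · exact (p₀ t ht.1 h).le
    rw [e]
    rcases le_total t y with hty | hty
    · have h1 : t ^ (2 * s) - A ≤ 0 := by
        rw [← yA, sub_nonpos]; exact Real.rpow_le_rpow ht.1 hty h2s.le
      have h2 := rm t y ht.1 hty hyR
      have h3 : (u₁ t * u₀ y) ^ 2 - (u₁ y * u₀ t) ^ 2 ≤ 0 := by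
        rw [sub_nonpos]; exact pow_le_pow_left₀ (by positivity) h2 2
      exact mul_nonneg_of_nonpos_of_nonpos h1 (div_nonpos_of_nonpos_of_nonneg h3 (sq_nonneg _))
    · have h1 : 0 ≤ t ^ (2 * s) - A := by
        rw [← yA, sub_nonneg]; exact Real.rpow_le_rpow hy0.le hty h2s.le
      have h2 : u₁ y * u₀ t ≤ u₁ t * u₀ y := by
        rcases ht.2.eq_or_lt with h | h
        · rw [h, z₀, mul_zero, ← h]; positivity
        · exact rm y t hy0.le hty h
      have h3 : 0 ≤ (u₁ t * u₀ y) ^ 2 - (u₁ y * u₀ t) ^ 2 := by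
        rw [sub_nonneg]; exact pow_le_pow_left₀ (by positivity) h2 2
      exact mul_nonneg h1 (div_nonneg h3 (sq_nonneg _))
  have I1 : 0 ≤ ∫ t in (0:ℝ)..R₀, t ^ (d - 1) * ((t ^ (2 * s) - A) * (u₁ t ^ 2 - l * u₀ t ^ 2)) :=
    intervalIntegral.integral_nonneg hR₀.le pt
  have I2 : 0 ≤ ∫ t in R₀..R₁, t ^ (d - 1) * ((t ^ (2 * s) - A) * u₁ t ^ 2) := by
    refine intervalIntegral.integral_nonneg hR fun t ht => ?_
    have ht0 := hR₀.le.trans ht.1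
    have h1 : 0 ≤ t ^ (2 * s) - A := by
      have := Real.rpow_le_rpow hR₀.le ht.1 h2s.le
      linarith
    have := pow_nonneg ht0 (d - 1)
    positivity
  have ii : ∀ f : ℝ → ℝ, Continuous f → ∀ a b, IntervalIntegrable f volume a b :=
    fun f hf a b => hf.intervalIntegrable a b
  have E1 : ∫ t in (0:ℝ)..R₀, t ^ (d - 1) * ((t ^ (2 * s) - A) * (u₁ t ^ 2 - l * u₀ t ^ 2)) =
      (∫ t in (0:ℝ)..R₀, t ^ (d - 1) * ((t ^ (2 * s) - A) * u₁ t ^ 2)) - l * (QQ d s R₀ u₀ - A * NN d R₀ u₀) := by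
    unfold QQ NN
    rw [← intervalIntegral.integral_const_mul A,
      ← intervalIntegral.integral_sub (ii _ (by fun_prop) _ _) (ii _ (by fun_prop) _ _),
      ← intervalIntegral.integral_const_mul l,
      ← intervalIntegral.integral_sub (ii _ (by fun_prop) _ _) (ii _ (by fun_prop) _ _)]
    congr 1
    ext t
    ring
  have E2 : QQ d s R₁ u₁ - A * NN d R₁ u₁ = ∫ t in (0:ℝ)..R₁, t ^ (d - 1) * ((t ^ (2 * s) - A) * u₁ t ^ 2) := by
    unfold QQ NN
    rw [← intervalIntegral.integral_const_mul A,
      ← intervalIntegral.integral_sub (ii _ (by fun_prop) _ _) (ii _ (by fun_prop) _ _)]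
    congr 1
    ext t
    ring
  have E3 := intervalIntegral.integral_add_adjacent_intervals
    (ii (fun t => t ^ (d - 1) * ((t ^ (2 * s) - A) * u₁ t ^ 2)) (by fun_prop) 0 R₀)
    (ii (fun t => t ^ (d - 1) * ((t ^ (2 * s) - A) * u₁ t ^ 2)) (by fun_prop) R₀ R₁)
  rw [hA, sub_self, mul_zero, sub_zero] at E1
  rw [E1] at I1
  linarith

/-- first order condition -/
theorem crit (hd : 1 ≤ d) (hs : 0 < s) {κ R β : ℝ} (hR : 0 < R) (hκ : 0 < κ) (h1 : mm d s R κ = 1)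
    (hmin : ∀ κ', 0 < κ' → (κ' / κ) ^ β ≤ mm d s R κ') :
    κ * QQ d s R (wsol (d - 1) s κ 1) = β * NN d R (wsol (d - 1) s κ 1) := by
  obtain ⟨p, z⟩ := eig hd hs hR hκ.le
  rw [h1] at p z
  have hsol := isSol_wsol hd hs κ 1
  set u := wsol (d - 1) s κ 1
  have hN : 0 < NN d R u := norm_pos_int hd hsol.wc hsol.w0 hR
  have key : ∀ κ', 0 < κ' → ((κ' / κ) ^ β - 1) * NN d R u ≤ (κ' - κ) * QQ d s R u := by
    intro κ' hκ'
    have := testU hd hs hR hsol z (LB_mm hR hκ'.le)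
    refine le_trans ?_ this
    exact mul_le_mul_of_nonneg_right (by linarith [hmin κ' hκ']) hN.le
  set f : ℝ → ℝ := fun x => (x - κ) * QQ d s R u - ((x / κ) ^ β - 1) * NN d R u with hf
  have hloc : IsLocalMin f κ := by
    filter_upwards [Ioi_mem_nhds hκ] with x hx
    have := key x hx
    simp only [hf, sub_self, zero_mul, div_self hκ.ne', Real.one_rpow]
    linarith
  have hder : HasDerivAt f (QQ d s R u - β / κ * NN d R u) κ := by
    have e1 : HasDerivAt (fun x => (x - κ) * QQ d s R u) (QQ d s R u) κ := by
      simpa using ((hasDerivAt_id κ).sub_const κ).mul_const (QQ d s R u)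
    have e2 : HasDerivAt (fun x => (x / κ) ^ β) (β / κ) κ := by
      have := ((hasDerivAt_id κ).div_const κ).rpow_const (p := β) (Or.inl (by simp [hκ.ne']))
      refine this.congr_deriv ?_
      simp [hκ.ne']
      field_simp
    exact e1.sub ((e2.sub_const 1).mul_const _)
  have := hloc.hasDerivAt_eq_zero hder
  have e : QQ d s R u = β / κ * NN d R u := by linarith
  rw [e]; field_simp

theorem uniq (hd : 1 ≤ d) (hs : 0 < s) {κ₀ κ₁ R₀ R₁ β : ℝ} (hβ : 0 < β) (hR₀ : 0 < R₀) (hR : R₀ ≤ R₁)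
    (hκ₀ : 0 < κ₀) (hκ : κ₀ < κ₁) (h0 : mm d s R₀ κ₀ = 1) (h1 : mm d s R₁ κ₁ = 1)
    (hmin0 : ∀ κ', 0 < κ' → (κ' / κ₀) ^ β ≤ mm d s R₀ κ')
    (hmin1 : ∀ κ', 0 < κ' → (κ' / κ₁) ^ β ≤ mm d s R₁ κ') : False := by
  have hκ₁ := hκ₀.trans hκ
  have hR₁ := hR₀.trans_le hR
  have c0 := crit hd hs hR₀ hκ₀ h0 hmin0
  have c1 := crit hd hs hR₁ hκ₁ h1 hmin1
  obtain ⟨p₀, z₀⟩ := eig hd hs hR₀ hκ₀.le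
  obtain ⟨p₁, z₁⟩ := eig hd hs hR₁ hκ₁.le
  rw [h0] at p₀ z₀
  rw [h1] at p₁ z₁
  have s₀ := isSol_wsol hd hs κ₀ 1
  have s₁ := isSol_wsol hd hs κ₁ 1
  have hN₀ : 0 < NN d R₀ _ := norm_pos_int hd s₀.wc s₀.w0 hR₀
  have hN₁ : 0 < NN d R₁ _ := norm_pos_int hd s₁.wc s₁.w0 hR₁
  have hQ₀ : QQ d s R₀ (wsol (d - 1) s κ₀ 1) = β / κ₀ * NN d R₀ (wsol (d - 1) s κ₀ 1) := by
    rw [div_mul_eq_mul_div, eq_div_iff hκ₀.ne', ← c0]; ring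
  have := moment_mono hd hs hκ.le s₀ s₁ hR₀ hR p₀ p₁ z₀ (by rw [hQ₀]; positivity) hQ₀
  have h2 : κ₁ * (β / κ₀ * NN d R₁ (wsol (d - 1) s κ₁ 1)) ≤ β * NN d R₁ (wsol (d - 1) s κ₁ 1) := by
    rw [← c1]; gcongr
  have h3 : β * NN d R₁ (wsol (d - 1) s κ₁ 1) < κ₁ * (β / κ₀ * NN d R₁ (wsol (d - 1) s κ₁ 1)) := by
    have : κ₁ * (β / κ₀ * NN d R₁ (wsol (d - 1) s κ₁ 1)) = (κ₁ / κ₀) * (β * NN d R₁ (wsol (d - 1) s κ₁ 1)) := by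
      field_simp
    rw [this]
    have h4 : 1 < κ₁ / κ₀ := by rwa [one_lt_div hκ₀]
    have h5 : 0 < β * NN d R₁ (wsol (d - 1) s κ₁ 1) := by positivity
    nlinarith
  linarith

end Compare
end Gru


namespace Gru
open scoped ENNReal Topology Pointwise

section Min
variable {d : ℕ} {s : ℝ}

theorem mm_lower (hd : 1 ≤ d) (hs : 0 < s) : ∃ c, 0 < c ∧ ∀ R, 0 < R → c ≤ mm d s R 1 := by
  set k : ℝ := (1 / 2 : ℝ) ^ s with hk
  have hk0 : 0 < k := Real.rpow_pos_of_pos (by norm_num) _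
  set ε := min (1 / 9) (k / 2) with hε
  have ε0 : 0 < ε := lt_min (by norm_num) (by positivity)
  have ε1 : ε ≤ 1 / 9 := min_le_left _ _
  have ε2 : ε ≤ k / 2 := min_le_right _ _
  refine ⟨ε / 9, by positivity, fun R hR => ?_⟩
  apply le_mm hR
  intro φ h1 h2 h3
  have hd1 : ∀ r : ℝ, r ^ d = r ^ (d - 1) * r := by
    intro r; rw [← pow_succ]; congr 1; omega
  have hdr : (1:ℝ) ≤ d := by exact_mod_cast hd
  have hden : ∀ r : ℝ, (1 + r ^ 2) ≠ 0 := fun r => by positivity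
  set q' : ℝ → ℝ := fun r => r ^ (d - 1) * (ε * (d * (1 + r ^ 2) - 2 * r ^ 2) / (1 + r ^ 2) ^ 2) with hq'
  have q'c : Continuous q' := by
    refine Continuous.mul (by fun_prop) (Continuous.div (by fun_prop) (by fun_prop) fun r => ?_)
    exact pow_ne_zero _ (hden r)
  obtain ⟨C, hC⟩ := isCompact_Icc.exists_bound_of_continuousOn (q'c.continuousOn (s := Icc 0 R))
  refine FK hd hs zero_le_one hR (Z := fun r => ε * r / (1 + r ^ 2)) (q' := q') (C := C)
    (Continuous.continuousOn (Continuous.div (by fun_prop) (by fun_prop) hden)) (by simp) ?_ ?_ ?_ h1 h2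
    (measure_mono ((subset_tsupport φ).trans h3))
  · intro r hr
    have e : (fun r : ℝ => r ^ (d - 1) * (ε * r / (1 + r ^ 2))) = fun r => (ε * r ^ d) / (1 + r ^ 2) := by
      ext r; rw [hd1 r]; ring
    rw [e]
    have a1 : HasDerivAt (fun r : ℝ => ε * r ^ d) (ε * (d * r ^ (d - 1))) r := (hasDerivAt_pow d r).const_mul ε
    have a2 : HasDerivAt (fun r : ℝ => 1 + r ^ 2) (2 * r) r := by
      simpa using (hasDerivAt_pow 2 r).const_add 1
    refine (a1.div a2 (hden r)).congr_deriv ?_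
    simp only [hq', hd1 r]
    field_simp
  · intro r hr
    exact hC r ⟨hr.1.le, hr.2.le⟩
  · intro r hr
    simp only [hq', one_mul]
    refine mul_le_mul_of_nonneg_left ?_ (pow_nonneg hr.1.le _)
    have ex : r ^ (2 * s) = (r ^ 2) ^ s := by
      rw [Real.rpow_mul hr.1.le]; norm_num
    rw [ex]
    set x := r ^ 2 with hx
    have x0 : 0 ≤ x := sq_nonneg r
    have eZ : (ε * r / (1 + x)) ^ 2 = ε ^ 2 * (x / (1 + x) ^ 2) := by rw [hx]; field_simp
    have hZ : (ε * r / (1 + x)) ^ 2 ≤ ε ^ 2 := by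
      rw [eZ]
      have : x / (1 + x) ^ 2 ≤ 1 := by rw [div_le_one (by positivity)]; nlinarith
      nlinarith [sq_nonneg ε]
    have hnum : 1 - x ≤ d * (1 + x) - 2 * x := by nlinarith
    have hεε : ε ^ 2 ≤ ε / 9 := by nlinarith
    rcases le_total x (1 / 2) with hle | hge
    · have h0 : 0 ≤ x ^ s := Real.rpow_nonneg x0 _
      have : 2 * ε / 9 ≤ ε * (d * (1 + x) - 2 * x) / (1 + x) ^ 2 := by
        rw [le_div_iff₀ (by positivity)]
        have h5 : (1 + x) ^ 2 ≤ 9 / 4 := by nlinarith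
        have h6 : ε * (1 / 2) ≤ ε * (d * (1 + x) - 2 * x) := by
          apply mul_le_mul_of_nonneg_left _ ε0.le; linarith
        nlinarith
      linarith
    · have h0 : k ≤ x ^ s := Real.rpow_le_rpow (by norm_num) hge hs.le
      have : -ε ≤ ε * (d * (1 + x) - 2 * x) / (1 + x) ^ 2 := by
        rw [le_div_iff₀ (by positivity)]
        have h6 : ε * (1 - x) ≤ ε * (d * (1 + x) - 2 * x) := by
          apply mul_le_mul_of_nonneg_left _ ε0.le; linarith
        have h7 : ε * (-(1 + x) ^ 2) ≤ ε * (1 - x) := by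
          apply mul_le_mul_of_nonneg_left _ ε0.le; nlinarith
        linarith
      linarith

theorem M_tangent (hd : 1 ≤ d) (hs : 0 < s) {ν ν' : ℝ} (hν : 0 ≤ ν) (hν' : 0 ≤ ν') :
    ∃ P, 0 ≤ P ∧ P ≤ 1 ∧ mm d s 1 ν' - mm d s 1 ν ≤ (ν' - ν) * P := by
  obtain ⟨p, z⟩ := eig hd hs one_pos hν
  have hsol := isSol_wsol hd hs ν (mm d s 1 ν)
  have h := testU hd hs one_pos hsol z (LB_mm one_pos hν')
  have hN := norm_pos_int hd hsol.wc hsol.w0 one_pos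
  have hQ := QQ_nonneg (d := d) (s := s) one_pos (wsol (d - 1) s ν (mm d s 1 ν))
  have hQN := QQ_lt (d := d) hs one_pos hsol.wc p
  rw [Real.one_rpow, one_mul] at hQN
  unfold QQ at hQ hQN
  unfold NN at hQN
  set N := ∫ r in (0:ℝ)..1, r ^ (d - 1) * wsol (d - 1) s ν (mm d s 1 ν) r ^ 2
  set Q := ∫ r in (0:ℝ)..1, r ^ (d - 1) * (r ^ (2 * s) * wsol (d - 1) s ν (mm d s 1 ν) r ^ 2)
  refine ⟨Q / N, by positivity, ?_, ?_⟩
  · rw [div_le_one hN]; exact hQN.le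
  · rw [← mul_div_assoc, le_div_iff₀ hN]; exact h

theorem M_mono (hd : 1 ≤ d) (hs : 0 < s) {ν ν' : ℝ} (hν : 0 ≤ ν) (h : ν ≤ ν') : mm d s 1 ν ≤ mm d s 1 ν' := by
  obtain ⟨P, h0, h1, h2⟩ := M_tangent hd hs (hν.trans h) hν
  have : (ν - ν') * P ≤ 0 := mul_nonpos_of_nonpos_of_nonneg (by linarith) h0
  linarith

theorem M_cont (hd : 1 ≤ d) (hs : 0 < s) : ContinuousOn (mm d s 1) (Ici 0) := by
  have key : ∀ ν ν', 0 ≤ ν → ν ≤ ν' → mm d s 1 ν' - mm d s 1 ν ≤ ν' - ν := by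
    intro ν ν' h0 h1
    obtain ⟨P, h2, h3, h4⟩ := M_tangent hd hs h0 (h0.trans h1)
    nlinarith
  refine (LipschitzOnWith.of_dist_le_mul (K := 1) ?_).continuousOn
  intro x hx y hy
  rw [Real.dist_eq, Real.dist_eq, NNReal.coe_one, one_mul]
  rcases le_total x y with h | h
  · have := M_mono hd hs hx h
    rw [abs_sub_comm, abs_sub_comm x, abs_of_nonneg (by linarith), abs_of_nonneg (by linarith)]
    exact key x y hx h
  · have := M_mono hd hs hy h
    rw [abs_of_nonneg (by linarith), abs_of_nonneg (by linarith)]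
    exact key y x hy h

theorem M_growth (hd : 1 ≤ d) (hs : 0 < s) : ∃ c, 0 < c ∧ ∀ ν, 0 < ν → c * ν ^ (1 / (1 + s)) ≤ mm d s 1 ν := by
  obtain ⟨c, hc, h⟩ := mm_lower hd hs
  refine ⟨c, hc, fun ν hν => ?_⟩
  set R := ν ^ (1 / (2 + 2 * s)) with hR
  have hR0 : 0 < R := Real.rpow_pos_of_pos hν _
  have e1 : R ^ (2 + 2 * s) = ν := by
    rw [hR, ← Real.rpow_mul hν.le, one_div_mul_cancel (by positivity), Real.rpow_one]
  have e2 : R ^ 2 = ν ^ (1 / (1 + s)) := by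
    rw [hR, ← Real.rpow_natCast, ← Real.rpow_mul hν.le]
    congr 1
    push_cast
    field_simp
  have := h R hR0
  rw [mm_scale hd hs hR0 zero_le_one, one_mul, e1, le_div_iff₀ (by positivity), e2] at this
  exact this

theorem exists_min (hd : 1 ≤ d) (hs : 0 < s) {β : ℝ} (hβ : 0 < β) (hβ2 : β * (1 + s) < 1) :
    ∃ ν₀, 0 < ν₀ ∧ ∀ ν, 0 < ν → mm d s 1 ν₀ * ν₀ ^ (-β) ≤ mm d s 1 ν * ν ^ (-β) := by
  set Φ : ℝ → ℝ := fun ν => mm d s 1 ν * ν ^ (-β) with hΦ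
  obtain ⟨c, hc, hg⟩ := M_growth hd hs
  have hm0 := mm_pos hd hs one_pos (le_refl (0:ℝ))
  have ev0 : ∀ᶠ ν in 𝓝[>] (0:ℝ), Φ 1 < Φ ν := by
    have t := (tendsto_rpow_neg_nhdsGT_zero (neg_lt_zero.2 hβ)).const_mul_atTop hm0
    filter_upwards [t.eventually_gt_atTop (Φ 1), self_mem_nhdsWithin] with ν h1 h2
    refine h1.trans_le ?_
    exact mul_le_mul_of_nonneg_right (M_mono hd hs le_rfl (le_of_lt h2)) (Real.rpow_nonneg (le_of_lt h2) _)
  have ev1 : ∀ᶠ ν in atTop, Φ 1 < Φ ν := by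
    have hγ : 0 < 1 / (1 + s) - β := by
      rw [sub_pos, lt_div_iff₀ (by positivity)]; exact hβ2
    have t := (tendsto_rpow_atTop hγ).const_mul_atTop hc
    filter_upwards [t.eventually_gt_atTop (Φ 1), eventually_gt_atTop 0] with ν h1 h2
    refine h1.trans_le ?_
    rw [sub_eq_add_neg, Real.rpow_add h2, ← mul_assoc]
    exact mul_le_mul_of_nonneg_right (hg ν h2) (Real.rpow_nonneg h2.le _)
  obtain ⟨a, ha, haΦ⟩ := (nhdsGT_basis (0:ℝ)).eventually_iff.1 ev0
  obtain ⟨b, hb⟩ := eventually_atTop.1 ev1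
  set a' := min (a / 2) 1
  have ha' : 0 < a' := lt_min (by positivity) one_pos
  have ha'a : a' < a := (min_le_left _ _).trans_lt (by linarith)
  have hcont : ContinuousOn Φ (Icc a' (max b 1)) := by
    refine ContinuousOn.mul ((M_cont hd hs).mono fun x hx => (ha'.trans_le hx.1).le) ?_
    exact ContinuousOn.rpow_const continuousOn_id fun x hx => Or.inl (ha'.trans_le hx.1).ne'
  have h1mem : (1:ℝ) ∈ Icc a' (max b 1) := ⟨min_le_right _ _, le_max_right _ _⟩
  obtain ⟨ν₀, hν₀, hmin⟩ := isCompact_Icc.exists_isMinOn ⟨1, h1mem⟩ hcont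
  refine ⟨ν₀, ha'.trans_le hν₀.1, fun ν hν => ?_⟩
  have hm1 : Φ ν₀ ≤ Φ 1 := hmin h1mem
  by_cases h1 : ν < a'
  · exact hm1.trans (haΦ ⟨hν, h1.trans ha'a⟩).le
  by_cases h2 : max b 1 < ν
  · exact hm1.trans (hb ν ((le_max_left _ _).trans h2.le)).le
  exact hmin (show ν ∈ Icc a' (max b 1) from ⟨not_lt.1 h1, not_lt.1 h2⟩)

theorem uniq_min (hd : 1 ≤ d) (hs : 0 < s) {β : ℝ} (hβ : 0 < β) (hβ2 : β * (1 + s) < 1) {ν₀ ν₁ : ℝ}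
    (h0 : 0 < ν₀) (hlt : ν₀ < ν₁)
    (hm0 : ∀ ν, 0 < ν → mm d s 1 ν₀ * ν₀ ^ (-β) ≤ mm d s 1 ν * ν ^ (-β))
    (hm1 : ∀ ν, 0 < ν → mm d s 1 ν₁ * ν₁ ^ (-β) ≤ mm d s 1 ν * ν ^ (-β)) : False := by
  have h1 := h0.trans hlt
  set k := mm d s 1 ν₀ * ν₀ ^ (-β) with hk
  have M0 := mm_pos hd hs one_pos h0.le
  have M1 := mm_pos hd hs one_pos h1.le
  have hk0 : 0 < k := mul_pos M0 (Real.rpow_pos_of_pos h0 _)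
  have hk1 : mm d s 1 ν₁ * ν₁ ^ (-β) = k := le_antisymm (hm1 ν₀ h0) (hm0 ν₁ h1)
  have lb : ∀ ν, 0 < ν → k * ν ^ β ≤ mm d s 1 ν := by
    intro ν hν
    have := hm0 ν hν
    rwa [Real.rpow_neg hν.le, ← div_eq_mul_inv, le_div_iff₀ (Real.rpow_pos_of_pos hν _)] at this
  have eqn : ∀ ν, 0 < ν → mm d s 1 ν * ν ^ (-β) = k → mm d s 1 ν = k * ν ^ β := by
    intro ν hν h
    rw [← h, mul_assoc, ← Real.rpow_add hν]; simp
  -- general facts for each minimizer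
  have facts : ∀ ν, 0 < ν → mm d s 1 ν = k * ν ^ β → ∃ R κ, 0 < R ∧ R ^ 2 = mm d s 1 ν ∧
      κ = k ^ (-(1 + s)) * ν ^ (1 - β * (1 + s)) ∧ 0 < κ ∧ mm d s R κ = 1 ∧
      ∀ κ', 0 < κ' → (κ' / κ) ^ β ≤ mm d s R κ' := by
    intro ν hν he
    have Mpos := mm_pos hd hs one_pos hν.le
    have hνβ := Real.rpow_pos_of_pos hν β
    set R := √(mm d s 1 ν) with hR
    have hR0 : 0 < R := Real.sqrt_pos.2 Mpos
    have hR2 : R ^ 2 = mm d s 1 ν := Real.sq_sqrt Mpos.le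
    have hRp : R ^ (2 + 2 * s) = k ^ (1 + s) * ν ^ (β * (1 + s)) := by
      have : R ^ (2 + 2 * s) = (R ^ 2) ^ (1 + s) := by
        rw [← Real.rpow_natCast, ← Real.rpow_mul hR0.le]; congr 1; push_cast; ring
      rw [this, hR2, he, Real.mul_rpow hk0.le hνβ.le, Real.rpow_mul hν.le]
    have hkp := Real.rpow_pos_of_pos hk0 (1 + s)
    have hκ0 : 0 < k ^ (-(1 + s)) * ν ^ (1 - β * (1 + s)) :=
      mul_pos (Real.rpow_pos_of_pos hk0 _) (Real.rpow_pos_of_pos hν _)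
    have hκR : (k ^ (-(1 + s)) * ν ^ (1 - β * (1 + s))) * R ^ (2 + 2 * s) = ν := by
      rw [hRp]
      have a1 : k ^ (-(1 + s)) * k ^ (1 + s) = 1 := by rw [← Real.rpow_add hk0]; simp
      have a2 : ν ^ (1 - β * (1 + s)) * ν ^ (β * (1 + s)) = ν := by rw [← Real.rpow_add hν]; simp
      calc _ = (k ^ (-(1 + s)) * k ^ (1 + s)) * (ν ^ (1 - β * (1 + s)) * ν ^ (β * (1 + s))) := by ring
        _ = ν := by rw [a1, a2, one_mul]
    refine ⟨R, _, hR0, hR2, rfl, hκ0, ?_, ?_⟩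
    · rw [mm_scale hd hs hR0 hκ0.le, hκR, hR2, div_self Mpos.ne']
    · intro κ' hκ'
      have hRpos := Real.rpow_pos_of_pos hR0 (2 + 2 * s)
      rw [mm_scale hd hs hR0 hκ'.le, le_div_iff₀ (by positivity), hR2]
      refine le_trans ?_ (lb _ (mul_pos hκ' hRpos))
      rw [he]
      have hνβ2 : ν ^ β = ((k ^ (-(1 + s)) * ν ^ (1 - β * (1 + s))) * R ^ (2 + 2 * s)) ^ β := by rw [hκR]
      rw [hνβ2]
      generalize k ^ (-(1 + s)) * ν ^ (1 - β * (1 + s)) = κ at *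
      rw [Real.div_rpow hκ'.le hκ0.le, Real.mul_rpow hκ0.le hRpos.le, Real.mul_rpow hκ'.le hRpos.le]
      have := Real.rpow_pos_of_pos hκ0 β
      apply le_of_eq
      field_simp
  obtain ⟨R₀, κ₀, r0, r0', k0, k0', e0, m0⟩ := facts ν₀ h0 (eqn ν₀ h0 rfl)
  obtain ⟨R₁, κ₁, r1, r1', k1, k1', e1, m1⟩ := facts ν₁ h1 (eqn ν₁ h1 hk1)
  have hRR : R₀ ≤ R₁ := by
    have := M_mono hd hs h0.le hlt.le
    rw [← r0', ← r1'] at this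
    exact (pow_le_pow_iff_left₀ r0.le r1.le two_ne_zero).1 this
  have hκκ : κ₀ < κ₁ := by
    rw [k0, k1]
    exact mul_lt_mul_of_pos_left (Real.rpow_lt_rpow h0.le hlt (by linarith)) (Real.rpow_pos_of_pos hk0 _)
  exact uniq hd hs hβ r0 hRR k0' hκκ e0 e1 m0 m1

theorem exists_strict_min (hd : 1 ≤ d) (hs : 0 < s) {β : ℝ} (hβ : 0 < β) (hβ2 : β * (1 + s) < 1) :
    ∃ ν₀, 0 < ν₀ ∧ ∀ ν, 0 < ν → ν ≠ ν₀ → mm d s 1 ν₀ * ν₀ ^ (-β) < mm d s 1 ν * ν ^ (-β) := by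
  obtain ⟨ν₀, h0, hm⟩ := exists_min hd hs hβ hβ2
  refine ⟨ν₀, h0, fun ν hν hne => lt_of_le_of_ne (hm ν hν) fun heq => ?_⟩
  have hm' : ∀ ν', 0 < ν' → mm d s 1 ν * ν ^ (-β) ≤ mm d s 1 ν' * ν' ^ (-β) := fun ν' h => heq ▸ hm ν' h
  rcases lt_or_gt_of_ne hne with h | h
  · exact uniq_min hd hs hβ hβ2 hν h hm' hm
  · exact uniq_min hd hs hβ hβ2 h0 h hm hm'

end Min
end Gru


namespace Gru
open scoped ENNReal Topology Pointwise

section Sep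
variable {d₁ d₂ : ℕ} {s : ℝ}

theorem grad_norm {d : ℕ} (φ : EE d → ℝ) (x : EE d) : ‖gradient φ x‖ = ‖fderiv ℝ φ x‖ := by
  unfold gradient
  exact LinearIsometryEquiv.norm_map _ _

theorem fd1 {u : EE d₁ × EE d₂ → ℝ} (hu : ContDiff ℝ (⊤ : ℕ∞) u) (x : EE d₁ × EE d₂) :
    fderiv ℝ (fun y => u (y, x.2)) x.1 = (fderiv ℝ u x).comp (ContinuousLinearMap.inl ℝ (EE d₁) (EE d₂)) := by
  have h1 : HasFDerivAt u (fderiv ℝ u x) x := (hu.differentiable (by simp) x).hasFDerivAt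
  exact (HasFDerivAt.comp (f := fun y => (y, x.2)) x.1 h1 (hasFDerivAt_prodMk_left x.1 x.2)).fderiv

theorem fd2 {u : EE d₁ × EE d₂ → ℝ} (hu : ContDiff ℝ (⊤ : ℕ∞) u) (x : EE d₁ × EE d₂) :
    fderiv ℝ (fun y => u (x.1, y)) x.2 = (fderiv ℝ u x).comp (ContinuousLinearMap.inr ℝ (EE d₁) (EE d₂)) := by
  have h1 : HasFDerivAt u (fderiv ℝ u x) x := (hu.differentiable (by simp) x).hasFDerivAt
  exact (HasFDerivAt.comp (f := fun y => (x.1, y)) x.2 h1 (hasFDerivAt_prodMk_right x.1 x.2)).fderiv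

/-- the two pieces of the energy density -/
noncomputable def e1 (u : EE d₁ × EE d₂ → ℝ) (x : EE d₁ × EE d₂) : ℝ := ‖fderiv ℝ (fun y => u (y, x.2)) x.1‖ ^ 2
noncomputable def e2 (u : EE d₁ × EE d₂ → ℝ) (x : EE d₁ × EE d₂) : ℝ := ‖fderiv ℝ (fun y => u (x.1, y)) x.2‖ ^ 2

theorem fderiv_off {u : EE d₁ × EE d₂ → ℝ} {x : EE d₁ × EE d₂} (hx : x ∉ tsupport u) : fderiv ℝ u x = 0 := by
  by_contra hcon
  exact hx (support_fderiv_subset ℝ hcon)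

theorem e1_off {u : EE d₁ × EE d₂ → ℝ} (hu : ContDiff ℝ (⊤ : ℕ∞) u) {x : EE d₁ × EE d₂} (hx : x ∉ tsupport u) :
    e1 u x = 0 := by
  rw [e1, fd1 hu, fderiv_off hx]; simp

theorem e2_off {u : EE d₁ × EE d₂ → ℝ} (hu : ContDiff ℝ (⊤ : ℕ∞) u) {x : EE d₁ × EE d₂} (hx : x ∉ tsupport u) :
    e2 u x = 0 := by
  rw [e2, fd2 hu, fderiv_off hx]; simp

theorem e1_cont {u : EE d₁ × EE d₂ → ℝ} (hu : ContDiff ℝ (⊤ : ℕ∞) u) : Continuous (e1 u) := by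
  have h := hu.continuous_fderiv (by simp)
  have : e1 u = fun x => ‖(fderiv ℝ u x).comp (ContinuousLinearMap.inl ℝ (EE d₁) (EE d₂))‖ ^ 2 := by
    ext x; rw [e1, fd1 hu]
  rw [this]
  exact ((h.clm_comp continuous_const).norm).pow 2

theorem e2_cont {u : EE d₁ × EE d₂ → ℝ} (hu : ContDiff ℝ (⊤ : ℕ∞) u) : Continuous (e2 u) := by
  have h := hu.continuous_fderiv (by simp)
  have : e2 u = fun x => ‖(fderiv ℝ u x).comp (ContinuousLinearMap.inr ℝ (EE d₁) (EE d₂))‖ ^ 2 := by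
    ext x; rw [e2, fd2 hu]
  rw [this]
  exact ((h.clm_comp continuous_const).norm).pow 2

theorem pot_cont (hs : 0 < s) : Continuous fun x : EE d₁ × EE d₂ => ‖x.1‖ ^ (2 * s) :=
  (cont_rpow hs).comp (by fun_prop : Continuous fun x : EE d₁ × EE d₂ => ‖x.1‖)

theorem integ_of {u f : EE d₁ × EE d₂ → ℝ} (hc : HasCompactSupport u) (hf : Continuous f)
    (h0 : ∀ x, x ∉ tsupport u → f x = 0) : Integrable f := by
  refine hf.integrable_of_hasCompactSupport (HasCompactSupport.of_support_subset_isCompact hc ?_)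
  intro x hx
  by_contra hcon
  exact hx (h0 x hcon)

theorem i_sq {u : EE d₁ × EE d₂ → ℝ} (hu : ContDiff ℝ (⊤ : ℕ∞) u) (hc : HasCompactSupport u) :
    Integrable fun x => u x ^ 2 :=
  integ_of hc (hu.continuous.pow 2) fun x hx => by simp [image_eq_zero_of_notMem_tsupport hx]

theorem i_pot (hs : 0 < s) {u : EE d₁ × EE d₂ → ℝ} (hu : ContDiff ℝ (⊤ : ℕ∞) u) (hc : HasCompactSupport u) :
    Integrable fun x => ‖x.1‖ ^ (2 * s) * u x ^ 2 :=
  integ_of hc ((pot_cont hs).mul (hu.continuous.pow 2)) fun x hx => by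
    simp [image_eq_zero_of_notMem_tsupport hx]

theorem i_e1 {u : EE d₁ × EE d₂ → ℝ} (hu : ContDiff ℝ (⊤ : ℕ∞) u) (hc : HasCompactSupport u) :
    Integrable (e1 u) := integ_of hc (e1_cont hu) fun x hx => e1_off hu hx

theorem i_e2 (hs : 0 < s) {u : EE d₁ × EE d₂ → ℝ} (hu : ContDiff ℝ (⊤ : ℕ∞) u) (hc : HasCompactSupport u) :
    Integrable fun x => ‖x.1‖ ^ (2 * s) * e2 u x :=
  integ_of hc ((pot_cont hs).mul (e2_cont hu)) fun x hx => by simp [e2_off hu hx]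

theorem lower (hd₁ : 1 ≤ d₁) (hd₂ : 1 ≤ d₂) (hs : 0 < s) {r₁ r₂ : ℝ} (hr₁ : 0 < r₁) (hr₂ : 0 < r₂)
    {Ω₁ : Set (EE d₁)} {Ω₂ : Set (EE d₂)} (v₁ : volume Ω₁ ≤ volume (Metric.ball (0 : EE d₁) r₁))
    (v₂ : volume Ω₂ ≤ volume (Metric.ball (0 : EE d₂) r₂)) {u : EE d₁ × EE d₂ → ℝ}
    (hu : ContDiff ℝ (⊤ : ℕ∞) u) (hc : HasCompactSupport u) (hsub : tsupport u ⊆ Ω₁ ×ˢ Ω₂) :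
    mm d₁ s r₁ (mm d₂ s r₂ 0) * ∫ x, u x ^ 2 ≤ (∫ x, e1 u x) + ∫ x, ‖x.1‖ ^ (2 * s) * e2 u x := by
  set ν := mm d₂ s r₂ 0 with hν
  have hν0 : 0 < ν := mm_pos hd₂ hs hr₂ le_rfl
  have Isq := i_sq hu hc
  have Ipot := i_pot hs hu hc
  have Ie1 := i_e1 hu hc
  have Ie2 := i_e2 hs hu hc
  have A : mm d₁ s r₁ ν * ∫ x, u x ^ 2 ≤ (∫ x, e1 u x) + ν * ∫ x, ‖x.1‖ ^ (2 * s) * u x ^ 2 := by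
    have a1 : ∫ x, u x ^ 2 = ∫ y, ∫ x, u (x, y) ^ 2 := integral_prod_symm _ Isq
    have a2 : ∫ x, e1 u x = ∫ y, ∫ x, e1 u (x, y) := integral_prod_symm _ Ie1
    have a3 : ∫ x : EE d₁ × EE d₂, ‖x.1‖ ^ (2 * s) * u x ^ 2 = ∫ y : EE d₂, ∫ x : EE d₁, ‖x‖ ^ (2 * s) * u (x, y) ^ 2 :=
      integral_prod_symm _ Ipot
    have b1 : Integrable fun y => ∫ x, u (x, y) ^ 2 := Isq.integral_prod_right
    have b2 : Integrable fun y => ∫ x, e1 u (x, y) := Ie1.integral_prod_right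
    have b3 : Integrable fun y : EE d₂ => ∫ x : EE d₁, ‖x‖ ^ (2 * s) * u (x, y) ^ 2 := Ipot.integral_prod_right
    rw [a1, a2, a3, ← integral_const_mul, ← integral_const_mul, ← integral_add b2 (b3.const_mul _)]
    refine integral_mono (b1.const_mul _) (b2.add (b3.const_mul _)) fun y => ?_
    have hsm : ContDiff ℝ (⊤ : ℕ∞) fun x : EE d₁ => u (x, y) := hu.comp (by fun_prop)
    have hsup : Function.support (fun x : EE d₁ => u (x, y)) ⊆ Prod.fst '' tsupport u := by
      intro x hx
      exact ⟨(x, y), subset_tsupport u hx, rfl⟩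
    have hcs : HasCompactSupport fun x : EE d₁ => u (x, y) :=
      HasCompactSupport.of_support_subset_isCompact (IsCompact.image hc continuous_fst) hsup
    refine mm_FK hd₁ hs hr₁ hν0.le hsm hcs ((measure_mono ?_).trans v₁)
    refine hsup.trans ?_
    rintro _ ⟨p, hp, rfl⟩
    exact (hsub hp).1
  have B : ν * (∫ x, ‖x.1‖ ^ (2 * s) * u x ^ 2) ≤ ∫ x, ‖x.1‖ ^ (2 * s) * e2 u x := by
    have a1 : ∫ x : EE d₁ × EE d₂, ‖x.1‖ ^ (2 * s) * u x ^ 2 = ∫ x : EE d₁, ∫ y : EE d₂, ‖x‖ ^ (2 * s) * u (x, y) ^ 2 :=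
      integral_prod _ Ipot
    have a2 : ∫ x : EE d₁ × EE d₂, ‖x.1‖ ^ (2 * s) * e2 u x = ∫ x : EE d₁, ∫ y : EE d₂, ‖x‖ ^ (2 * s) * e2 u (x, y) :=
      integral_prod _ Ie2
    have b1 : Integrable fun x : EE d₁ => ∫ y : EE d₂, ‖x‖ ^ (2 * s) * u (x, y) ^ 2 := Ipot.integral_prod_left
    have b2 : Integrable fun x : EE d₁ => ∫ y : EE d₂, ‖x‖ ^ (2 * s) * e2 u (x, y) := Ie2.integral_prod_left
    rw [a1, a2, ← integral_const_mul]
    refine integral_mono (b1.const_mul _) b2 fun x => ?_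
    have hsm : ContDiff ℝ (⊤ : ℕ∞) fun y : EE d₂ => u (x, y) := hu.comp (by fun_prop)
    have hsup : Function.support (fun y : EE d₂ => u (x, y)) ⊆ Prod.snd '' tsupport u := by
      intro y hy
      exact ⟨(x, y), subset_tsupport u hy, rfl⟩
    have hcs : HasCompactSupport fun y : EE d₂ => u (x, y) :=
      HasCompactSupport.of_support_subset_isCompact (IsCompact.image hc continuous_snd) hsup
    have := mm_FK hd₂ hs hr₂ le_rfl hsm hcs ((measure_mono (by
      refine hsup.trans ?_
      rintro _ ⟨p, hp, rfl⟩
      exact (hsub hp).2)).trans v₂)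
    rw [zero_mul, add_zero] at this
    simp only
    rw [integral_const_mul, integral_const_mul]
    have h2 : 0 ≤ ‖x‖ ^ (2 * s) := Real.rpow_nonneg (norm_nonneg _) _
    have h3 := mul_le_mul_of_nonneg_left this h2
    calc _ = ‖x‖ ^ (2 * s) * (ν * ∫ y, u (x, y) ^ 2) := by ring
      _ ≤ _ := h3
  linarith

/-- rewriting the quotient -/
theorem quot_eq (hs : 0 < s) {Ω : Set (EE d₁ × EE d₂)} {u : EE d₁ × EE d₂ → ℝ}
    (hu : ContDiff ℝ (⊤ : ℕ∞) u) (hc : HasCompactSupport u) (hsub : tsupport u ⊆ Ω) :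
    (∫ x in Ω, (‖gradient (fun y => u (y, x.2)) x.1‖ ^ 2
          + ‖x.1‖ ^ (2 * s) * ‖gradient (fun y => u (x.1, y)) x.2‖ ^ 2)) /
        (∫ x in Ω, (u x) ^ 2) = ((∫ x, e1 u x) + ∫ x, ‖x.1‖ ^ (2 * s) * e2 u x) / ∫ x, u x ^ 2 := by
  congr 1
  · rw [← integral_add (i_e1 hu hc) (i_e2 hs hu hc)]
    simp only [grad_norm]
    refine setIntegral_eq_integral_of_forall_compl_eq_zero fun x hx => ?_
    have hx' : x ∉ tsupport u := fun h => hx (hsub h)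
    have h1 := e1_off hu hx'
    have h2 := e2_off hu hx'
    unfold e1 at h1
    unfold e2 at h2
    rw [h1, h2]; simp
  · refine setIntegral_eq_integral_of_forall_compl_eq_zero fun x hx => ?_
    have hx' : x ∉ tsupport u := fun h => hx (hsub h)
    simp [image_eq_zero_of_notMem_tsupport hx']

theorem sq_pos_of_ne {u : EE d₁ × EE d₂ → ℝ} (hu : ContDiff ℝ (⊤ : ℕ∞) u) (hc : HasCompactSupport u) (h0 : u ≠ 0) :
    0 < ∫ x, u x ^ 2 := by
  obtain ⟨x, hx⟩ := Function.ne_iff.1 h0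
  have hcs : HasCompactSupport fun x => u x ^ 2 := by
    refine HasCompactSupport.of_support_subset_isCompact hc ?_
    intro x hx
    apply subset_tsupport
    intro h
    apply hx
    simp [h]
  exact Continuous.integral_pos_of_hasCompactSupport_nonneg_nonzero (x := x) (hu.continuous.pow 2) hcs
    (fun x => sq_nonneg _) (pow_ne_zero 2 hx)

theorem lower_lambda (hd₁ : 1 ≤ d₁) (hd₂ : 1 ≤ d₂) (hs : 0 < s) {r₁ r₂ : ℝ} (hr₁ : 0 < r₁) (hr₂ : 0 < r₂)
    {Ω₁ : Set (EE d₁)} {Ω₂ : Set (EE d₂)} (o₁ : IsOpen Ω₁) (n₁ : Ω₁.Nonempty) (o₂ : IsOpen Ω₂) (n₂ : Ω₂.Nonempty)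
    (v₁ : volume Ω₁ ≤ volume (Metric.ball (0 : EE d₁) r₁))
    (v₂ : volume Ω₂ ≤ volume (Metric.ball (0 : EE d₂) r₂)) :
    mm d₁ s r₁ (mm d₂ s r₂ 0) ≤ grushinLambda1 d₁ d₂ s (Ω₁ ×ˢ Ω₂) := by
  refine le_csInf ?_ ?_
  · obtain ⟨x, hx⟩ := n₁
    obtain ⟨y, hy⟩ := n₂
    obtain ⟨f, h1, h2, h3, -, h5⟩ := exists_contDiff_tsupport_subset (n := (⊤ : ℕ∞))
      ((o₁.prod o₂).mem_nhds (mk_mem_prod hx hy))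
    refine ⟨_, f, h3, h2, h1, ?_, rfl⟩
    intro h0
    rw [h0] at h5
    norm_num at h5
  · rintro q ⟨u, hu, hc, hsub, h0, rfl⟩
    rw [quot_eq hs hu hc hsub, le_div_iff₀ (sq_pos_of_ne hu hc h0)]
    exact lower hd₁ hd₂ hs hr₁ hr₂ v₁ v₂ hu hc hsub

theorem prod_test (hs : 0 < s) {Ω₁ : Set (EE d₁)} {Ω₂ : Set (EE d₂)} {φ : EE d₁ → ℝ} {ψ : EE d₂ → ℝ}
    (hφ : ContDiff ℝ (⊤ : ℕ∞) φ) (cφ : HasCompactSupport φ) (tφ : tsupport φ ⊆ Ω₁)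
    (hψ : ContDiff ℝ (⊤ : ℕ∞) ψ) (cψ : HasCompactSupport ψ) (tψ : tsupport ψ ⊆ Ω₂)
    (pφ : 0 < ∫ x, φ x ^ 2) (pψ : 0 < ∫ x, ψ x ^ 2) :
    grushinLambda1 d₁ d₂ s (Ω₁ ×ˢ Ω₂) * ((∫ x, φ x ^ 2) * ∫ x, ψ x ^ 2) ≤
      (∫ x, ‖fderiv ℝ φ x‖ ^ 2) * (∫ x, ψ x ^ 2) + (∫ x, ‖x‖ ^ (2 * s) * φ x ^ 2) * ∫ x, ‖fderiv ℝ ψ x‖ ^ 2 := by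
  set u : EE d₁ × EE d₂ → ℝ := fun x => φ x.1 * ψ x.2 with hu
  have us : ContDiff ℝ (⊤ : ℕ∞) u := (hφ.comp contDiff_fst).mul (hψ.comp contDiff_snd)
  have hts : tsupport u ⊆ tsupport φ ×ˢ tsupport ψ := by
    refine closure_minimal ?_ ((isClosed_tsupport φ).prod (isClosed_tsupport ψ))
    intro x hx
    exact ⟨subset_tsupport φ (left_ne_zero_of_mul hx), subset_tsupport ψ (right_ne_zero_of_mul hx)⟩
  have uc : HasCompactSupport u :=
    (IsCompact.prod cφ cψ).of_isClosed_subset (isClosed_tsupport u) hts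
  have e0 : ∫ x, u x ^ 2 = (∫ x, φ x ^ 2) * ∫ x, ψ x ^ 2 := by
    rw [← integral_prod_mul]
    simp only [hu, mul_pow]
    rfl
  have hpos : 0 < ∫ x, u x ^ 2 := by rw [e0]; positivity
  have une : u ≠ 0 := by
    intro h0
    rw [h0] at hpos
    simp at hpos
  have f1 : ∀ x, e1 u x = ‖fderiv ℝ φ x.1‖ ^ 2 * ψ x.2 ^ 2 := by
    intro x
    have : fderiv ℝ (fun y => u (y, x.2)) x.1 = ψ x.2 • fderiv ℝ φ x.1 := by
      simp only [hu]
      exact fderiv_mul_const (hφ.differentiable (by simp) x.1) _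
    rw [e1, this, norm_smul, mul_pow, Real.norm_eq_abs, sq_abs, mul_comm]
  have f2 : ∀ x, e2 u x = φ x.1 ^ 2 * ‖fderiv ℝ ψ x.2‖ ^ 2 := by
    intro x
    have : fderiv ℝ (fun y => u (x.1, y)) x.2 = φ x.1 • fderiv ℝ ψ x.2 := by
      simp only [hu]
      exact fderiv_const_mul (hψ.differentiable (by simp) x.2) _
    rw [e2, this, norm_smul, mul_pow, Real.norm_eq_abs, sq_abs]
  have E1 : ∫ x, e1 u x = (∫ x, ‖fderiv ℝ φ x‖ ^ 2) * ∫ x, ψ x ^ 2 := by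
    rw [← integral_prod_mul]
    simp only [f1]
    rfl
  have E2 : ∫ x, ‖x.1‖ ^ (2 * s) * e2 u x = (∫ x, ‖x‖ ^ (2 * s) * φ x ^ 2) * ∫ x, ‖fderiv ℝ ψ x‖ ^ 2 := by
    rw [← integral_prod_mul]
    simp only [f2, ← mul_assoc]
    rfl
  rw [← E1, ← E2, ← e0, ← le_div_iff₀ hpos]
  have hsub : tsupport u ⊆ Ω₁ ×ˢ Ω₂ := hts.trans (prod_mono tφ tψ)
  refine csInf_le ?_ ⟨u, us, uc, hsub, une, (quot_eq hs us uc hsub).symm⟩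
  refine ⟨0, ?_⟩
  rintro q ⟨v, hv, hc, hsub, h0, rfl⟩
  rw [quot_eq hs hv hc hsub]
  have a1 : 0 ≤ ∫ x, e1 v x := integral_nonneg fun x => sq_nonneg _
  have a2 : 0 ≤ ∫ x, ‖x.1‖ ^ (2 * s) * e2 v x := integral_nonneg fun x =>
    mul_nonneg (Real.rpow_nonneg (norm_nonneg _) _) (sq_nonneg _)
  have a3 := sq_pos_of_ne hv hc h0
  positivity

theorem upper_lambda (hs : 0 < s) {r₁ r₂ : ℝ} (hr₁ : 0 < r₁) (hr₂ : 0 < r₂) (hd₂ : 1 ≤ d₂) :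
    grushinLambda1 d₁ d₂ s (Metric.ball (0 : EE d₁) r₁ ×ˢ Metric.ball (0 : EE d₂) r₂) ≤
      mm d₁ s r₁ (mm d₂ s r₂ 0) := by
  set L := grushinLambda1 d₁ d₂ s (Metric.ball (0 : EE d₁) r₁ ×ˢ Metric.ball (0 : EE d₂) r₂)
  have hν0 := (mm_pos hd₂ hs hr₂ le_rfl).le
  apply le_mm hr₁
  intro φ h1 h2 h3
  have hN : 0 ≤ ∫ x, φ x ^ 2 := integral_nonneg fun x => sq_nonneg _
  rcases hN.eq_or_lt with h0 | hpos
  · have := LB_zero d₁ (s := s) hν0 _ φ h1 h2 h3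
    rw [← h0]; linarith
  have key := fun (ψ : EE d₂ → ℝ) (p1 : ContDiff ℝ (⊤ : ℕ∞) ψ) (p2 : HasCompactSupport ψ)
    (p3 : tsupport ψ ⊆ Metric.ball (0 : EE d₂) r₂) (p4 : 0 < ∫ x, ψ x ^ 2) =>
    prod_test (ψ := ψ) (Ω₂ := Metric.ball (0 : EE d₂) r₂) hs h1 h2 h3 p1 p2 p3 hpos p4
  have hB : 0 ≤ ∫ x : EE d₁, ‖x‖ ^ (2 * s) * φ x ^ 2 := integral_nonneg fun x => by positivity
  set A := ∫ x, ‖fderiv ℝ φ x‖ ^ 2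
  set N := ∫ x, φ x ^ 2
  set B := ∫ x : EE d₁, ‖x‖ ^ (2 * s) * φ x ^ 2
  rcases hB.eq_or_lt with hB0 | hBpos
  · obtain ⟨ψ, p1, p2, p3, p4⟩ := exists_test d₂ hr₂
    have := key ψ p1 p2 p3 p4
    rw [← hB0, zero_mul, add_zero, ← mul_assoc] at this
    rw [← hB0, mul_zero, add_zero]
    exact le_of_mul_le_mul_right this p4
  · have : LB d₂ s 0 (Metric.ball (0 : EE d₂) r₂) ((L * N - A) / B) := by
      intro ψ p1 p2 p3
      have hP : 0 ≤ ∫ x, ψ x ^ 2 := integral_nonneg fun x => sq_nonneg _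
      rcases hP.eq_or_lt with h0 | p4
      · have := LB_zero d₂ (s := s) le_rfl _ ψ p1 p2 p3
        rw [← h0]; linarith
      · have := key ψ p1 p2 p3 p4
        rw [zero_mul, add_zero, div_mul_eq_mul_div, div_le_iff₀ hBpos]
        linarith
    have := le_mm hr₂ this
    rw [div_le_iff₀ hBpos] at this
    linarith

theorem lambda_balls (hd₁ : 1 ≤ d₁) (hd₂ : 1 ≤ d₂) (hs : 0 < s) {r₁ r₂ : ℝ} (hr₁ : 0 < r₁) (hr₂ : 0 < r₂) :
    grushinLambda1 d₁ d₂ s (Metric.ball (0 : EE d₁) r₁ ×ˢ Metric.ball (0 : EE d₂) r₂) =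
      mm d₁ s r₁ (mm d₂ s r₂ 0) :=
  le_antisymm (upper_lambda hs hr₁ hr₂ hd₂)
    (lower_lambda hd₁ hd₂ hs hr₁ hr₂ Metric.isOpen_ball (Metric.nonempty_ball.2 hr₁) Metric.isOpen_ball
      (Metric.nonempty_ball.2 hr₂) le_rfl le_rfl)

end Sep
end Gru

namespace Gru
open scoped ENNReal Topology Pointwise

theorem tau_eq (d : ℕ) (hd : 1 ≤ d) : tau d = cc d := by
  haveI : Nonempty (Fin d) := ⟨⟨0, hd⟩⟩
  unfold tau cc
  rw [EuclideanSpace.volume_ball]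
  simp only [Fintype.card_fin, ENNReal.ofReal_one, one_pow, one_mul]
  rw [ENNReal.toReal_ofReal (by positivity), add_comm, Real.sqrt_eq_rpow, ← Real.rpow_natCast,
    ← Real.rpow_mul Real.pi_pos.le]
  congr 2
  ring

theorem final_calc {d₁ d₂ : ℕ} (hd₁ : 1 ≤ d₁) (hd₂ : 1 ≤ d₂) {s : ℝ} (hs : 0 < s) {W : ℝ} (hW : 0 < W) :
    ∃ r₁ r₂ : ℝ, 0 < r₁ ∧ 0 < r₂ ∧ r₁ ^ d₁ * r₂ ^ d₂ = W ∧
      ∀ ρ₁ ρ₂ : ℝ, 0 < ρ₁ → 0 < ρ₂ → ρ₁ ^ d₁ * ρ₂ ^ d₂ = W → (ρ₁, ρ₂) ≠ (r₁, r₂) →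
        mm d₁ s r₁ (mm d₂ s r₂ 0) < mm d₁ s ρ₁ (mm d₂ s ρ₂ 0) := by
  have hj := mm_pos hd₂ hs one_pos le_rfl
  set j := mm d₂ s 1 0 with hjdef
  have D₁ : (0 : ℝ) < d₁ := by exact_mod_cast hd₁
  have D₂ : (0 : ℝ) < d₂ := by exact_mod_cast hd₂
  obtain ⟨α, hα⟩ : ∃ α : ℝ, α = 2 + 2 * s + 2 * d₁ / d₂ := ⟨_, rfl⟩
  have hq : (0 : ℝ) < 2 * d₁ / d₂ := by positivity
  have hαp : 0 < α := by rw [hα]; positivity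
  obtain ⟨C, hC⟩ : ∃ C : ℝ, C = j * W ^ (-(2 / (d₂ : ℝ))) := ⟨_, rfl⟩
  have hCp : 0 < C := by rw [hC]; positivity
  have hβ : 0 < 2 / α := by positivity
  have hβ2 : 2 / α * (1 + s) < 1 := by
    rw [div_mul_eq_mul_div, div_lt_one hαp]; linarith
  obtain ⟨ν₀, hν₀, hmin⟩ := exists_strict_min hd₁ hs hβ hβ2
  have hF : ∀ ρ₁ ρ₂ : ℝ, 0 < ρ₁ → 0 < ρ₂ → ρ₁ ^ d₁ * ρ₂ ^ d₂ = W →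
      mm d₁ s ρ₁ (mm d₂ s ρ₂ 0) = C ^ (2 / α) * (mm d₁ s 1 (C * ρ₁ ^ α) * (C * ρ₁ ^ α) ^ (-(2 / α))) := by
    intro ρ₁ ρ₂ h1 h2 h
    have hlog : Real.log W = d₁ * Real.log ρ₁ + d₂ * Real.log ρ₂ := by
      rw [← h, Real.log_mul (by positivity) (by positivity), Real.log_pow, Real.log_pow]
    have e1 : mm d₂ s ρ₂ 0 = j / ρ₂ ^ 2 := by
      rw [mm_scale hd₂ hs h2 le_rfl, zero_mul]
    have e2 : j / ρ₂ ^ 2 * ρ₁ ^ (2 + 2 * s) = C * ρ₁ ^ α := by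
      apply Real.log_injOn_pos (mem_Ioi.2 (by positivity)) (mem_Ioi.2 (by positivity))
      rw [Real.log_mul (by positivity) (by positivity), Real.log_div (by positivity) (by positivity),
        Real.log_pow, Real.log_rpow h1, Real.log_mul (by positivity) (by positivity), Real.log_rpow h1, hC,
        Real.log_mul (by positivity) (by positivity), Real.log_rpow hW, hlog, hα]
      push_cast
      field_simp
      ring
    have e3 : (ρ₁ ^ 2)⁻¹ = C ^ (2 / α) * (C * ρ₁ ^ α) ^ (-(2 / α)) := by
      apply Real.log_injOn_pos (mem_Ioi.2 (by positivity)) (mem_Ioi.2 (by positivity))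
      rw [Real.log_inv, Real.log_pow, Real.log_mul (by positivity) (by positivity), Real.log_rpow hCp,
        Real.log_rpow (by positivity), Real.log_mul (by positivity) (by positivity), Real.log_rpow h1]
      push_cast
      field_simp
      ring
    rw [e1, mm_scale hd₁ hs h1 (by positivity), e2, div_eq_mul_inv, e3]
    ring
  obtain ⟨r₁, hr₁⟩ : ∃ r : ℝ, r = (ν₀ / C) ^ (1 / α) := ⟨_, rfl⟩
  have r₁p : 0 < r₁ := by rw [hr₁]; positivity
  have hr₁α : C * r₁ ^ α = ν₀ := by
    rw [hr₁, ← Real.rpow_mul (by positivity), one_div_mul_cancel hαp.ne', Real.rpow_one]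
    field_simp
  obtain ⟨r₂, hr₂⟩ : ∃ r : ℝ, r = (W / r₁ ^ d₁) ^ (1 / (d₂ : ℝ)) := ⟨_, rfl⟩
  have r₂p : 0 < r₂ := by rw [hr₂]; positivity
  have hr : r₁ ^ d₁ * r₂ ^ d₂ = W := by
    rw [hr₂, ← Real.rpow_natCast (_ ^ (1 / (d₂ : ℝ))) d₂, ← Real.rpow_mul (by positivity), one_div_mul_cancel D₂.ne',
      Real.rpow_one]
    field_simp
  refine ⟨r₁, r₂, r₁p, r₂p, hr, ?_⟩
  intro ρ₁ ρ₂ h1 h2 h hne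
  rw [hF r₁ r₂ r₁p r₂p hr, hF ρ₁ ρ₂ h1 h2 h, hr₁α]
  apply mul_lt_mul_of_pos_left _ (by positivity)
  apply hmin _ (by positivity)
  intro heq
  apply hne
  rw [← hr₁α] at heq
  have a1 : ρ₁ = r₁ := by
    have := mul_left_cancel₀ hCp.ne' heq
    exact (Real.rpow_left_inj h1.le r₁p.le hαp.ne').1 this
  subst a1
  have a2 : ρ₂ ^ d₂ = r₂ ^ d₂ := by
    have := h.trans hr.symm
    exact mul_left_cancel₀ (by positivity) this
  have a3 : ρ₂ = r₂ := (pow_left_inj₀ h2.le r₂p.le (by omega)).1 a2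
  rw [a3]

end Gru

theorem existsUnique_minimizing_product_of_balls (d₁ d₂ : ℕ) (hd₁ : 1 ≤ d₁) (hd₂ : 1 ≤ d₂)
    (s : ℝ) (hs : 0 < s) (V : ℝ) (hV : 0 < V) :
    ∃! p : ℝ × ℝ, 0 < p.1 ∧ 0 < p.2 ∧
      tau d₁ * p.1 ^ d₁ * (tau d₂ * p.2 ^ d₂) = V ∧
      (∀ (Ω₁ : Set (EuclideanSpace ℝ (Fin d₁))) (Ω₂ : Set (EuclideanSpace ℝ (Fin d₂))),
        IsOpen Ω₁ → IsConnected Ω₁ → Bornology.IsBounded Ω₁ →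
        IsOpen Ω₂ → IsConnected Ω₂ → Bornology.IsBounded Ω₂ →
        (volume Ω₁).toReal * (volume Ω₂).toReal = V →
        grushinLambda1 d₁ d₂ s
            ((Metric.ball (0 : EuclideanSpace ℝ (Fin d₁)) p.1) ×ˢ
              (Metric.ball (0 : EuclideanSpace ℝ (Fin d₂)) p.2)) ≤
          grushinLambda1 d₁ d₂ s (Ω₁ ×ˢ Ω₂)) ∧
      (∀ ρ₁ ρ₂ : ℝ, 0 < ρ₁ → 0 < ρ₂ →
        tau d₁ * ρ₁ ^ d₁ * (tau d₂ * ρ₂ ^ d₂) = V → (ρ₁, ρ₂) ≠ p →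
        grushinLambda1 d₁ d₂ s
            ((Metric.ball (0 : EuclideanSpace ℝ (Fin d₁)) p.1) ×ˢ
              (Metric.ball (0 : EuclideanSpace ℝ (Fin d₂)) p.2)) <
          grushinLambda1 d₁ d₂ s
            ((Metric.ball (0 : EuclideanSpace ℝ (Fin d₁)) ρ₁) ×ˢ
              (Metric.ball (0 : EuclideanSpace ℝ (Fin d₂)) ρ₂))) := by
  rw [Gru.tau_eq d₁ hd₁, Gru.tau_eq d₂ hd₂]
  have c1 := Gru.cc_pos d₁
  have c2 := Gru.cc_pos d₂
  have hiff : ∀ a b : ℝ, Gru.cc d₁ * a ^ d₁ * (Gru.cc d₂ * b ^ d₂) = V ↔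
      a ^ d₁ * b ^ d₂ = V / (Gru.cc d₁ * Gru.cc d₂) := by
    intro a b
    rw [eq_div_iff (by positivity)]
    constructor <;> intro h <;> rw [← h] <;> ring
  obtain ⟨r₁, r₂, h1, h2, h3, h4⟩ := Gru.final_calc hd₁ hd₂ hs
    (show 0 < V / (Gru.cc d₁ * Gru.cc d₂) by positivity)
  refine ⟨(r₁, r₂), ⟨h1, h2, (hiff _ _).2 h3, ?_, ?_⟩, ?_⟩
  · intro Ω₁ Ω₂ o₁ k₁ b₁ o₂ k₂ b₂ hvol
    have f₁ : volume Ω₁ ≠ ⊤ := b₁.measure_lt_top.ne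
    have f₂ : volume Ω₂ ≠ ⊤ := b₂.measure_lt_top.ne
    have m₁ : 0 < (volume Ω₁).toReal := ENNReal.toReal_pos (o₁.measure_pos volume k₁.nonempty).ne' f₁
    have m₂ : 0 < (volume Ω₂).toReal := ENNReal.toReal_pos (o₂.measure_pos volume k₂.nonempty).ne' f₂
    have q₁ := Gru.rad_pow (A := Ω₁) hd₁
    have q₂ := Gru.rad_pow (A := Ω₂) hd₂
    have v₁ := Gru.vol_ball_rad hd₁ f₁
    have v₂ := Gru.vol_ball_rad hd₂ f₂
    have n₁ : 0 ≤ Gru.rad d₁ Ω₁ := Gru.rad_nonneg _ _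
    have n₂ : 0 ≤ Gru.rad d₂ Ω₂ := Gru.rad_nonneg _ _
    set ρ₁ := Gru.rad d₁ Ω₁
    set ρ₂ := Gru.rad d₂ Ω₂
    have p₁ : 0 < ρ₁ := by
      rcases n₁.eq_or_lt with h | h
      · rw [← h, zero_pow (by omega), mul_zero] at q₁
        exact absurd q₁ m₁.ne
      · exact h
    have p₂ : 0 < ρ₂ := by
      rcases n₂.eq_or_lt with h | h
      · rw [← h, zero_pow (by omega), mul_zero] at q₂
        exact absurd q₂ m₂.ne
      · exact h
    rw [← q₁, ← q₂, hiff] at hvol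
    rw [Gru.lambda_balls hd₁ hd₂ hs h1 h2]
    refine le_trans ?_ (Gru.lower_lambda hd₁ hd₂ hs p₁ p₂ o₁ k₁.nonempty o₂ k₂.nonempty v₁.ge v₂.ge)
    by_cases h : (ρ₁, ρ₂) = (r₁, r₂)
    · obtain ⟨ha, hb⟩ := Prod.mk.inj h
      rw [ha, hb]
    · exact (h4 _ _ p₁ p₂ hvol h).le
  · intro ρ₁ ρ₂ p₁ p₂ hvol hne
    rw [Gru.lambda_balls hd₁ hd₂ hs h1 h2, Gru.lambda_balls hd₁ hd₂ hs p₁ p₂]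
    exact h4 _ _ p₁ p₂ ((hiff _ _).1 hvol) hne
  · rintro ⟨ρ₁, ρ₂⟩ ⟨p₁, p₂, hvol, -, hmin⟩
    by_contra hne
    have a := h4 _ _ p₁ p₂ ((hiff _ _).1 hvol) hne
    have b := hmin r₁ r₂ h1 h2 ((hiff _ _).2 h3) (Ne.symm hne)
    rw [Gru.lambda_balls hd₁ hd₂ hs h1 h2, Gru.lambda_balls hd₁ hd₂ hs p₁ p₂] at b
    exact lt_asymm a b
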